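/- arXiv:1804.08999 — 2 statements merged into one kernel-verified Lean document; each statement's English description precedes it below -/
import Mathlib

section
/- (Lojasiewicz inequality.) Let f be real analytic on an open set U ⊆ ℝⁿ, let Z = {z ∈ U : f(z) = 0} be nonempty, and let K ⊆ U be compact. Then there exist a real number α ≥ 2 and a constant C > 0 such that for every x ∈ K one has inf_{z ∈ Z} |x − z|^α ≤ C · |f(x)|. -/
/-!
Near a zero of `f` the distance to the zero set is bounded by a power of `|f|`; compactness of `K`
then gives the theorem, since near the points of `K` where `f` does not vanish there is nothing to
prove. The local statement, `Loj.LojAt`, is proved by induction on the dimension.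

In suitable linear coordinates `f` is not identically zero on the last axis, and
`Loj.exists_weierstrass` replaces `f` by a monic polynomial `P x t` of degree `d` in the last
variable `t`, whose coefficients are analytic functions of the other variables `x` and vanish at the
origin. Weierstrass preparation is obtained in the Banach algebra `Loj.B` of absolutely summable
power series: the slices `t ↦ f (x, t)` form an analytic family in `Loj.B`
(`Loj.exists_slices`), and the division by a small perturbation of `Y ^ d` is inverted by a
Neumann series (`Loj.exists_division`).

Given `(x, y)`, put `ε = |P x y|`. The complex root of `P x` nearest to `y` is within
`ε ^ (1 / d)` of `y`. If it is real it is the zero sought. If it is not real, its conjugate is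
another root, and the distance between the two is at most twice the distance from the root to `y`.
The number of distinct roots of `P x` is governed by the generalized discriminants `Loj.gdisc`,
symmetric functions of the roots and so analytic functions of `x`. If `P x` has at most `k + 1`
distinct roots, the discriminant of index `k + 1` is bounded by the distance between any two of
them, hence is small at `x`. By the inductive hypothesis there is a parameter `x'` near `x`, within
a power of `ε`, at which all discriminants of index larger than `k` vanish; then `P x'` has at most
`k` distinct roots, one of which is close to the root considered. Repeating this
(`Loj.exists_root_descent`), one reaches either a real root or a polynomial with a single root,
which is real as well.
-/

open Set

namespace Loj

open Filter Topology

/-! ### The Banach algebra of absolutely summable power series -/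

/-- The power series in one variable over `ℝ` whose coefficients are absolutely summable. -/
def summableSeries : Subalgebra ℝ (PowerSeries ℝ) where
  carrier := {a | Summable fun k => ‖PowerSeries.coeff k a‖}
  mul_mem' := by
    intro a b ha hb
    simpa only [mem_ofPred_eq, PowerSeries.coeff_mul] using
      (summable_norm_sum_mul_antidiagonal_of_summable_norm ha hb)
  add_mem' := by
    intro a b ha hb
    refine Summable.of_nonneg_of_le (fun _ => norm_nonneg _) (fun k => ?_) (ha.add hb)
    simpa only [map_add] using norm_add_le (PowerSeries.coeff k a) (PowerSeries.coeff k b)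
  algebraMap_mem' := by
    intro r
    refine summable_of_ne_finset_zero (s := {0}) (fun k hk => ?_)
    have : k ≠ 0 := by simpa using hk
    simp [PowerSeries.coeff_C, this]

/-- The underlying type of `summableSeries`; it carries the norm `∑ |aₖ|`. -/
abbrev B : Type := ↥summableSeries

namespace B

/-- The `k`-th coefficient. -/
noncomputable def co (k : ℕ) : B →ₗ[ℝ] ℝ :=
  (PowerSeries.coeff k).comp summableSeries.val.toLinearMap

lemma co_apply (k : ℕ) (a : B) : co k a = PowerSeries.coeff k (a : PowerSeries ℝ) := rfl

lemma summable_co (a : B) : Summable fun k => ‖co k a‖ := a.2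

lemma ext_co {a b : B} (h : ∀ k, co k a = co k b) : a = b := Subtype.ext (PowerSeries.ext h)

/-- The element of `B` with prescribed coefficients. -/
noncomputable def mk (u : ℕ → ℝ) (hu : Summable fun k => ‖u k‖) : B :=
  ⟨PowerSeries.mk u, by simpa [summableSeries] using hu⟩

@[simp] lemma co_mk (u : ℕ → ℝ) (hu) (k : ℕ) : co k (mk u hu) = u k := by
  simp [co_apply, mk]

lemma co_mul (k : ℕ) (a b : B) :
    co k (a * b) = ∑ p ∈ Finset.HasAntidiagonal.antidiagonal k, co p.1 a * co p.2 b := by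
  simp [co_apply, PowerSeries.coeff_mul]

lemma co_one (k : ℕ) : co k 1 = if k = 0 then 1 else 0 := by
  simp [co_apply, PowerSeries.coeff_one]

/-- The coefficient sequence, as an element of `ℓ¹`. -/
noncomputable def toLp : B →ₗ[ℝ] lp (fun _ : ℕ => ℝ) 1 where
  toFun a := ⟨fun k => co k a, memℓp_gen (by simpa using summable_co a)⟩
  map_add' a b := by ext k; exact map_add (co k) a b
  map_smul' c a := by ext k; exact map_smul (co k) c a

lemma toLp_apply (a : B) (k : ℕ) : toLp a k = co k a := rfl

lemma toLp_injective : Function.Injective toLp := fun a b h =>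
  ext_co fun k => by rw [← toLp_apply, h, toLp_apply]

noncomputable instance : NormedAddCommGroup B := NormedAddCommGroup.induced B _ toLp toLp_injective

lemma norm_toLp (a : B) : ‖toLp a‖ = ‖a‖ := rfl

lemma norm_eq (a : B) : ‖a‖ = ∑' k, ‖co k a‖ := by
  rw [← norm_toLp, lp.norm_eq_tsum_rpow (by simp)]
  simp [toLp_apply]

lemma norm_le_of {a : B} {C : ℝ} {u : ℕ → ℝ} (hu : HasSum u C) (h : ∀ k, ‖co k a‖ ≤ u k) :
    ‖a‖ ≤ C := by
  rw [norm_eq, ← hu.tsum_eq]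
  exact (summable_co a).tsum_le_tsum h hu.summable

noncomputable instance : NormedCommRing B :=
  { (inferInstance : NormedAddCommGroup B), (inferInstance : CommRing B) with
    norm_mul_le := by
      intro a b
      rw [norm_eq a, norm_eq b, tsum_mul_tsum_eq_tsum_sum_antidiagonal_of_summable_norm
        (summable_co a).norm (summable_co b).norm]
      refine norm_le_of (Summable.hasSum ?_) fun k => ?_
      · exact (summable_norm_sum_mul_antidiagonal_of_summable_norm
          (summable_co a).norm (summable_co b).norm).of_norm
      · rw [co_mul]
        exact (norm_sum_le _ _).trans_eq (Finset.sum_congr rfl fun p _ => norm_mul _ _) }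

noncomputable instance : NormedAlgebra ℝ B :=
  { (inferInstance : Algebra ℝ B) with
    norm_smul_le := by
      intro r a
      rw [← norm_toLp, map_smul, norm_smul, norm_toLp] }

instance : CompleteSpace B := by
  have hiso : Isometry toLp := AddMonoidHomClass.isometry_of_norm toLp norm_toLp
  have hsurj : Function.Surjective toLp := fun u => by
    have hu : Summable fun k => ‖u k‖ := by simpa using (memℓp_gen_iff (by simp)).1 u.2
    exact ⟨mk _ hu, by ext k; simp [toLp_apply]⟩
  exact (completeSpace_congr (e := Equiv.ofBijective toLp ⟨toLp_injective, hsurj⟩)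
    hiso.isUniformEmbedding).2 inferInstance

lemma norm_co_le (k : ℕ) (a : B) : ‖co k a‖ ≤ ‖a‖ := by
  rw [norm_eq]
  exact (summable_co a).le_tsum k fun _ _ => norm_nonneg _

/-- The `k`-th coefficient as a continuous linear functional. -/
noncomputable def coL (k : ℕ) : B →L[ℝ] ℝ :=
  (co k).mkContinuous 1 fun a => by simpa using norm_co_le k a

@[simp] lemma coL_apply (k : ℕ) (a : B) : coL k a = co k a := rfl

/-- The variable. -/
noncomputable def Y : B := mk (fun k => if k = 1 then 1 else 0) <|
  summable_of_ne_finset_zero (s := {1}) fun k hk => by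
    have : k ≠ 1 := by simpa using hk
    simp [this]

lemma coe_Y : ((Y : B) : PowerSeries ℝ) = PowerSeries.X := by
  ext k; simp [← co_apply, Y, PowerSeries.coeff_X]

lemma norm_Y_le : ‖Y‖ ≤ 1 := by
  refine norm_le_of (hasSum_ite_eq 1 (1 : ℝ)) fun k => ?_
  simp only [Y, co_mk]
  split_ifs <;> simp

/-- The backward shift `a ↦ (a - a₀) / Y`. -/
noncomputable def shift : B →ₗ[ℝ] B where
  toFun a := mk (fun k => co (k + 1) a) ((summable_nat_add_iff 1).2 (summable_co a))
  map_add' a b := ext_co fun k => by simp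
  map_smul' c a := ext_co fun k => by simp

@[simp] lemma co_shift (k : ℕ) (a : B) : co k (shift a) = co (k + 1) a := by simp [shift]

lemma norm_shift_le (a : B) : ‖shift a‖ ≤ ‖a‖ := by
  rw [norm_eq, norm_eq, (summable_co a).tsum_eq_zero_add]
  simp

/-- The backward shift as a continuous linear map. -/
noncomputable def shiftL : B →L[ℝ] B :=
  shift.mkContinuous 1 fun a => by simpa using norm_shift_le a

@[simp] lemma co_shiftL (k : ℕ) (a : B) : co k (shiftL a) = co (k + 1) a := co_shift k a

lemma co_shiftL_pow (d k : ℕ) (a : B) : co k ((shiftL ^ d) a) = co (k + d) a := by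
  induction d generalizing k with
  | zero => simp
  | succ d ih =>
    rw [pow_succ', mul_apply_eq_comp, co_shiftL, ih,
      show k + 1 + d = k + (d + 1) by ring]

lemma co_Y_mul_succ (a : B) (k : ℕ) : co (k + 1) (Y * a) = co k a := by
  simp [co_apply, coe_Y, PowerSeries.coeff_succ_X_mul]

lemma co_Y_mul_zero (a : B) : co 0 (Y * a) = 0 := by
  simp [co_apply, coe_Y]

lemma eq_Y_mul_shift (a : B) : a = Y * shiftL a + co 0 a • 1 := by
  refine ext_co fun k => ?_
  rcases k with _ | k
  · simp [co_Y_mul_zero, co_one]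
  · simp [co_Y_mul_succ, co_one]

lemma shiftL_Y_mul (a : B) : shiftL (Y * a) = a :=
  ext_co fun k => by rw [co_shiftL, co_Y_mul_succ]

lemma shiftL_pow_Y_pow (d : ℕ) (a : B) : (shiftL ^ d) (Y ^ d * a) = a := by
  induction d with
  | zero => simp
  | succ d ih =>
    rw [pow_succ, mul_apply_eq_comp, pow_succ', mul_assoc, shiftL_Y_mul, ih]

/-- Division with remainder by `Y ^ d`. -/
lemma eq_Y_pow_mul_shift (d : ℕ) (a : B) :
    a = Y ^ d * (shiftL ^ d) a + ∑ i ∈ Finset.range d, co i a • Y ^ i := by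
  induction d with
  | zero => simp
  | succ d ih =>
    conv_lhs => rw [ih, eq_Y_mul_shift ((shiftL ^ d) a)]
    rw [Finset.sum_range_succ, co_shiftL_pow, pow_succ' shiftL, mul_apply_eq_comp,
      pow_succ, zero_add]
    simp only [mul_add, mul_smul_comm, mul_one, mul_assoc]
    abel

lemma summable_ev {t : ℝ} (ht : |t| ≤ 1) (a : B) : Summable fun k => ‖co k a * t ^ k‖ :=
  Summable.of_nonneg_of_le (fun _ => norm_nonneg _) (fun k => by
    rw [norm_mul, norm_pow]
    exact mul_le_of_le_one_right (norm_nonneg _) (pow_le_one₀ (norm_nonneg _) ht)) (summable_co a)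

/-- Evaluation at a point `t` of `[-1, 1]`; the ring structure is respected because absolutely
convergent series may be multiplied termwise. -/
noncomputable def ev (t : ℝ) (ht : |t| ≤ 1) : B →L[ℝ] ℝ :=
  LinearMap.mkContinuous
    { toFun := fun a => ∑' k, co k a * t ^ k
      map_add' := fun a b => by
        rw [← (summable_ev ht a).of_norm.tsum_add (summable_ev ht b).of_norm]
        simp [add_mul]
      map_smul' := fun c a => by
        simp [mul_assoc, tsum_mul_left] } 1 fun a => by
    rw [one_mul, norm_eq]
    refine tsum_of_norm_bounded (summable_co a).hasSum fun k => ?_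
    rw [norm_mul, norm_pow]
    exact mul_le_of_le_one_right (norm_nonneg _) (pow_le_one₀ (norm_nonneg _) ht)

section ev
variable {t : ℝ} (ht : |t| ≤ 1)

lemma ev_apply (a : B) : ev t ht a = ∑' k, co k a * t ^ k := rfl

lemma norm_ev_le (a : B) : ‖ev t ht a‖ ≤ ‖a‖ := by
  simpa using (ev t ht).le_of_opNorm_le (LinearMap.mkContinuous_norm_le _ zero_le_one _) a

lemma ev_mul (a b : B) : ev t ht (a * b) = ev t ht a * ev t ht b := by
  simp only [ev_apply]
  rw [tsum_mul_tsum_eq_tsum_sum_antidiagonal_of_summable_norm (summable_ev ht a)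
    (summable_ev ht b)]
  refine tsum_congr fun k => ?_
  rw [co_mul, Finset.sum_mul]
  refine Finset.sum_congr rfl fun p hp => ?_
  rw [← Finset.HasAntidiagonal.mem_antidiagonal.1 hp, pow_add]
  ring

lemma ev_one : ev t ht 1 = 1 := by
  rw [ev_apply, tsum_eq_single 0 fun k hk => by simp [co_one, hk]]
  simp [co_one]

lemma ev_Y : ev t ht Y = t := by
  rw [ev_apply, tsum_eq_single 1 fun k hk => by simp [Y, hk]]
  simp [Y]

/-- `ev` as a ring homomorphism. -/
noncomputable def evHom : B →+* ℝ where
  toFun := ev t ht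
  map_zero' := map_zero _
  map_add' := map_add _
  map_one' := ev_one ht
  map_mul' := ev_mul ht

lemma evHom_apply (a : B) : evHom ht a = ev t ht a := rfl

lemma ev_pow (a : B) (n : ℕ) : ev t ht (a ^ n) = ev t ht a ^ n := map_pow (evHom ht) a n

lemma ev_sub_co_le (a : B) : |ev t ht a - co 0 a| ≤ |t| * ‖a‖ := by
  conv_lhs => rw [eq_Y_mul_shift a]
  rw [map_add, ev_mul, ev_Y, map_smul, ev_one, map_add, co_Y_mul_zero, map_smul, co_one]
  simp only [smul_eq_mul, mul_one, if_true, zero_add, add_sub_cancel_right, abs_mul]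
  exact mul_le_mul_of_nonneg_left ((norm_ev_le ht _).trans (norm_shift_le a)) (abs_nonneg _)

end ev

/-- The substitution `Y ↦ c Y`, for `c` in `[-1, 1]`. -/
noncomputable def dil (c : ℝ) (hc : |c| ≤ 1) : B →L[ℝ] B :=
  LinearMap.mkContinuous
    { toFun := fun a => mk (fun k => co k a * c ^ k) (summable_ev hc a)
      map_add' := fun a b => ext_co fun k => by simp [add_mul]
      map_smul' := fun r a => ext_co fun k => by simp [mul_assoc] } 1 fun a => by
    rw [one_mul]
    refine norm_le_of (norm_eq a ▸ (summable_co a).hasSum) fun k => ?_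
    simp only [LinearMap.coe_mk, AddHom.coe_mk, co_mk]
    rw [norm_mul, norm_pow]
    exact mul_le_of_le_one_right (norm_nonneg _) (pow_le_one₀ (norm_nonneg _) hc)

section dil
variable {c : ℝ} (hc : |c| ≤ 1)

@[simp] lemma co_dil (k : ℕ) (a : B) : co k (dil c hc a) = co k a * c ^ k := by
  change co k (mk (fun k => co k a * c ^ k) (summable_ev hc a)) = _
  simp

lemma dil_mul (a b : B) : dil c hc (a * b) = dil c hc a * dil c hc b := by
  refine ext_co fun k => ?_
  rw [co_dil, co_mul, co_mul, Finset.sum_mul]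
  refine Finset.sum_congr rfl fun p hp => ?_
  rw [co_dil, co_dil, ← Finset.HasAntidiagonal.mem_antidiagonal.1 hp, pow_add]
  ring

lemma dil_Y : dil c hc Y = c • Y := by
  refine ext_co fun k => ?_
  by_cases hk : k = 1 <;> simp [Y, hk]

lemma dil_one : dil c hc 1 = 1 := by
  refine ext_co fun k => ?_
  by_cases hk : k = 0 <;> simp [co_one, hk]

lemma dil_Y_pow (d : ℕ) : dil c hc (Y ^ d) = c ^ d • Y ^ d := by
  induction d with
  | zero => simp [dil_one]
  | succ d ih => rw [pow_succ, dil_mul, ih, dil_Y, smul_mul_smul_comm, pow_succ]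

lemma ev_dil {t : ℝ} (ht : |t| ≤ 1) (a : B) :
    ev t ht (dil c hc a) = ev (c * t)
      (by rw [abs_mul]; exact mul_le_one₀ hc (abs_nonneg _) ht) a := by
  simp only [ev_apply, co_dil]
  exact tsum_congr fun k => by rw [mul_pow]; ring

lemma norm_dil_sub_le (a : B) : ‖dil c hc a - co 0 a • 1‖ ≤ |c| * ‖a‖ := by
  rw [norm_eq a, ← tsum_mul_left]
  refine norm_le_of ((summable_co a).mul_left _).hasSum fun k => ?_
  rcases k with _ | k
  · simp [co_one]; positivity
  · simp only [map_sub, co_dil, map_smul, co_one, smul_eq_mul]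
    rw [if_neg (Nat.succ_ne_zero k), mul_zero, sub_zero, norm_mul, norm_pow, mul_comm, pow_succ']
    refine mul_le_mul_of_nonneg_right ?_ (norm_nonneg _)
    exact mul_le_of_le_one_right (norm_nonneg _) (pow_le_one₀ (norm_nonneg _) hc)

/-- A series with nonzero constant term becomes invertible once its variable is scaled down. -/
lemma exists_isUnit_dil (a : B) (ha : co 0 a ≠ 0) :
    ∃ (c : ℝ) (hc : |c| ≤ 1), 0 < c ∧ IsUnit (dil c hc a) := by
  have hn : IsOpen {b : B | IsUnit b} := Units.isOpen
  have hmem : co 0 a • (1 : B) ∈ {b : B | IsUnit b} := by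
    rw [← Algebra.algebraMap_eq_smul_one]
    exact (IsUnit.mk0 _ ha).map (algebraMap ℝ B)
  obtain ⟨ε, hε, hball⟩ := Metric.isOpen_iff.1 hn _ hmem
  have hpos : 0 < ‖a‖ + 1 := by positivity
  refine ⟨min 1 (ε / (‖a‖ + 1)), ?_, by positivity, hball ?_⟩
  · rw [abs_of_pos (by positivity)]; exact min_le_left _ _
  · rw [mem_ball_iff_norm]
    refine (norm_dil_sub_le _ a).trans_lt ?_
    rw [abs_of_pos (by positivity)]
    calc min 1 (ε / (‖a‖ + 1)) * ‖a‖ ≤ ε / (‖a‖ + 1) * ‖a‖ := by gcongr; exact min_le_right _ _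
      _ < ε / (‖a‖ + 1) * (‖a‖ + 1) := by gcongr; linarith
      _ = ε := by field_simp

end dil

end B

/-! ### Evaluating an analytic function at points with coordinates in `B` -/

instance : NormOneClass B where
  norm_one := by
    rw [B.norm_eq, tsum_eq_single 0 fun k hk => by simp [B.co_one, hk]]
    simp [B.co_one]

section lift
variable {E : Type*} [NormedAddCommGroup E] [NormedSpace ℝ E] {ι : Type*} [Fintype ι]

/-- The `m`-homogeneous part `b ↦ pₘ(∑ bᵢ vᵢ, …, ∑ bᵢ vᵢ)`, expanded by multilinearity so that the
coefficients `bᵢ` may be taken in `B`. -/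
noncomputable def liftSeries (p : FormalMultilinearSeries ℝ E ℝ) (v : ι → E) :
    FormalMultilinearSeries ℝ (ι → B) B := fun m =>
  ∑ j : Fin m → ι, (p m fun i => v (j i)) •
    (ContinuousMultilinearMap.mkPiAlgebra ℝ (Fin m) B).compContinuousLinearMap
      fun i => ContinuousLinearMap.proj (R := ℝ) (φ := fun _ : ι => B) (j i)

lemma liftSeries_apply (p : FormalMultilinearSeries ℝ E ℝ) (v : ι → E) (m : ℕ) (b : ι → B) :
    liftSeries p v m (fun _ => b) =
      ∑ j : Fin m → ι, (p m fun i => v (j i)) • ∏ i, b (j i) := by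
  simp [liftSeries, sum_apply]

lemma norm_liftSeries_le (p : FormalMultilinearSeries ℝ E ℝ) (v : ι → E) (m : ℕ) :
    ‖liftSeries p v m‖ ≤ ‖p m‖ * (∑ i, ‖v i‖) ^ m := by
  have hsum : (∑ i, ‖v i‖) ^ m = ∑ j : Fin m → ι, ∏ i, ‖v (j i)‖ := by
    have := Finset.prod_univ_sum (fun _ : Fin m => (Finset.univ : Finset ι)) fun _ i => ‖v i‖
    simpa using this
  rw [hsum, Finset.mul_sum]
  refine (norm_sum_le _ _).trans (Finset.sum_le_sum fun j _ => ?_)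
  rw [norm_smul]
  refine (mul_le_of_le_one_right (norm_nonneg _) ?_).trans ((p m).le_opNorm _)
  refine ContinuousMultilinearMap.opNorm_le_bound zero_le_one fun b => ?_
  rw [ContinuousMultilinearMap.compContinuousLinearMap_apply,
    ContinuousMultilinearMap.mkPiAlgebra_apply, one_mul]
  refine (Finset.norm_prod_le _ _).trans (Finset.prod_le_prod (fun _ _ => norm_nonneg _) ?_)
  exact fun i _ => norm_le_pi_norm (b i) (j i)

lemma ev_liftSeries (p : FormalMultilinearSeries ℝ E ℝ) (v : ι → E) (m : ℕ) (b : ι → B)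
    {t : ℝ} (ht : |t| ≤ 1) :
    B.ev t ht (liftSeries p v m fun _ => b) = p m fun _ => ∑ i, B.ev t ht (b i) • v i := by
  rw [liftSeries_apply, map_sum, ContinuousMultilinearMap.map_sum]
  refine Finset.sum_congr rfl fun j _ => ?_
  rw [map_smul, ContinuousMultilinearMap.map_smul_univ, ← B.evHom_apply, map_prod, smul_eq_mul,
    smul_eq_mul, mul_comm]
  rfl

/-- An analytic function on a real vector space extends to points whose coordinates lie in `B`,
compatibly with the evaluations `B → ℝ`. -/
lemma exists_lift {f : E → ℝ} (hf : AnalyticAt ℝ f 0) (v : ι → E) :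
    ∃ (r : ℝ) (Φ : (ι → B) → B), 0 < r ∧ AnalyticOnNhd ℝ Φ (Metric.ball 0 r) ∧
      ∀ b ∈ Metric.ball (0 : ι → B) r, ∀ t (ht : |t| ≤ 1),
        B.ev t ht (Φ b) = f (∑ i, B.ev t ht (b i) • v i) := by
  obtain ⟨p, R, hp⟩ := hf
  obtain ⟨ρ, hρ0, hρR⟩ := ENNReal.lt_iff_exists_nnreal_btwn.1 hp.r_pos
  have hρ : 0 < ρ := by exact_mod_cast hρ0
  obtain ⟨C, hC, hbound⟩ := p.norm_mul_pow_le_of_lt_radius (hρR.trans_le hp.r_le)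
  set V : ℝ := ∑ i, ‖v i‖ with hV
  have hV0 : 0 ≤ V := Finset.sum_nonneg fun _ _ => norm_nonneg _
  set q := liftSeries p v with hq
  let r : NNReal := ⟨ρ / (V + 1), by positivity⟩
  have hr : (r : ℝ) = ρ / (V + 1) := rfl
  have hr0 : 0 < (r : ℝ) := by rw [hr]; positivity
  have hVr : V * r ≤ ρ := by
    rw [hr, mul_div_assoc', div_le_iff₀ (by positivity)]
    have : (0 : ℝ) < ρ := hρ
    nlinarith
  have hrad : (r : ENNReal) ≤ q.radius := by
    refine q.le_radius_of_bound C fun m => ?_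
    refine le_trans ?_ (hbound m)
    calc ‖q m‖ * (r : ℝ) ^ m ≤ ‖p m‖ * V ^ m * (r : ℝ) ^ m := by
          gcongr; exact norm_liftSeries_le p v m
      _ = ‖p m‖ * (V * r) ^ m := by rw [mul_pow, mul_assoc]
      _ ≤ ‖p m‖ * (ρ : ℝ) ^ m := by gcongr
  have hqs : HasFPowerSeriesOnBall q.sum q 0 q.radius :=
    q.hasFPowerSeriesOnBall (lt_of_lt_of_le (by exact_mod_cast hr0) hrad)
  have hsub : Metric.ball (0 : ι → B) r ⊆ Metric.eball 0 q.radius := by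
    rw [← Metric.eball_coe]
    exact Metric.eball_subset_eball hrad
  refine ⟨r, q.sum, hr0, hqs.analyticOnNhd.mono hsub, fun b hb t ht => ?_⟩
  have h1 : HasSum (fun m => q m fun _ => b) (q.sum b) := by
    simpa using hqs.hasSum (hsub hb)
  have h2 := h1.mapL (B.ev t ht)
  simp only [hq, ev_liftSeries] at h2
  refine h2.unique ?_
  have hw : ∑ i, B.ev t ht (b i) • v i ∈ Metric.eball (0 : E) R := by
    refine Metric.eball_subset_eball hρR.le ?_
    rw [Metric.eball_coe, mem_ball_zero_iff]
    have hb' : ‖b‖ < r := mem_ball_zero_iff.1 hb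
    calc ‖∑ i, B.ev t ht (b i) • v i‖ ≤ ∑ i, ‖b‖ * ‖v i‖ := by
          refine (norm_sum_le _ _).trans (Finset.sum_le_sum fun i _ => ?_)
          rw [norm_smul]
          gcongr
          exact (B.norm_ev_le ht _).trans (norm_le_pi_norm b i)
      _ = ‖b‖ * V := by rw [← Finset.mul_sum]
      _ ≤ ‖b‖ * (V + 1) := by gcongr; linarith
      _ < r * (V + 1) := by gcongr
      _ = ρ := by rw [hr]; field_simp
  simpa using hp.hasSum hw

end lift

/-- For `f` analytic at the origin of `ℝⁿ × ℝ`, the map `x ↦ f (x, s ·)` is analytic with values in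
the Banach algebra `B`, provided that the scale `s` is small. -/
lemma exists_slices {n : ℕ} {f : (Fin n → ℝ) × ℝ → ℝ} (hf : AnalyticAt ℝ f 0) :
    ∃ (s : ℝ) (F : (Fin n → ℝ) → B), 0 < s ∧ AnalyticAt ℝ F 0 ∧
      ∀ᶠ x in 𝓝 0, ∀ t (ht : |t| ≤ 1), B.ev t ht (F x) = f (x, s * t) := by
  let v : Fin n ⊕ Unit → (Fin n → ℝ) × ℝ :=
    Sum.elim (fun i => (Pi.single i 1, 0)) fun _ => (0, 1)
  obtain ⟨r, Φ, hr, hΦ, hev⟩ := exists_lift hf v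
  let A : (Fin n → ℝ) → (Fin n ⊕ Unit → B) := fun x =>
    Sum.elim (fun i => x i • (1 : B)) fun _ => (r / 2) • B.Y
  have hA : AnalyticAt ℝ A 0 := by
    refine AnalyticAt.pi fun i => ?_
    rcases i with i | u
    · exact ((ContinuousLinearMap.proj (R := ℝ) (φ := fun _ : Fin n => ℝ) i).analyticAt 0).smul
        analyticAt_const
    · exact analyticAt_const
  have hA0 : A 0 ∈ Metric.ball 0 r := by
    rw [mem_ball_zero_iff, pi_norm_lt_iff hr]
    rintro (i | u)
    · simpa [A] using hr
    · simp only [A, Sum.elim_inr, norm_smul]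
      rw [Real.norm_of_nonneg (by positivity)]
      nlinarith [B.norm_Y_le]
  refine ⟨r / 2, Φ ∘ A, by positivity, (hΦ _ hA0).comp hA, ?_⟩
  filter_upwards [hA.continuousAt.eventually (Metric.isOpen_ball.mem_nhds hA0)] with x hx t ht
  rw [Function.comp_apply, hev _ hx]
  congr 1
  simp only [A, v, Fintype.sum_sum_type, Sum.elim_inl, Sum.elim_inr, map_smul, B.ev_one, B.ev_Y]
  ext i <;> simp [Prod.fst_sum, Prod.snd_sum, Finset.sum_apply, Pi.single_apply]

/-! ### Weierstrass preparation -/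

/-- Division by a small perturbation `G x` of `y`: if `τ` is the quotient map of the division by
`y`, then the quotient `τ (h x)` of the division by `G x` is obtained by inverting an operator close
to the identity, hence depends analytically on `x`. -/
lemma exists_division {X A : Type*} [NormedAddCommGroup X] [NormedSpace ℝ X] [NormedCommRing A]
    [NormedAlgebra ℝ A] [CompleteSpace A] (τ : A →L[ℝ] A) (y : A) {G : X → A}
    (hG : AnalyticAt ℝ G 0) (hG0 : G 0 = y) :
    ∃ h : X → A, AnalyticAt ℝ h 0 ∧ h 0 = y ∧
      ∀ᶠ x in 𝓝 (0 : X), h x + (G x - y) * τ (h x) = y := by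
  let Λ : A →L[ℝ] (A →L[ℝ] A) :=
    ((ContinuousLinearMap.compL ℝ A A A).flip τ).comp (ContinuousLinearMap.mul ℝ A)
  have hΛ : ∀ g b, Λ g b = g * τ b := fun g b => rfl
  let T : X → (A →L[ℝ] A) := fun x => 1 + Λ (G x - y)
  have hT0 : T 0 = ((1 : (A →L[ℝ] A)ˣ) : A →L[ℝ] A) := by simp [T, hG0]
  have hT : AnalyticAt ℝ T 0 := by
    have h1 : AnalyticAt ℝ (fun x => G x - y) 0 := hG.sub analyticAt_const
    have h2 : AnalyticAt ℝ (fun b => Λ b) (G 0 - y) := Λ.analyticAt _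
    exact analyticAt_const.add (AnalyticAt.fun_comp (g := fun b => Λ b) h2 h1)
  let h : X → A := fun x => Ring.inverse (T x) y
  refine ⟨h, ?_, ?_, ?_⟩
  · have h1 : AnalyticAt ℝ (fun x => Ring.inverse (T x)) 0 := by
      refine AnalyticAt.fun_comp (g := Ring.inverse) (f := T) ?_ hT
      rw [hT0]
      exact analyticAt_inverse _
    exact ((ContinuousLinearMap.apply ℝ A y).analyticAt _).comp h1
  · simp only [h, hT0, Ring.inverse_unit]
    simp
  · have hunit : ∀ᶠ x in 𝓝 (0 : X), IsUnit (T x) :=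
      hT.continuousAt.eventually (Units.isOpen.mem_nhds (by rw [hT0]; exact Units.isUnit _))
    filter_upwards [hunit] with x hx
    have h1 : T x (h x) = y := by
      have := congrArg (fun S : A →L[ℝ] A => S y) (Ring.mul_inverse_cancel _ hx)
      simpa [h] using this
    have h2 : T x (h x) = h x + (G x - y) * τ (h x) := by
      simp [T, hΛ, sub_mul]
    rw [← h2, h1]

/-- Weierstrass preparation, in the form needed here: if `f` is not identically zero on the last
coordinate axis then, up to rescaling the last variable, `f` is comparable to a monic polynomial in
that variable whose coefficients are analytic and vanish at the origin. -/
lemma exists_weierstrass {n : ℕ} {f : (Fin n → ℝ) × ℝ → ℝ} (hf : AnalyticAt ℝ f 0)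
    (h0 : f 0 = 0) (hne : ¬ ∀ᶠ t in 𝓝 (0 : ℝ), f (0, t) = 0) :
    ∃ (κ : ℝ) (d : ℕ) (a : Fin d → (Fin n → ℝ) → ℝ) (C : ℝ), 0 < κ ∧ 0 < d ∧ 0 < C ∧
      (∀ i, AnalyticAt ℝ (a i) 0) ∧ (∀ i, a i 0 = 0) ∧
      ∀ᶠ p : (Fin n → ℝ) × ℝ in 𝓝 0,
        |p.2 ^ d + ∑ i, a i p.1 * p.2 ^ (i : ℕ)| ≤ C * |f (p.1, κ * p.2)| ∧
        (p.2 ^ d + ∑ i, a i p.1 * p.2 ^ (i : ℕ) = 0 → f (p.1, κ * p.2) = 0) := by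
  classical
  obtain ⟨s, F, hs, hF, hev⟩ := exists_slices hf
  -- `d` is the order of vanishing of `f (0, ·)`, and `τ (F 0)` will be its unit factor.
  have hex : ∃ k, B.co k (F 0) ≠ 0 := by
    by_contra! hall
    apply hne
    have hF0 : F 0 = 0 := B.ext_co fun k => by rw [hall k, map_zero]
    filter_upwards [Metric.ball_mem_nhds (0 : ℝ) hs] with t ht
    have ht' : |t / s| ≤ 1 := by
      rw [abs_div, abs_of_pos hs, div_le_one hs]
      simpa using (mem_ball_zero_iff.1 ht).le
    have := hev.self_of_nhds (t / s) ht'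
    rw [hF0, map_zero, mul_div_cancel₀ _ hs.ne'] at this
    exact this.symm
  let d := Nat.find hex
  have hd : B.co d (F 0) ≠ 0 := Nat.find_spec hex
  have hlt : ∀ i < d, B.co i (F 0) = 0 := fun i hi => not_not.1 (Nat.find_min hex hi)
  have hd0 : 0 < d := by
    refine Nat.pos_of_ne_zero fun hd' => hd ?_
    have h1 := hev.self_of_nhds 0 (by simp)
    rw [mul_zero, show ((0 : Fin n → ℝ), (0 : ℝ)) = 0 from rfl, h0] at h1
    have h2 := B.ev_sub_co_le (t := 0) (by simp) (F 0)
    rw [h1] at h2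
    rw [hd']
    simpa using h2
  let τ : B →L[ℝ] B := B.shiftL ^ d
  have hFU : F 0 = B.Y ^ d * τ (F 0) := by
    conv_lhs => rw [B.eq_Y_pow_mul_shift d (F 0)]
    rw [Finset.sum_eq_zero fun i hi => by rw [hlt i (Finset.mem_range.1 hi), zero_smul], add_zero]
  obtain ⟨c, hc, hc0, u, hu⟩ := B.exists_isUnit_dil (τ (F 0)) (by
    rw [B.co_shiftL_pow, zero_add]; exact hd)
  -- The normalised family `G`, with `G 0 = Y ^ d`.
  let e : B := (c ^ d)⁻¹ • (↑u⁻¹ : B)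
  let G : (Fin n → ℝ) → B := fun x => B.dil c hc (F x) * e
  have hG0 : G 0 = B.Y ^ d := by
    simp only [G, e]
    rw [hFU, B.dil_mul, ← hu, B.dil_Y_pow, mul_smul_comm, smul_mul_assoc, smul_mul_assoc,
      mul_assoc, Units.mul_inv, mul_one, smul_smul, inv_mul_cancel₀ (by positivity), one_smul]
  have hG : AnalyticAt ℝ G 0 :=
    (((B.dil c hc).analyticAt _).comp hF).mul analyticAt_const
  obtain ⟨h, hh, hh0, hdiv0⟩ := exists_division τ (B.Y ^ d) hG hG0
  have hdiv : ∀ᶠ x in 𝓝 (0 : Fin n → ℝ),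
      B.Y ^ d + ∑ i ∈ Finset.range d, (-B.co i (h x)) • B.Y ^ i = G x * τ (h x) := by
    filter_upwards [hdiv0] with x h2
    have h3 : h x = B.Y ^ d * τ (h x) + ∑ i ∈ Finset.range d, B.co i (h x) • B.Y ^ i :=
      B.eq_Y_pow_mul_shift d (h x)
    have h4 : B.Y ^ d * τ (h x) = h x - ∑ i ∈ Finset.range d, B.co i (h x) • B.Y ^ i :=
      eq_sub_of_add_eq h3.symm
    rw [sub_mul, h4] at h2
    simp only [neg_smul, Finset.sum_neg_distrib]
    linear_combination (exp := 1) -h2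
  have hτ0 : B.co 0 (τ (h 0)) = 1 := by
    rw [hh0, B.co_shiftL_pow, ← mul_one (B.Y ^ d), zero_add, ← zero_add d, ← B.co_shiftL_pow,
      zero_add, B.shiftL_pow_Y_pow, B.co_one, if_pos rfl]
  have hτc : ContinuousAt (fun x => τ (h x)) 0 := τ.continuous.continuousAt.comp hh.continuousAt
  have hc1 : ∀ᶠ x in 𝓝 (0 : Fin n → ℝ), 1 / 2 < B.co 0 (τ (h x)) := by
    have : ContinuousAt (fun x => B.coL 0 (τ (h x))) 0 :=
      (B.coL 0).continuous.continuousAt.comp hτc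
    refine this.eventually (lt_mem_nhds ?_)
    change 1 / 2 < B.co 0 (τ (h 0))
    rw [hτ0]
    norm_num
  have hc2 : ∀ᶠ x in 𝓝 (0 : Fin n → ℝ), ‖τ (h x)‖ < ‖τ (h 0)‖ + 1 :=
    hτc.norm.eventually (gt_mem_nhds (lt_add_one _))
  refine ⟨s * c, d, fun i x => -B.coL i (h x), (‖e‖ + 1) * (‖τ (h 0)‖ + 1), by positivity, hd0,
    by positivity, fun i => (((B.coL i).analyticAt _).comp hh).neg, fun i => ?_, ?_⟩
  · have h1 := B.co_shiftL_pow d 0 (B.Y ^ d)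
    have h2 : ∀ i < d, B.co i (B.Y ^ d) = 0 := by
      intro i hi
      rw [B.co_apply]
      simp [B.coe_Y, PowerSeries.coeff_X_pow, hi.ne]
    simp [hh0, h2 i i.2]
  have ht1 : ∀ᶠ p : (Fin n → ℝ) × ℝ in 𝓝 0, |p.2| < min 1 (1 / (2 * (‖τ (h 0)‖ + 1))) := by
    have : ContinuousAt (fun p : (Fin n → ℝ) × ℝ => |p.2|) 0 := by fun_prop
    exact this.eventually (gt_mem_nhds (by simp; positivity))
  have hfst : Tendsto (fun p : (Fin n → ℝ) × ℝ => p.1) (𝓝 0) (𝓝 0) :=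
    (continuous_fst (X := Fin n → ℝ) (Y := ℝ)).tendsto 0
  filter_upwards [hfst.eventually hdiv, hfst.eventually hc1, hfst.eventually hc2,
    hfst.eventually hev, ht1] with ⟨x, t⟩ hx1 hx2 hx3 hx4 htt
  simp only at hx1 hx2 hx3 hx4 htt ⊢
  have ht : |t| ≤ 1 := (htt.trans_le (min_le_left _ _)).le
  have hkey : t ^ d + ∑ i : Fin d, -B.coL i (h x) * t ^ (i : ℕ) =
      f (x, s * c * t) * (B.ev t ht e * B.ev t ht (τ (h x))) := by
    have h1 := congrArg (B.ev t ht) hx1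
    simp only [map_add, map_sum, map_smul, B.ev_mul, B.ev_pow, B.ev_Y, G, B.ev_dil, smul_eq_mul]
      at h1
    rw [hx4, ← Fin.sum_univ_eq_sum_range (fun i => -B.co i (h x) * t ^ i) d] at h1
    rw [mul_assoc s c t, ← mul_assoc]
    exact h1
  rw [hkey]
  refine ⟨?_, fun hz => ?_⟩
  · rw [abs_mul, mul_comm, abs_mul]
    gcongr
    · exact (B.norm_ev_le ht e).trans (by linarith)
    · exact (B.norm_ev_le ht _).trans hx3.le
  · refine (mul_eq_zero.1 hz).resolve_right (mul_ne_zero ?_ ?_)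
    · intro he
      have h1 : B.ev t ht (e * (c ^ d • (u : B))) = 1 := by
        have : e * (c ^ d • (u : B)) = 1 := by
          simp only [e]
          rw [smul_mul_smul_comm, Units.inv_mul, inv_mul_cancel₀ (by positivity), one_smul]
        rw [this, B.ev_one]
      rw [B.ev_mul, he, zero_mul] at h1
      exact zero_ne_one h1
    · intro hz
      have h1 := B.ev_sub_co_le ht (τ (h x))
      rw [hz, zero_sub, abs_neg, abs_of_pos (by linarith)] at h1
      have h2 : |t| * ‖τ (h x)‖ ≤ 1 / (2 * (‖τ (h 0)‖ + 1)) * (‖τ (h 0)‖ + 1) := by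
        gcongr
        exact (htt.trans_le (min_le_right _ _)).le
      have h3 : 1 / (2 * (‖τ (h 0)‖ + 1)) * (‖τ (h 0)‖ + 1) = 1 / 2 := by field_simp
      linarith

/-! ### Monic polynomials and their discriminants -/

/-- The monic complex polynomial of degree `d` with lower order coefficients `c`. -/
noncomputable def poly {d : ℕ} (c : Fin d → ℝ) : Polynomial ℂ :=
  Polynomial.X ^ d + ∑ i, Polynomial.C (c i : ℂ) * Polynomial.X ^ (i : ℕ)

section poly

variable {d : ℕ} (c : Fin d → ℝ)

lemma degree_sum_lt :
    (∑ i, Polynomial.C (c i : ℂ) * Polynomial.X ^ (i : ℕ)).degree < (d : WithBot ℕ) :=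
  Polynomial.degree_sum_fin_lt _

lemma monic_poly : (poly c).Monic := Polynomial.monic_X_pow_add (degree_sum_lt c)

lemma natDegree_poly : (poly c).natDegree = d := by
  refine Polynomial.natDegree_eq_of_degree_eq_some ?_
  rw [poly, Polynomial.degree_add_eq_left_of_degree_lt, Polynomial.degree_X_pow]
  rw [Polynomial.degree_X_pow]
  exact degree_sum_lt c

lemma eval_poly (w : ℂ) : (poly c).eval w = w ^ d + ∑ i, (c i : ℂ) * w ^ (i : ℕ) := by
  simp [poly, Polynomial.eval_finsetSum]

lemma eval_poly_ofReal (y : ℝ) :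
    (poly c).eval (y : ℂ) = ((y ^ d + ∑ i, c i * y ^ (i : ℕ) : ℝ) : ℂ) := by
  rw [eval_poly]; push_cast; rfl

lemma eval_poly_conj (w : ℂ) :
    (poly c).eval (starRingEnd ℂ w) = starRingEnd ℂ ((poly c).eval w) := by
  simp [eval_poly]

lemma exists_roots : ∃ r : Fin d → ℂ, poly c = ∏ i, (Polynomial.X - Polynomial.C (r i)) := by
  have hs := IsAlgClosed.splits (poly c)
  have hcard : (poly c).roots.card = d := by
    rw [← hs.natDegree_eq_card_roots, natDegree_poly]
  obtain ⟨l, hl⟩ := Quot.exists_rep (poly c).roots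
  have hl' : (l : Multiset ℂ) = (poly c).roots := hl
  have hlen : l.length = d := by rw [← hcard, ← hl', Multiset.coe_card]
  subst hlen
  refine ⟨l.get, ?_⟩
  conv_lhs => rw [hs.eq_prod_roots_of_monic (monic_poly c), ← hl']
  rw [Multiset.map_coe, Multiset.prod_coe, ← List.prod_ofFn]
  congr 1
  conv_lhs => rw [← List.ofFn_get l, List.map_ofFn]
  rfl

lemma eval_eq_zero_iff {r : Fin d → ℂ}
    (hr : poly c = ∏ i, (Polynomial.X - Polynomial.C (r i))) (w : ℂ) :
    (poly c).eval w = 0 ↔ ∃ i, r i = w := by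
  rw [hr, Polynomial.eval_prod, Finset.prod_eq_zero_iff]
  simp [sub_eq_zero, eq_comm]

/-- A point at which a monic polynomial is small is close to a root. -/
lemma exists_near_root (hd : 0 < d) (w : ℂ) :
    ∃ z : ℂ, (poly c).eval z = 0 ∧ ‖z - w‖ ^ d ≤ ‖(poly c).eval w‖ := by
  obtain ⟨r, hr⟩ := exists_roots c
  have : Nonempty (Fin d) := ⟨⟨0, hd⟩⟩
  obtain ⟨i, hi⟩ := Finite.exists_min fun i => ‖r i - w‖
  refine ⟨r i, (eval_eq_zero_iff c hr _).2 ⟨i, rfl⟩, ?_⟩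
  rw [hr, Polynomial.eval_prod, norm_prod]
  calc ‖r i - w‖ ^ d = ∏ _j : Fin d, ‖r i - w‖ := by simp
    _ ≤ ∏ j, ‖Polynomial.eval w (Polynomial.X - Polynomial.C (r j))‖ := by
      refine Finset.prod_le_prod (fun _ _ => norm_nonneg _) fun j _ => ?_
      simpa [norm_sub_rev w (r j)] using hi j

lemma norm_root_le_one (hc : ∑ i, |c i| < 1) {w : ℂ} (hw : (poly c).eval w = 0) : ‖w‖ ≤ 1 := by
  by_contra! h1
  rw [eval_poly, add_eq_zero_iff_eq_neg] at hw
  have h2 : ‖w‖ ^ d ≤ (∑ i, |c i|) * ‖w‖ ^ d := by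
    rw [Finset.sum_mul, ← norm_pow w d]
    conv_lhs => rw [hw, norm_neg]
    refine (norm_sum_le _ _).trans (Finset.sum_le_sum fun i _ => ?_)
    rw [norm_mul, norm_pow, norm_pow, Complex.norm_real, Real.norm_eq_abs]
    gcongr
    · exact h1.le
    · exact i.2.le
  have h3 : 0 < ‖w‖ ^ d := by positivity
  nlinarith

lemma norm_eval_sub_le (c' : Fin d → ℝ) {w : ℂ} (hw : ‖w‖ ≤ 1) :
    ‖(poly c).eval w - (poly c').eval w‖ ≤ ∑ i, |c i - c' i| := by
  rw [eval_poly, eval_poly, add_sub_add_left_eq_sub, ← Finset.sum_sub_distrib]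
  refine (norm_sum_le _ _).trans (Finset.sum_le_sum fun i _ => ?_)
  rw [← sub_mul, norm_mul, norm_pow, ← Complex.ofReal_sub, Complex.norm_real, Real.norm_eq_abs]
  exact mul_le_of_le_one_right (abs_nonneg _) (pow_le_one₀ (norm_nonneg _) hw)

end poly

/-- The product of the differences `z a - z b` over all ordered pairs of distinct indices. -/
noncomputable def V {R : Type*} [CommRing R] {k : ℕ} (z : Fin k → R) : R :=
  ∏ p : Fin k × Fin k, if p.1 = p.2 then 1 else z p.1 - z p.2

lemma V_comp_perm {R : Type*} [CommRing R] {k : ℕ} (z : Fin k → R) (σ : Equiv.Perm (Fin k)) :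
    V (z ∘ σ) = V z := by
  refine Fintype.prod_equiv (σ.prodCongr σ) _ _ fun p => ?_
  simp

lemma map_V {R S F : Type*} [CommRing R] [CommRing S] [FunLike F R S] [RingHomClass F R S] {k : ℕ}
    (g : F) (z : Fin k → R) : g (V z) = V (g ∘ z) := by
  rw [V, V, map_prod]
  refine Finset.prod_congr rfl fun p _ => ?_
  split_ifs <;> simp

lemma V_ne_zero {k : ℕ} {z : Fin k → ℂ} : V z ≠ 0 ↔ Function.Injective z := by
  rw [V, Finset.prod_ne_zero_iff]
  constructor
  · intro h a b hab
    by_contra hne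
    exact h (a, b) (Finset.mem_univ _) (by simp [hne, hab])
  · intro h p _
    split_ifs with hp
    · exact one_ne_zero
    · exact sub_ne_zero.2 (h.ne hp)

/-- The generalized discriminant of index `k` of the family `r`: the sum over all `k`-tuples of
members of the products `V`. It is symmetric in `r`, and a tuple with a repetition contributes `0`.
Taking `V` over ordered pairs makes each term independent of the order of the tuple. -/
noncomputable def gdisc {R : Type*} [CommRing R] {d : ℕ} (k : ℕ) (r : Fin d → R) : R :=
  ∑ φ : Fin k → Fin d, V (r ∘ φ)

/-- The generalized discriminant of the roots is a polynomial, hence an analytic function, in the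
coefficients. -/
lemma exists_disc (d k : ℕ) : ∃ D : (Fin d → ℝ) → ℝ, (∀ c, AnalyticAt ℝ D c) ∧
    ∀ (c : Fin d → ℝ) (r : Fin d → ℂ), poly c = ∏ i, (Polynomial.X - Polynomial.C (r i)) →
      (D c : ℂ) = gdisc k r := by
  classical
  let S : MvPolynomial (Fin d) ℤ := gdisc k MvPolynomial.X
  have hS : S.IsSymmetric := by
    intro e
    simp only [S, gdisc, map_sum, map_V]
    refine Fintype.sum_equiv (Equiv.arrowCongr (Equiv.refl _) e) _ _ fun φ => ?_
    congr 1
    ext1 a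
    simp
  obtain ⟨Q, hQ⟩ := MvPolynomial.esymmAlgHom_surjective (σ := Fin d) ℤ (n := d) (by simp) ⟨S, hS⟩
  have hQ' : MvPolynomial.aeval (fun i : Fin d => MvPolynomial.esymm (Fin d) ℤ (i + 1)) Q = S := by
    rw [← MvPolynomial.esymmAlgHom_apply, hQ]
  refine ⟨fun c => MvPolynomial.aeval (fun i : Fin d => (-1) ^ ((i : ℕ) + 1) * c (Fin.rev i)) Q,
    fun c => ?_, fun c r hr => ?_⟩
  · refine AnalyticAt.aeval_mvPolynomial (fun i => ?_) Q
    exact analyticAt_const.mul ((ContinuousLinearMap.proj (R := ℝ) (φ := fun _ : Fin d => ℝ)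
      (Fin.rev i)).analyticAt c)
  · have h1 : gdisc k r = MvPolynomial.aeval r S := by
      simp only [S, gdisc, map_sum, map_V]
      refine Finset.sum_congr rfl fun φ _ => ?_
      congr 1
      ext1 a
      simp
    have h2 : ∀ i : Fin d, MvPolynomial.aeval r (MvPolynomial.esymm (Fin d) ℤ (i + 1)) =
        (((-1) ^ ((i : ℕ) + 1) * c (Fin.rev i) : ℝ) : ℂ) := by
      intro i
      rw [MvPolynomial.aeval_esymm_eq_multiset_esymm]
      have h3 := Multiset.prod_X_sub_C_coeff (Finset.univ.val.map r)
        (k := d - ((i : ℕ) + 1)) (by simp)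
      have h4 : (Multiset.map (fun t => Polynomial.X - Polynomial.C t)
          (Finset.univ.val.map r)).prod = poly c := by
        rw [hr, Multiset.map_map]; rfl
      have h5 : (poly c).coeff (d - ((i : ℕ) + 1)) = c (Fin.rev i) := by
        have hi := i.2
        simp only [poly, Polynomial.coeff_add, Polynomial.coeff_X_pow,
          Polynomial.finsetSum_coeff, Polynomial.coeff_C_mul]
        rw [if_neg (by omega), Finset.sum_eq_single (Fin.rev i)]
        · simp
        · intro j _ hj
          have : d - ((i : ℕ) + 1) ≠ j := fun h => hj (Fin.ext (by simp [← h]))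
          simp [this]
        · simp
      have h6 : d - (d - ((i : ℕ) + 1)) = i + 1 := by have := i.2; omega
      rw [h4, h5] at h3
      simp only [Multiset.card_map, Finset.card_val, Finset.card_univ, Fintype.card_fin, h6] at h3
      push_cast
      rw [h3, ← mul_assoc, ← mul_pow]
      simp
    have h7 := MvPolynomial.comp_aeval_apply (R := ℤ)
      (fun i : Fin d => (-1) ^ ((i : ℕ) + 1) * c (Fin.rev i)) Complex.ofRealHom.toIntAlgHom Q
    rw [h1, ← hQ', MvPolynomial.comp_aeval_apply]
    simp only [h2]
    exact h7

section gdisc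

variable {d k : ℕ} {r : Fin d → ℂ}

/-- Vanishing of the discriminants of index larger than `k` bounds the number of distinct members by
`k`: for the index equal to this number, the discriminant is nonzero, since its nonzero terms all
coincide. -/
lemma card_image_le (h : ∀ j, k < j → j ≤ d → gdisc j r = 0) : (Finset.univ.image r).card ≤ k := by
  by_contra! hlt
  set s := Finset.univ.image r with hs
  have hsd : s.card ≤ d := Finset.card_image_le.trans (by simp)
  specialize h _ hlt hsd
  let e : Fin s.card → ℂ := fun a => (s.equivFin.symm a : ℂ)
  have he : Function.Injective e := Subtype.val_injective.comp s.equivFin.symm.injective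
  have hmem : ∀ a, e a ∈ s := fun a => (s.equivFin.symm a).2
  have hterm : ∀ φ : Fin s.card → Fin d,
      V (r ∘ φ) = if Function.Injective (r ∘ φ) then V e else 0 := by
    intro φ
    split_ifs with hφ
    · have hrφ : ∀ a, r (φ a) ∈ s := fun a => Finset.mem_image_of_mem _ (Finset.mem_univ _)
      let σ : Fin s.card → Fin s.card := fun a => s.equivFin ⟨r (φ a), hrφ a⟩
      have hσ : ∀ a, e (σ a) = r (φ a) := fun a => by simp [e, σ]
      have hinj : Function.Injective σ := fun a b hab => hφ (by simp [← hσ, hab])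
      rw [← V_comp_perm e (Equiv.ofBijective σ (Finite.injective_iff_bijective.1 hinj))]
      congr 1
      ext1 a
      exact (hσ a).symm
    · by_contra hne
      exact hφ (V_ne_zero.1 hne)
  have hex : ∀ a, ∃ i, r i = e a := fun a => by
    have := hmem a
    simpa [hs] using this
  choose φ hφ using hex
  have hφ' : Function.Injective (r ∘ φ) := fun a b hab => he (by simpa [hφ] using hab)
  rw [gdisc, Finset.sum_congr rfl fun φ _ => hterm φ, ← Finset.sum_filter, Finset.sum_const,
    nsmul_eq_mul] at h
  refine mul_ne_zero ?_ (V_ne_zero.2 he) h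
  rw [Nat.cast_ne_zero]
  exact (Finset.card_pos.2 ⟨φ, by simpa using hφ'⟩).ne'

/-- If there are at most `k` distinct members then every nonzero term of the `k`-th generalized
discriminant contains each of their differences as a factor. -/
lemma norm_gdisc_le (hcard : (Finset.univ.image r).card ≤ k) (hr : ∀ i, ‖r i‖ ≤ 1) {i j : Fin d}
    (hij : r i ≠ r j) : ‖gdisc k r‖ ≤ (d ^ k * 2 ^ (k * k) : ℕ) * ‖r i - r j‖ := by
  have hV : ∀ φ : Fin k → Fin d, ‖V (r ∘ φ)‖ ≤ 2 ^ (k * k) * ‖r i - r j‖ := by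
    intro φ
    by_cases hφ : Function.Injective (r ∘ φ)
    · have hsub : Finset.univ.image (r ∘ φ) = Finset.univ.image r := by
        refine Finset.eq_of_subset_of_card_le ?_ ?_
        · rw [← Finset.image_image]
          exact Finset.image_subset_image (Finset.subset_univ _)
        · rw [Finset.card_image_of_injective _ hφ]
          simpa using hcard
      have hmem : ∀ i, ∃ a, r (φ a) = r i := fun i => by
        have : r i ∈ Finset.univ.image (r ∘ φ) := by
          rw [hsub]; exact Finset.mem_image_of_mem _ (Finset.mem_univ _)
        simpa using this
      obtain ⟨a, ha⟩ := hmem i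
      obtain ⟨b, hb⟩ := hmem j
      have hab : a ≠ b := by rintro rfl; exact hij (ha.symm.trans hb)
      rw [V, norm_prod, ← Finset.prod_erase_mul _ _ (Finset.mem_univ (a, b))]
      simp only [hab, if_false, Function.comp_apply, ha, hb]
      gcongr
      calc ∏ p ∈ Finset.univ.erase (a, b), ‖if p.1 = p.2 then 1 else r (φ p.1) - r (φ p.2)‖
          ≤ ∏ p ∈ Finset.univ.erase (a, b), (2 : ℝ) := by
            refine Finset.prod_le_prod (fun _ _ => norm_nonneg _) fun p _ => ?_
            split_ifs
            · simp
            · exact (norm_sub_le _ _).trans (by linarith [hr (φ p.1), hr (φ p.2)])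
        _ ≤ 2 ^ (k * k) := by
            rw [Finset.prod_const]
            refine pow_le_pow_right₀ one_le_two ((Finset.card_le_univ _).trans ?_)
            simp
    · rw [not_not.1 (mt V_ne_zero.1 hφ), norm_zero]
      positivity
  calc ‖gdisc k r‖ ≤ ∑ φ : Fin k → Fin d, 2 ^ (k * k) * ‖r i - r j‖ :=
        (norm_sum_le _ _).trans (Finset.sum_le_sum fun φ _ => hV φ)
    _ = _ := by simp [mul_assoc]

end gdisc

/-! ### Hölder domination -/

/-- `Dom l u ε` says that `u` is bounded along `l` by a constant times some positive power
of `|ε|`. -/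
def Dom {X F : Type*} [Norm F] (l : Filter X) (u : X → F) (ε : X → ℝ) : Prop :=
  ∃ θ : ℝ, 0 < θ ∧ u =O[l] fun p => |ε p| ^ θ

namespace Dom

variable {X Y F G : Type*} [NormedAddCommGroup F] [NormedAddCommGroup G] {l : Filter X}
  {u : X → F} {v : X → G} {ε δ : X → ℝ}

lemma of_isBigO (huv : u =O[l] v) (h : Dom l v ε) : Dom l u ε :=
  let ⟨θ, hθ, h⟩ := h
  ⟨θ, hθ, huv.trans h⟩

lemma refl (ε : X → ℝ) : Dom l ε ε :=
  ⟨1, one_pos, by simpa using (Asymptotics.isBigO_refl ε l).norm_right⟩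

lemma trans (h1 : Dom l u δ) (h2 : Dom l δ ε) : Dom l u ε := by
  obtain ⟨θ, hθ, h1⟩ := h1
  obtain ⟨η, hη, h2⟩ := h2
  refine ⟨η * θ, by positivity, h1.trans ?_⟩
  have := h2.norm_left.rpow hθ.le (Eventually.of_forall fun p => by simp; positivity)
  refine this.congr (fun p => rfl) fun p => ?_
  rw [← Real.rpow_mul (abs_nonneg _)]

lemma of_isBigO_right (h : Dom l u δ) (hδ : δ =O[l] ε) : Dom l u ε :=
  h.trans (of_isBigO hδ (refl ε))

lemma tendsto (h : Dom l u ε) (hε : Tendsto ε l (𝓝 0)) : Tendsto u l (𝓝 0) := by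
  obtain ⟨θ, hθ, h⟩ := h
  refine h.trans_tendsto ?_
  have := (hε.abs).rpow_const (p := θ) (Or.inr hθ.le)
  simpa [Real.zero_rpow hθ.ne'] using this

lemma add {u v : X → F} (hu : Dom l u ε) (hv : Dom l v ε) (hε : Tendsto ε l (𝓝 0)) :
    Dom l (fun p => u p + v p) ε := by
  obtain ⟨θ, hθ, hu⟩ := hu
  obtain ⟨η, hη, hv⟩ := hv
  have key : ∀ a b : ℝ, 0 < a → a ≤ b → (fun p => |ε p| ^ b) =O[l] fun p => |ε p| ^ a := by
    intro a b ha hab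
    refine Asymptotics.IsBigO.of_bound 1 ?_
    have hε' : Tendsto (fun p => |ε p|) l (𝓝 0) := by simpa using hε.abs
    filter_upwards [hε'.eventually (gt_mem_nhds one_pos)] with p hp
    rw [one_mul, Real.norm_of_nonneg (by positivity), Real.norm_of_nonneg (by positivity)]
    rcases (abs_nonneg (ε p)).eq_or_lt with h0 | h0
    · rw [← h0, Real.zero_rpow (by linarith), Real.zero_rpow ha.ne']
    · exact Real.rpow_le_rpow_of_exponent_ge h0 hp.le hab
  exact ⟨min θ η, lt_min hθ hη, (hu.trans (key _ _ (lt_min hθ hη) (min_le_left _ _))).add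
    (hv.trans (key _ _ (lt_min hθ hη) (min_le_right _ _)))⟩

lemma of_pow {d : ℕ} (hd : d ≠ 0) (h : Dom l (fun p => ‖u p‖ ^ d) ε) : Dom l u ε := by
  refine trans ⟨(d : ℝ)⁻¹, by positivity, ?_⟩ h
  refine Asymptotics.IsBigO.of_bound 1 (Eventually.of_forall fun p => ?_)
  rw [abs_of_nonneg (by positivity), Real.pow_rpow_inv_natCast (norm_nonneg _) hd]
  simp

lemma comp_tendsto (h : Dom l u ε) {l' : Filter Y} {φ : Y → X} (hφ : Tendsto φ l' l) :
    Dom l' (u ∘ φ) (ε ∘ φ) :=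
  let ⟨θ, hθ, h⟩ := h
  ⟨θ, hθ, h.comp_tendsto hφ⟩

end Dom

/-- The local Łojasiewicz inequality at the origin: the distance to the zero set of `f` is bounded
by a power of `|f|`; `z` selects a zero near each point. -/
def LojAt {E : Type*} [NormedAddCommGroup E] (f : E → ℝ) : Prop :=
  ∃ z : E → E, (∀ᶠ x in 𝓝 0, f (z x) = 0) ∧ Dom (𝓝 0) (fun x => x - z x) f

section LojAt

variable {E F : Type*} [NormedAddCommGroup E] [NormedAddCommGroup F]

lemma LojAt.of_eventually_zero {f : E → ℝ} (hf : ∀ᶠ x in 𝓝 0, f x = 0) : LojAt f :=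
  ⟨id, hf, 1, one_pos, by simpa using Asymptotics.isBigO_zero _ _⟩

lemma LojAt.tendsto {f : E → ℝ} {z : E → E} (h : Dom (𝓝 0) (fun x => x - z x) f)
    (hf : Tendsto f (𝓝 0) (𝓝 0)) : Tendsto z (𝓝 0) (𝓝 0) := by
  have h1 : Tendsto (fun x : E => x - (x - z x)) (𝓝 0) (𝓝 (0 - 0)) :=
    tendsto_id.sub (h.tendsto hf)
  simpa using h1

/-- The inequality passes from `f` to any function bounding it whose zeros include those of `f`. -/
lemma LojAt.of_le {f g : E → ℝ} (h : LojAt f) (hf : Tendsto f (𝓝 0) (𝓝 0)) (hfg : f =O[𝓝 0] g)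
    (hz : ∀ᶠ x in 𝓝 0, f x = 0 → g x = 0) : LojAt g := by
  obtain ⟨z, hz1, hz2⟩ := h
  refine ⟨z, ?_, hz2.of_isBigO_right hfg⟩
  filter_upwards [hz1, (LojAt.tendsto hz2 hf).eventually hz] with x h1 h2 using h2 h1

lemma LojAt.of_comp_equiv [NormedSpace ℝ E] [NormedSpace ℝ F] {f : F → ℝ}
    (e : E ≃L[ℝ] F) (h : LojAt (f ∘ e)) : LojAt f := by
  obtain ⟨z, hz1, hz2⟩ := h
  have ht : Tendsto e.symm (𝓝 0) (𝓝 0) := by simpa using e.symm.continuous.tendsto 0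
  refine ⟨fun y => e (z (e.symm y)), ht.eventually hz1, ?_⟩
  have h1 := hz2.comp_tendsto ht
  have h2 : (f ∘ e) ∘ e.symm = f := by ext y; simp
  rw [h2] at h1
  refine Dom.of_isBigO ?_ h1
  refine ((e : E →L[ℝ] F).isBigO_comp ((fun x => x - z x) ∘ e.symm) (𝓝 0)).congr_left fun y => ?_
  simp

end LojAt

/-! ### Zeros of monic polynomials with analytic coefficients -/

lemma exists_disc_zero {d k : ℕ} {D : (Fin d → ℝ) → ℝ} (hk : 2 ≤ k)
    (hD : ∀ (c : Fin d → ℝ) (r : Fin d → ℂ), poly c = ∏ i, (Polynomial.X - Polynomial.C (r i)) →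
      (D c : ℂ) = gdisc k r) : D 0 = 0 := by
  have h := hD 0 0 (by simp [poly])
  rw [← Complex.ofReal_eq_zero, h, gdisc]
  refine Finset.sum_eq_zero fun φ _ => ?_
  by_contra hne
  have := V_ne_zero.1 hne (a₁ := ⟨0, by omega⟩) (a₂ := ⟨1, by omega⟩) rfl
  simp at this

/-- Let `w` be a non-real root. If the polynomial has at most `k` distinct roots, then its `k`-th
generalized discriminant is bounded by the imaginary part of `w`, because `w` and its conjugate are
two distinct roots. -/
lemma abs_disc_le {d k : ℕ} {D : ℕ → (Fin d → ℝ) → ℝ}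
    (hD : ∀ k (c : Fin d → ℝ) (r : Fin d → ℂ),
      poly c = ∏ i, (Polynomial.X - Polynomial.C (r i)) → (D k c : ℂ) = gdisc k r)
    {c : Fin d → ℝ} (hc : ∑ i, |c i| < 1) (h0 : ∀ j, k < j → j ≤ d → D j c = 0) {w : ℂ}
    (hw : (poly c).eval w = 0) (him : w.im ≠ 0) (y : ℝ) :
    |D k c| ≤ (d ^ k * 2 ^ (k * k) : ℕ) * (2 * ‖w - y‖) := by
  obtain ⟨r, hr⟩ := exists_roots c
  obtain ⟨i, hi⟩ := (eval_eq_zero_iff c hr _).1 hw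
  obtain ⟨j, hj⟩ := (eval_eq_zero_iff c hr _).1
    (show (poly c).eval (starRingEnd ℂ w) = 0 by rw [eval_poly_conj, hw, map_zero])
  have hcard := card_image_le (r := r) (k := k) fun j h1 h2 => by
    rw [← hD j c r hr, h0 j h1 h2, Complex.ofReal_zero]
  have hne : r i ≠ r j := by
    rw [hi, hj]
    exact fun h => him (Complex.conj_eq_iff_im.1 h.symm)
  have h1 := norm_gdisc_le hcard
    (fun i => norm_root_le_one c hc ((eval_eq_zero_iff c hr _).2 ⟨i, rfl⟩)) hne
  rw [← hD k c r hr, Complex.norm_real, Real.norm_eq_abs, hi, hj] at h1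
  refine h1.trans ?_
  gcongr
  have h2 : w - starRingEnd ℂ w = (w - y) - starRingEnd ℂ (w - y) := by simp
  rw [h2, two_mul]
  refine (norm_sub_le _ _).trans_eq ?_
  rw [Complex.norm_conj]

section descent

variable {E : Type*} [NormedAddCommGroup E] [NormedSpace ℝ E] {d : ℕ}

/-- Starting from the root of the given polynomial nearest to `y`, one moves step by step to
polynomials having fewer distinct roots, until the root is real. Since a non-real root near `y` is
close to its conjugate, the relevant discriminant is small, and the inductive hypothesis `IH` on the
parameter space provides a nearby parameter at which it vanishes. -/
lemma exists_root_descent (hd : 0 < d)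
    (IH : ∀ g : E → ℝ, AnalyticAt ℝ g 0 → g 0 = 0 → LojAt g)
    {a : E → Fin d → ℝ} (ha : AnalyticAt ℝ a 0) (ha0 : a 0 = 0) {D : ℕ → (Fin d → ℝ) → ℝ}
    (hDa : ∀ k c, AnalyticAt ℝ (D k) c)
    (hD : ∀ k (c : Fin d → ℝ) (r : Fin d → ℂ),
      poly c = ∏ i, (Polynomial.X - Polynomial.C (r i)) → (D k c : ℂ) = gdisc k r)
    {ε : E × ℝ → ℝ} (hε : ∀ p : E × ℝ, ε p = p.2 ^ d + ∑ i, a p.1 i * p.2 ^ (i : ℕ))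
    (hε0 : Tendsto ε (𝓝 0) (𝓝 0)) (k : ℕ) (hk : 1 ≤ k) (hkd : k ≤ d) :
    ∃ (X : E × ℝ → E) (R : E × ℝ → ℂ), Dom (𝓝 0) (fun p => p.1 - X p) ε ∧
      Dom (𝓝 0) (fun p => R p - p.2) ε ∧
      ∀ᶠ p in 𝓝 0, (poly (a (X p))).eval (R p) = 0 ∧
        ((R p).im = 0 ∨ ∀ j, k < j → j ≤ d → D j (a (X p)) = 0) := by
  classical
  choose ρ hρ1 hρ2 using fun (c : Fin d → ℝ) (w : ℂ) => exists_near_root c hd w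
  have hfst : Tendsto (fun p : E × ℝ => p.1) (𝓝 0) (𝓝 0) :=
    (continuous_fst (X := E) (Y := ℝ)).tendsto 0
  have hsnd : Tendsto (fun p : E × ℝ => p.2) (𝓝 0) (𝓝 0) :=
    (continuous_snd (X := E) (Y := ℝ)).tendsto 0
  induction hkd using Nat.decreasingInduction with
  | self =>
    refine ⟨fun p => p.1, fun p => ρ (a p.1) p.2, ?_, ?_, Eventually.of_forall fun p =>
      ⟨hρ1 _ _, Or.inr fun j h1 h2 => absurd h1 h2.not_gt⟩⟩
    · exact ⟨1, one_pos, by simpa using Asymptotics.isBigO_zero _ _⟩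
    · refine Dom.of_pow hd.ne' (Dom.of_isBigO ?_ (Dom.refl ε))
      refine Asymptotics.IsBigO.of_bound 1 (Eventually.of_forall fun p => ?_)
      have := hρ2 (a p.1) p.2
      rw [eval_poly_ofReal, Complex.norm_real, ← hε] at this
      simpa using this
  | of_succ k hkd ih =>
    obtain ⟨X, R, hX, hR, hXR⟩ := ih (by omega)
    have hXt : Tendsto X (𝓝 0) (𝓝 0) := by simpa using hfst.sub (hX.tendsto hε0)
    -- The common zeros of the discriminants of index larger than `k`, as the zeros of `g`.
    let g : E → ℝ := fun x => ∑ j ∈ Finset.Ioc k d, D j (a x) ^ 2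
    have hg : AnalyticAt ℝ g 0 := by
      refine Finset.analyticAt_fun_sum _ fun j _ => AnalyticAt.fun_pow ?_ 2
      exact (hDa j (a 0)).comp ha
    have hg0 : g 0 = 0 := by
      refine Finset.sum_eq_zero fun j hj => ?_
      have := (Finset.mem_Ioc.1 hj).1
      rw [ha0, exists_disc_zero (by omega) (hD j), zero_pow two_ne_zero]
    have hgz : ∀ {x}, g x = 0 → ∀ j, k < j → j ≤ d → D j (a x) = 0 := by
      intro x hx j h1 h2
      have := (Finset.sum_eq_zero_iff_of_nonneg fun j _ => sq_nonneg (D j (a x))).1 hx j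
        (Finset.mem_Ioc.2 ⟨h1, h2⟩)
      exact pow_eq_zero_iff two_ne_zero |>.1 this
    obtain ⟨z, hz, hzD⟩ := IH g hg hg0
    have hac : Tendsto (fun x => ∑ i, |a x i|) (𝓝 0) (𝓝 0) := by
      have h1 : ContinuousAt (fun x => ∑ i, |a x i|) 0 := by
        have h2 : Continuous fun c : Fin d → ℝ => ∑ i, |c i| :=
          continuous_finsetSum _ fun i _ => (continuous_apply i).abs
        exact h2.continuousAt.comp ha.continuousAt
      simpa [ContinuousAt, ha0] using h1
    have hsmall : ∀ᶠ p in 𝓝 0, ∑ i, |a (X p) i| < 1 :=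
      (hac.comp hXt).eventually (gt_mem_nhds one_pos)
    let w : E × ℝ → ℝ := fun p => if (R p).im = 0 then 0 else g (X p)
    let v : E × ℝ → E := fun p => if (R p).im = 0 then 0 else X p - z (X p)
    have hw : Dom (𝓝 0) w ε := by
      refine Dom.of_isBigO (Asymptotics.IsBigO.of_bound
        (((d ^ (k + 1) * 2 ^ ((k + 1) * (k + 1)) : ℕ) * 2) ^ 2) ?_) hR
      have hR1 : ∀ᶠ p in 𝓝 0, ‖R p - p.2‖ < 1 :=
        (tendsto_zero_iff_norm_tendsto_zero.1 (hR.tendsto hε0)).eventually (gt_mem_nhds one_pos)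
      filter_upwards [hXR, hsmall, hR1] with p ⟨h1, h2⟩ h3 h4
      simp only [w]
      split_ifs with him
      · rw [norm_zero]; positivity
      · have h5 := abs_disc_le hD h3 (h2.resolve_left him) h1 him p.2
        have h6 : g (X p) = D (k + 1) (a (X p)) ^ 2 := by
          refine Finset.sum_eq_single_of_mem (k + 1) (by simp; omega) fun j hj hne => ?_
          have := Finset.mem_Ioc.1 hj
          rw [h2.resolve_left him j (by omega) this.2, zero_pow two_ne_zero]
        rw [h6, norm_pow, Real.norm_eq_abs]
        refine (pow_le_pow_left₀ (abs_nonneg _) h5 2).trans ?_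
        rw [← mul_assoc, mul_pow]
        gcongr
        exact pow_le_of_le_one (norm_nonneg _) h4.le two_ne_zero
    have hv : Dom (𝓝 0) v ε := by
      refine Dom.trans ?_ hw
      obtain ⟨θ, hθ, h⟩ := hzD.comp_tendsto hXt
      obtain ⟨C, hC⟩ := h.bound
      refine ⟨θ, hθ, Asymptotics.IsBigO.of_bound C ?_⟩
      filter_upwards [hC] with p hp
      simp only [v, w]
      split_ifs with him
      · simp [Real.zero_rpow hθ.ne']
      · exact hp
    let X' : E × ℝ → E := fun p => X p - v p
    let R' : E × ℝ → ℂ := fun p => if (R p).im = 0 then R p else ρ (a (X' p)) (R p)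
    have hX' : Dom (𝓝 0) (fun p => p.1 - X' p) ε := by
      have := hX.add hv hε0
      refine Dom.of_isBigO (Asymptotics.isBigO_of_le _ fun p => ?_) this
      simp only [X']
      rw [← sub_add]
    have hXt' : Tendsto X' (𝓝 0) (𝓝 0) := by simpa using hfst.sub (hX'.tendsto hε0)
    have hlip : (fun p => a (X' p) - a (X p)) =O[𝓝 0] fun p => X' p - X p :=
      ha.hasStrictFDerivAt.isBigO_sub.comp_tendsto (hXt'.prodMk_nhds hXt)
    have hu : Dom (𝓝 0) (fun p => R' p - R p) ε := by
      refine Dom.of_pow hd.ne' (Dom.of_isBigO ?_ hv)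
      obtain ⟨C, hC⟩ := hlip.bound
      refine Asymptotics.IsBigO.of_bound (d * C) ?_
      filter_upwards [hC, hXR, hsmall] with p h1 ⟨h2, _⟩ h3
      have h4 : ‖X' p - X p‖ = ‖v p‖ := by simp [X']
      rw [h4] at h1
      simp only [R', norm_pow, norm_norm]
      split_ifs with him
      · have := (norm_nonneg _).trans h1
        rw [sub_self, norm_zero, zero_pow hd.ne', mul_assoc]
        positivity
      · refine (hρ2 _ _).trans ?_
        have h5 := norm_eval_sub_le (a (X' p)) (a (X p)) (norm_root_le_one _ h3 h2)
        rw [h2, sub_zero] at h5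
        refine h5.trans ?_
        rw [mul_assoc]
        calc ∑ i, |a (X' p) i - a (X p) i| ≤ ∑ _i : Fin d, C * ‖v p‖ :=
              Finset.sum_le_sum fun i _ => (norm_le_pi_norm (a (X' p) - a (X p)) i).trans h1
          _ = _ := by simp
    refine ⟨X', R', hX', ?_, ?_⟩
    · have := hR.add hu hε0
      refine Dom.of_isBigO (Asymptotics.isBigO_of_le _ fun p => le_of_eq ?_) this
      congr 1
      ring
    · filter_upwards [hXR, hXt.eventually hz] with p ⟨h1, h2⟩ h3
      by_cases him : (R p).im = 0
      · simp [X', R', v, him, h1]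
      · refine ⟨?_, Or.inr ?_⟩
        · simp only [R', if_neg him]
          exact hρ1 _ _
        · simp only [X', v, if_neg him, sub_sub_cancel]
          exact hgz h3

/-- The inductive step for monic polynomials: the inequality in the parameter space `E` gives the
inequality for such a polynomial on `E × ℝ`. -/
lemma lojAt_poly (hd : 0 < d)
    (IH : ∀ g : E → ℝ, AnalyticAt ℝ g 0 → g 0 = 0 → LojAt g)
    {a : E → Fin d → ℝ} (ha : AnalyticAt ℝ a 0) (ha0 : a 0 = 0)
    (hε0 : Tendsto (fun p : E × ℝ => p.2 ^ d + ∑ i, a p.1 i * p.2 ^ (i : ℕ)) (𝓝 0) (𝓝 0)) :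
    LojAt fun p : E × ℝ => p.2 ^ d + ∑ i, a p.1 i * p.2 ^ (i : ℕ) := by
  choose D hDa hD using exists_disc d
  obtain ⟨X, R, hX, hR, hXR⟩ := exists_root_descent hd IH ha ha0 hDa hD (fun p => rfl) hε0 1
    le_rfl hd
  refine ⟨fun p => (X p, (R p).re), ?_, ?_⟩
  · filter_upwards [hXR] with p ⟨h1, h2⟩
    have him : (R p).im = 0 := by
      rcases h2 with h2 | h2
      · exact h2
      -- A polynomial with a single root has a real one.
      obtain ⟨r, hr⟩ := exists_roots (a (X p))
      have hcard := card_image_le (r := r) (k := 1) fun j h3 h4 => by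
        rw [← hD j _ r hr, h2 j h3 h4, Complex.ofReal_zero]
      obtain ⟨i, hi⟩ := (eval_eq_zero_iff _ hr _).1 h1
      obtain ⟨j, hj⟩ := (eval_eq_zero_iff _ hr _).1
        (show (poly (a (X p))).eval (starRingEnd ℂ (R p)) = 0 by
          rw [eval_poly_conj, h1, map_zero])
      have h3 := Finset.card_le_one.1 hcard (r i) (by simp) (r j) (by simp)
      rw [hi, hj] at h3
      exact Complex.conj_eq_iff_im.1 h3.symm
    have hre : ((R p).re : ℂ) = R p := Complex.ext (by simp) (by simp [him])
    rw [← hre, eval_poly_ofReal] at h1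
    exact_mod_cast h1
  · have h1 : Dom (𝓝 0) (fun p : E × ℝ => ‖p.1 - X p‖)
        (fun p : E × ℝ => p.2 ^ d + ∑ i, a p.1 i * p.2 ^ (i : ℕ)) :=
      Dom.of_isBigO (Asymptotics.isBigO_of_le _ fun p => by simp) hX
    have h2 : Dom (𝓝 0) (fun p : E × ℝ => ‖R p - p.2‖)
        (fun p : E × ℝ => p.2 ^ d + ∑ i, a p.1 i * p.2 ^ (i : ℕ)) :=
      Dom.of_isBigO (Asymptotics.isBigO_of_le _ fun p => by simp) hR
    refine Dom.of_isBigO (Asymptotics.isBigO_of_le _ fun p => ?_) (h1.add h2 hε0)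
    rw [Real.norm_of_nonneg (by positivity)]
    refine (Prod.norm_def _).trans_le (max_le ?_ ?_)
    · simp
    · have := Complex.abs_re_le_norm (R p - p.2)
      rw [Prod.snd_sub, Real.norm_eq_abs, abs_sub_comm]
      simp only [Complex.sub_re, Complex.ofReal_re] at this
      exact this.trans (le_add_of_nonneg_left (norm_nonneg _))

end descent

/-! ### The inequality near a point -/

/-- An analytic function which is not identically zero near the origin is not identically zero on
some line through the origin. -/
lemma exists_direction {E : Type*} [NormedAddCommGroup E] [NormedSpace ℝ E] {f : E → ℝ}
    (hf : AnalyticAt ℝ f 0) (hne : ¬ ∀ᶠ x in 𝓝 0, f x = 0) :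
    ∃ v, ¬ ∀ᶠ t in 𝓝 (0 : ℝ), f (t • v) = 0 := by
  by_contra! hall
  apply hne
  obtain ⟨p, r, hp⟩ := hf
  obtain ⟨r', hr', hr'r⟩ := ENNReal.lt_iff_exists_nnreal_btwn.1 hp.r_pos
  have hball : Metric.ball (0 : E) r' ⊆ Metric.eball 0 r := by
    rw [← Metric.eball_coe]
    exact Metric.eball_subset_eball hr'r.le
  filter_upwards [Metric.ball_mem_nhds (0 : E) (by exact_mod_cast hr')] with v hv
  have hline : AnalyticOnNhd ℝ (fun t : ℝ => f (t • v)) (Icc 0 1) := by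
    intro t ht
    have h1 : AnalyticAt ℝ f (t • v) := by
      refine hp.analyticOnNhd _ (hball ?_)
      rw [mem_ball_zero_iff] at hv ⊢
      rw [norm_smul, Real.norm_of_nonneg ht.1]
      exact (mul_le_of_le_one_left (norm_nonneg _) ht.2).trans_lt hv
    exact AnalyticAt.fun_comp (g := f) (f := fun t : ℝ => t • v) h1
      (analyticAt_id.smul analyticAt_const)
  have := hline.eqOn_zero_of_preconnected_of_eventuallyEq_zero isPreconnected_Icc
    (show (0 : ℝ) ∈ Icc (0 : ℝ) 1 by simp) (hall v) (show (1 : ℝ) ∈ Icc (0 : ℝ) 1 by simp)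
  simpa using this

lemma lojAt_fin (n : ℕ) : ∀ f : (Fin n → ℝ) → ℝ, AnalyticAt ℝ f 0 → f 0 = 0 → LojAt f := by
  induction n with
  | zero =>
    intro f _ h0
    exact LojAt.of_eventually_zero (Eventually.of_forall fun x => by rw [Subsingleton.elim x 0, h0])
  | succ n ih =>
    intro f hf h0
    by_cases hne : ∀ᶠ x in 𝓝 0, f x = 0
    · exact LojAt.of_eventually_zero hne
    obtain ⟨v, hv⟩ := exists_direction hf hne
    have hv0 : v ≠ 0 := by
      rintro rfl
      exact hv (Eventually.of_forall fun t => by rw [smul_zero, h0])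
    -- Linear coordinates in which the last axis is the line spanned by `v`.
    obtain ⟨e, he⟩ : ∃ e : ((Fin n → ℝ) × ℝ) ≃L[ℝ] (Fin (n + 1) → ℝ), e (0, 1) = v := by
      let e₀ : ((Fin n → ℝ) × ℝ) ≃L[ℝ] (Fin (n + 1) → ℝ) :=
        ContinuousLinearEquiv.ofFinrankEq (by simp)
      obtain ⟨A, hA⟩ := SeparatingDual.exists_continuousLinearEquiv_apply_eq (R := ℝ)
        (x := e₀ (0, 1)) (y := v) (by simp) hv0
      exact ⟨e₀.trans A, hA⟩
    have hfe : AnalyticAt ℝ (f ∘ e) 0 := by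
      refine AnalyticAt.comp ?_ (e.toContinuousLinearMap.analyticAt 0)
      simpa using hf
    refine LojAt.of_comp_equiv e ?_
    obtain ⟨κ, d, a, C, hκ, hd, hC, ha, ha0, hev⟩ := exists_weierstrass hfe (by simp [h0]) (by
      convert hv using 4 with t
      rw [← he, ← map_smul]
      simp)
    let s : ((Fin n → ℝ) × ℝ) ≃L[ℝ] ((Fin n → ℝ) × ℝ) :=
      (ContinuousLinearEquiv.refl ℝ _).prodCongr
        (ContinuousLinearEquiv.unitsEquivAut ℝ (Units.mk0 κ hκ.ne'))
    have hs : ∀ p, s p = (p.1, κ * p.2) := fun p => by simp [s, mul_comm]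
    refine LojAt.of_comp_equiv s ?_
    have ha' : AnalyticAt ℝ (fun x i => a i x) 0 := analyticAt_pi_iff.2 ha
    have hlim : Tendsto (fun p : (Fin n → ℝ) × ℝ => p.2 ^ d + ∑ i, a i p.1 * p.2 ^ (i : ℕ))
        (𝓝 0) (𝓝 0) := by
      have hsum : ContinuousAt
          (fun p : (Fin n → ℝ) × ℝ => p.2 ^ d + ∑ i, a i p.1 * p.2 ^ (i : ℕ)) 0 := by
        refine ContinuousAt.add (by fun_prop) (tendsto_finsetSum _ fun i _ => ?_)
        exact ((ha i).continuousAt.comp (f := fun p : (Fin n → ℝ) × ℝ => p.1) (x := 0)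
          continuousAt_fst).mul (by fun_prop)
      simpa [ContinuousAt, ha0, hd.ne'] using hsum
    refine (lojAt_poly hd ih ha' (funext ha0) hlim).of_le hlim ?_ ?_
    · refine Asymptotics.IsBigO.of_bound C ?_
      filter_upwards [hev] with p hp
      simpa [hs] using hp.1
    · filter_upwards [hev] with p hp
      simpa [hs] using hp.2

/-! ### From local to global -/

/-- The inequality near a zero of `f`. Every exponent beyond some threshold is allowed, on one and
the same neighbourhood. -/
lemma exists_local {n : ℕ} {U : Set (EuclideanSpace ℝ (Fin n))} (hU : IsOpen U)
    {f : EuclideanSpace ℝ (Fin n) → ℝ} (hf : AnalyticOnNhd ℝ f U)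
    {x₀ : EuclideanSpace ℝ (Fin n)} (hx₀ : x₀ ∈ U) (h0 : f x₀ = 0) :
    ∃ (α₀ C : ℝ), ∀ᶠ x in 𝓝 x₀, ∀ α, α₀ ≤ α → ∃ z ∈ U, f z = 0 ∧ ‖x - z‖ ^ α ≤ C * |f x| := by
  let e := EuclideanSpace.equiv (Fin n) ℝ
  have hg : AnalyticAt ℝ (fun y => f (x₀ + e.symm y)) 0 := by
    refine AnalyticAt.fun_comp (g := f) (f := fun y => x₀ + e.symm y) ?_ ?_
    · simpa using hf x₀ hx₀
    · exact analyticAt_const.add (e.symm.toContinuousLinearMap.analyticAt 0)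
  have h1 : LojAt (fun y => f (x₀ + y)) := by
    refine LojAt.of_comp_equiv e.symm ?_
    exact lojAt_fin n _ hg (by simp [h0])
  obtain ⟨z, hz, hzD⟩ := h1
  have hlim : Tendsto (fun y => f (x₀ + y)) (𝓝 0) (𝓝 0) := by
    have : ContinuousAt (fun y => f (x₀ + y)) 0 :=
      ContinuousAt.comp (g := f) (by simpa using (hf x₀ hx₀).continuousAt) (by fun_prop)
    simpa [ContinuousAt, h0] using this
  have hzt := LojAt.tendsto hzD hlim
  have hdist : ∀ᶠ y in 𝓝 0, ‖y - z y‖ < 1 :=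
    (tendsto_zero_iff_norm_tendsto_zero.1 (hzD.tendsto hlim)).eventually (gt_mem_nhds one_pos)
  have hzU : ∀ᶠ y in 𝓝 0, x₀ + z y ∈ U := by
    have : Tendsto (fun y => x₀ + z y) (𝓝 0) (𝓝 x₀) := by simpa using hzt.const_add x₀
    exact this.eventually (hU.mem_nhds hx₀)
  obtain ⟨θ, hθ, hb⟩ := hzD
  obtain ⟨C, hC, hb⟩ := hb.exists_pos
  refine ⟨θ⁻¹, C ^ θ⁻¹, ?_⟩
  have hsub : Tendsto (fun x => x - x₀) (𝓝 x₀) (𝓝 0) := by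
    simpa using (continuous_sub_right x₀).tendsto x₀
  filter_upwards [hsub.eventually hz, hsub.eventually hdist, hsub.eventually hzU,
    hsub.eventually hb.bound] with x h1 h2 h3 h4 α hα
  have h5 : x - (x₀ + z (x - x₀)) = x - x₀ - z (x - x₀) := by abel
  refine ⟨x₀ + z (x - x₀), h3, h1, ?_⟩
  rw [h5]
  rw [add_sub_cancel, Real.norm_of_nonneg (by positivity)] at h4
  calc ‖x - x₀ - z (x - x₀)‖ ^ α ≤ ‖x - x₀ - z (x - x₀)‖ ^ θ⁻¹ :=
        Real.rpow_le_rpow_of_exponent_ge_of_imp (norm_nonneg _) h2.le hα fun _ h => by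
          exact absurd h ((inv_pos.2 hθ).trans_le hα).ne'
    _ ≤ (C * |f x| ^ θ) ^ θ⁻¹ := by gcongr
    _ = C ^ θ⁻¹ * |f x| := by
        rw [Real.mul_rpow hC.le (by positivity), Real.rpow_rpow_inv (abs_nonneg _) hθ.ne']

/-- The bound near an arbitrary point of `U`; where `f` does not vanish it is trivial. -/
lemma exists_local_iInf {n : ℕ} {U : Set (EuclideanSpace ℝ (Fin n))} (hU : IsOpen U)
    {f : EuclideanSpace ℝ (Fin n) → ℝ} (hf : AnalyticOnNhd ℝ f U)
    (hZ : {z ∈ U | f z = 0}.Nonempty) {x₀ : EuclideanSpace ℝ (Fin n)} (hx₀ : x₀ ∈ U) :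
    ∃ (α₀ : ℝ) (C : ℝ → ℝ), ∀ᶠ x in 𝓝 x₀, ∀ α, α₀ ≤ α →
      (⨅ z : {z ∈ U | f z = 0}, ‖x - (z : EuclideanSpace ℝ (Fin n))‖ ^ α) ≤ C α * |f x| := by
  have hbdd : ∀ (x : EuclideanSpace ℝ (Fin n)) (α : ℝ), BddBelow (Set.range
      fun z : {z ∈ U | f z = 0} => ‖x - (z : EuclideanSpace ℝ (Fin n))‖ ^ α) := fun x α =>
    ⟨0, by rintro _ ⟨z, rfl⟩; positivity⟩
  by_cases h0 : f x₀ = 0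
  · obtain ⟨α₀, C, h⟩ := exists_local hU hf hx₀ h0
    refine ⟨α₀, fun _ => C, ?_⟩
    filter_upwards [h] with x hx α hα
    obtain ⟨z, hzU, hz, hle⟩ := hx α hα
    exact ciInf_le_of_le (hbdd x α) ⟨z, hzU, hz⟩ hle
  · obtain ⟨z, hz⟩ := hZ
    refine ⟨0, fun α => (‖x₀ - z‖ + 1) ^ α / (|f x₀| / 2), ?_⟩
    have hpos : 0 < |f x₀| := abs_pos.2 h0
    have h1 : ∀ᶠ x in 𝓝 x₀, |f x₀| / 2 < |f x| :=
      (hf x₀ hx₀).continuousAt.abs.eventually (lt_mem_nhds (half_lt_self hpos))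
    have h2 : ContinuousAt (fun x => ‖x - z‖) x₀ := by fun_prop
    filter_upwards [h1, h2.eventually (gt_mem_nhds (lt_add_one _))] with x hx1 hx2 α hα
    refine ciInf_le_of_le (hbdd x α) ⟨z, hz⟩ ?_
    rw [div_mul_eq_mul_div, le_div_iff₀ (by positivity)]
    gcongr

end Loj

/-- Lojasiewicz inequality: if `f` is real analytic on an open set `U`,
`Z = {z ∈ U : f z = 0}` is nonempty and `K ⊆ U` is compact, then there are `α ≥ 2` and
`C > 0` with `inf_{z ∈ Z} |x − z|^α ≤ C |f x|` for all `x ∈ K`. -/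
theorem lojasiewicz_inequality
    {n : ℕ} {U : Set (EuclideanSpace ℝ (Fin n))} (hU : IsOpen U)
    (f : EuclideanSpace ℝ (Fin n) → ℝ) (hf : AnalyticOnNhd ℝ f U)
    (hZ : {z ∈ U | f z = 0}.Nonempty)
    (K : Set (EuclideanSpace ℝ (Fin n))) (hK : IsCompact K) (hKU : K ⊆ U) :
    ∃ (α C : ℝ), 2 ≤ α ∧ 0 < C ∧
      ∀ x ∈ K, (⨅ z : {z ∈ U | f z = 0}, ‖x - (z : EuclideanSpace ℝ (Fin n))‖ ^ α)
        ≤ C * |f x| := by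
  -- Allowing every exponent beyond a threshold makes the property stable under finite unions.
  have key : ∃ (α₀ : ℝ) (C : ℝ → ℝ), ∀ x ∈ K, ∀ α, α₀ ≤ α →
      (⨅ z : {z ∈ U | f z = 0}, ‖x - (z : EuclideanSpace ℝ (Fin n))‖ ^ α) ≤ C α * |f x| := by
    refine hK.induction_on (p := fun s => ∃ (α₀ : ℝ) (C : ℝ → ℝ), ∀ x ∈ s, ∀ α, α₀ ≤ α →
      (⨅ z : {z ∈ U | f z = 0}, ‖x - (z : EuclideanSpace ℝ (Fin n))‖ ^ α) ≤ C α * |f x|)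
      ?_ ?_ ?_ ?_
    · exact ⟨0, 0, fun x hx => absurd hx (Set.notMem_empty x)⟩
    · rintro s t hst ⟨α₀, C, h⟩
      exact ⟨α₀, C, fun x hx => h x (hst hx)⟩
    · rintro s t ⟨α₁, C₁, h₁⟩ ⟨α₂, C₂, h₂⟩
      refine ⟨max α₁ α₂, fun α => max (C₁ α) (C₂ α), fun x hx α hα => ?_⟩
      rcases hx with hx | hx
      · exact (h₁ x hx α ((le_max_left _ _).trans hα)).trans
          (mul_le_mul_of_nonneg_right (le_max_left _ _) (abs_nonneg _))
      · exact (h₂ x hx α ((le_max_right _ _).trans hα)).trans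
          (mul_le_mul_of_nonneg_right (le_max_right _ _) (abs_nonneg _))
    · intro x hx
      obtain ⟨α₀, C, h⟩ := Loj.exists_local_iInf hU hf hZ (hKU hx)
      exact ⟨_, mem_nhdsWithin_of_mem_nhds h, α₀, C, fun y hy => hy⟩
  obtain ⟨α₀, C, h⟩ := key
  refine ⟨max α₀ 2, max (C (max α₀ 2)) 1, le_max_right _ _, lt_max_of_lt_right one_pos,
    fun x hx => ?_⟩
  exact (h x hx _ (le_max_left _ _)).trans
    (mul_le_mul_of_nonneg_right (le_max_left _ _) (abs_nonneg _))
end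

section
/- (Lojasiewicz gradient inequality.) Let f be real analytic on an open set U ⊆ ℝⁿ and let z ∈ U be a critical point of f, i.e. ∇f(z) = 0. Then there exist an open neighborhood W ⊆ U of z and constants p > 1 and C > 0 such that for all x ∈ W one has |f(x) − f(z)| ≤ C · |∇f(x)|^p. -/
open Set

/-!
The proof replaces resolution of singularities by a local uniformization of `f` along an ultrafilter.

Suppose the inequality fails near `z` (with `f` not locally constant; the constant case is trivial).
Then there are points `x k → z` violating it with constant `k + 1` and exponent `1 + 1 / (k + 1)`.
Fix a nonprincipal ultrafilter on `ℕ`. By `Loj.lu` there is an analytic map germ `π` at the origin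
such that `f ∘ π - f z` is a monomial times a nonvanishing analytic function, and such that the `x k`
lift along `π` to points tending to the origin along the ultrafilter. For a monomial times a unit
the inequality is elementary (`Loj.NC.gradient_inequality`), and since `‖∇(f ∘ π)‖ ≤ M ‖(∇f) ∘ π‖` it
descends to the points `x k` with some fixed `p > 1` and `C`, a contradiction. Only one chart is needed
at each step, because the ultrafilter decides which chart of a blow-up contains the lifted points
and, by compactness, at which centre.

Local uniformization is proved by induction on the dimension. A nonzero germ has finite order `d`
along some line, which is made the last coordinate `t`. A Tschirnhaus transformation
(`Loj.exists_tschirnhaus`) brings the germ to the form `∑_{i < d - 1} c i (x) t ^ i + t ^ d U` with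
`U` a unit. Applying the induction hypothesis to the product of the coefficients and the coordinates,
then power substitutions and blow-ups of codimension two planes, one may assume that
`c i = v i * β ^ (d - i)` for one monomial `β`, with some `v i` a unit
(`Loj.exists_monomial_coeffs`). If `t / β` is bounded along the ultrafilter, substituting
`t = β (s + c)` and dividing by `β ^ d` leaves a germ of smaller order, since a polynomial with no term
of degree `d - 1` and other than `t ^ d` has no root of multiplicity `d`. If `t / β` is unbounded, `t`
divides `β` in a suitable chart, with a quotient vanishing at the origin, and the germ is `t ^ d` times
a unit (`Loj.res_weierstrass`). The monomials produced on the way factor without extra work because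
a divisor of a monomial is itself a monomial up to a unit (`Loj.NC.of_mul`).
-/

section
open Filter Topology

/-! ### Division by a linear form -/

namespace Loj

/-- Division by a linear form: `f` and its restriction to the hyperplane `l = 0` (along the
projection `P` in the direction `e`) differ by `l` times an analytic germ. Each homogeneous term of
`f v - f (P v)` telescopes: passing from `P v` to `v` in one slot of the multilinear map at a time,
each difference is linear in `v - P v = l v • e`. -/
theorem exists_div {V : Type*} [NormedAddCommGroup V] [NormedSpace ℝ V]
    (P : V →L[ℝ] V) (l : V →L[ℝ] ℝ) (e : V) (hP : ∀ v, v = P v + l v • e)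
    {f : V → ℝ} (hf : AnalyticAt ℝ f 0) :
    ∃ g : V → ℝ, AnalyticAt ℝ g 0 ∧ ∀ᶠ v in 𝓝 0, f v = f (P v) + l v * g v := by
  obtain ⟨p, hp⟩ := hf
  let B : (k : ℕ) → Fin (k + 1) → Fin (k + 1) → (V →L[ℝ] V) := fun k j i =>
    if i ≤ j then ContinuousLinearMap.id ℝ V else P
  let q : FormalMultilinearSeries ℝ V ℝ := fun k =>
    ∑ j : Fin (k + 1), ((p (k + 1)).compContinuousLinearMap (B k j)).curryMid j e
  set M : ℝ := max 1 ‖P‖ with hM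
  have hM1 : 1 ≤ M := le_max_left _ _
  have hB : ∀ k j i, ‖B k j i‖ ≤ M := by
    intro k j i
    by_cases h : i ≤ j
    · simp only [B, h, if_true]; exact ContinuousLinearMap.norm_id_le.trans hM1
    · simp only [B, h, if_false]; exact le_max_right _ _
  obtain ⟨C, r, hC, hr, hpb⟩ := p.le_mul_pow_of_radius_pos hp.radius_pos
  have hq : ∀ k, ‖q k‖ ≤ (C * r * M * ‖e‖) * (2 * (r * M)) ^ k := by
    intro k
    have h1 : ∀ j : Fin (k + 1),
        ‖((p (k + 1)).compContinuousLinearMap (B k j)).curryMid j e‖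
          ≤ C * r ^ (k + 1) * M ^ (k + 1) * ‖e‖ := by
      intro j
      refine (ContinuousLinearMap.le_opNorm _ _).trans ?_
      rw [ContinuousMultilinearMap.norm_curryMid]
      gcongr
      refine (ContinuousMultilinearMap.norm_compContinuousLinearMap_le _ _).trans ?_
      gcongr
      · exact hpb _
      · calc ∏ i, ‖B k j i‖ ≤ ∏ _i : Fin (k + 1), M :=
            Finset.prod_le_prod (fun _ _ => norm_nonneg _) (fun i _ => hB k j i)
          _ = _ := by simp
    calc ‖q k‖ ≤ ∑ j : Fin (k + 1), C * r ^ (k + 1) * M ^ (k + 1) * ‖e‖ :=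
          norm_sum_le_of_le _ (fun j _ => h1 j)
      _ = (k + 1 : ℝ) * (C * r ^ (k + 1) * M ^ (k + 1) * ‖e‖) := by simp
      _ ≤ (2 : ℝ) ^ k * (C * r ^ (k + 1) * M ^ (k + 1) * ‖e‖) := by
          gcongr
          have : k + 1 ≤ 2 ^ k := Nat.lt_two_pow_self
          exact_mod_cast this
      _ = _ := by rw [mul_pow, mul_pow]; ring
  have hrM : 0 < 2 * (r * M) := by positivity
  have hqr : 0 < q.radius := by
    let ρ : NNReal := ⟨(2 * (r * M))⁻¹, by positivity⟩
    have : (ρ : ENNReal) ≤ q.radius := by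
      refine q.le_radius_of_bound (C * r * M * ‖e‖) fun k => ?_
      calc ‖q k‖ * ((2 * (r * M))⁻¹) ^ k
          ≤ ((C * r * M * ‖e‖) * (2 * (r * M)) ^ k) * ((2 * (r * M))⁻¹) ^ k := by
            gcongr; exact hq k
        _ = _ := by rw [mul_assoc, ← mul_pow, mul_inv_cancel₀ hrM.ne', one_pow, mul_one]
    refine lt_of_lt_of_le ?_ this
    rw [ENNReal.coe_pos]
    exact inv_pos.2 hrM
  have hqs := q.hasFPowerSeriesOnBall hqr
  refine ⟨q.sum, hqs.analyticAt, ?_⟩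
  have key : ∀ k v, l v * q k (fun _ => v) = p (k + 1) (fun _ => v) - p (k + 1) (fun _ => P v) := by
    intro k v
    let a : ℕ → ℝ := fun j => p (k + 1) (fun i => if (i : ℕ) < j then v else P v)
    have h1 : ∀ j : Fin (k + 1), l v * (((p (k + 1)).compContinuousLinearMap (B k j)).curryMid j e)
        (fun _ => v) = a (j + 1) - a j := by
      intro j
      rw [ContinuousMultilinearMap.curryMid_apply,
        ContinuousMultilinearMap.compContinuousLinearMap_apply]
      let m : Fin (k + 1) → V := fun i => if (i : ℕ) < j then v else P v
      have e1 : (fun i => B k j i (j.insertNth (α := fun _ => V) e (fun _ => v) i))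
          = Function.update m j e := by
        ext i
        rcases lt_trichotomy i j with h | h | h
        · obtain ⟨i', rfl⟩ := Fin.exists_succAbove_eq h.ne
          rw [Fin.insertNth_apply_succAbove, Function.update_of_ne h.ne]
          have h2 : ((j.succAbove i' : Fin (k+1)) : ℕ) < j := h
          simp only [B, m, h.le, if_true, h2, ContinuousLinearMap.id_apply]
        · subst h; simp [B]
        · obtain ⟨i', rfl⟩ := Fin.exists_succAbove_eq h.ne'
          rw [Fin.insertNth_apply_succAbove, Function.update_of_ne h.ne']
          have h2 : ¬ ((j.succAbove i' : Fin (k+1)) : ℕ) < j := not_lt.2 (Fin.le_def.1 h.le)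
          simp only [B, m, not_le.2 h, if_false, h2]
      have e2 : (fun i : Fin (k + 1) => if (i : ℕ) < (j : ℕ) + 1 then v else P v)
          = Function.update m j v := by
        ext i
        rcases eq_or_ne i j with h | h
        · subst h; simp
        · rw [Function.update_of_ne h]
          have : ((i : ℕ) < j + 1) ↔ (i : ℕ) < j := by
            have := Fin.val_ne_of_ne h; omega
          simp [m, this]
      have e3 : m = Function.update m j (P v) := by
        ext i
        rcases eq_or_ne i j with h | h
        · subst h; simp [m]
        · rw [Function.update_of_ne h]
      change l v * p (k + 1) _ = p (k + 1) _ - p (k + 1) m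
      rw [e1, e2, ← smul_eq_mul, ← ContinuousMultilinearMap.map_update_smul]
      conv_rhs => rw [e3]
      rw [Function.update_idem, ← ContinuousMultilinearMap.map_update_sub]
      congr 2
      exact eq_sub_of_add_eq' (hP v).symm
    calc l v * q k (fun _ => v)
        = ∑ j : Fin (k + 1), (a (j + 1) - a j) := by
          simp only [q, _root_.sum_apply, Finset.mul_sum, h1]
      _ = ∑ j ∈ Finset.range (k + 1), (a (j + 1) - a j) :=
          Fin.sum_univ_eq_sum_range (fun j => a (j + 1) - a j) (k + 1)
      _ = a (k + 1) - a 0 := Finset.sum_range_sub _ _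
      _ = _ := by
          simp only [a]
          congr 3
          ext i; simp [i.2]
  have hPt : Tendsto P (𝓝 0) (𝓝 0) := by simpa using P.continuous.tendsto 0
  have hev := hp.eventually_hasSum
  have hev2 := hPt.eventually hp.eventually_hasSum
  have hev3 := hqs.hasFPowerSeriesAt.eventually_hasSum
  filter_upwards [hev, hev2, hev3] with v h1 h2 h3
  simp only [zero_add] at h1 h2 h3
  have h4 := h1.sub h2
  rw [hasSum_nat_add_iff' 1 |>.symm] at h4
  have h5 := h3.mul_left (l v)
  simp only [key] at h5
  have h6 := h4.unique h5
  have h7 : p 0 (fun _ => v) = p 0 (fun _ => P v) := by congr 1; ext i; exact i.elim0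
  simp [h7] at h6
  linarith

end Loj

/-! ### Analytic germs and monomials -/

namespace Loj

section germs
variable {V : Type*} [NormedAddCommGroup V] [NormedSpace ℝ V]

/-- The ring of analytic germs is a domain. -/
theorem eventuallyEq_zero_of_mul {f g : V → ℝ} (hf : AnalyticAt ℝ f 0) (hg : AnalyticAt ℝ g 0)
    (h : ∀ᶠ x in 𝓝 0, f x * g x = 0) : (∀ᶠ x in 𝓝 0, f x = 0) ∨ ∀ᶠ x in 𝓝 0, g x = 0 := by
  obtain ⟨r, hr, hball⟩ := Metric.eventually_nhds_iff_ball.1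
    (h.and (hf.eventually_analyticAt.and hg.eventually_analyticAt))
  by_cases hz : ∀ x ∈ Metric.ball (0 : V) r, f x = 0
  · left
    filter_upwards [Metric.ball_mem_nhds 0 hr] with x hx using hz x hx
  right
  push Not at hz
  obtain ⟨y, hy, hfy⟩ := hz
  have hgan : AnalyticOnNhd ℝ g (Metric.ball 0 r) := fun x hx => (hball x hx).2.2
  have hgy : g =ᶠ[𝓝 y] 0 := by
    filter_upwards [(hball y hy).2.1.continuousAt.eventually_ne hfy,
      Metric.isOpen_ball.mem_nhds hy] with x hx1 hx2
    exact (mul_eq_zero.1 (hball x hx2).1).resolve_left hx1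
  have := hgan.eqOn_zero_of_preconnected_of_eventuallyEq_zero
    (convex_ball (0 : V) r).isPreconnected hy hgy
  filter_upwards [Metric.ball_mem_nhds 0 hr] with x hx using this hx

/-- A nonzero germ is nonzero along some line through the origin. -/
theorem exists_line {f : V → ℝ} (hf : AnalyticAt ℝ f 0) (h : ¬ ∀ᶠ x in 𝓝 0, f x = 0) :
    ∃ v : V, ¬ ∀ᶠ t : ℝ in 𝓝 0, f (t • v) = 0 := by
  by_contra! hc
  apply h
  obtain ⟨r, hr, hball⟩ := Metric.eventually_nhds_iff_ball.1 hf.eventually_analyticAt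
  filter_upwards [Metric.ball_mem_nhds 0 hr] with v hv
  let S : Set ℝ := (fun t : ℝ => t • v) ⁻¹' Metric.ball 0 r
  have hS : IsPreconnected S := by
    have : Convex ℝ S := (convex_ball (0 : V) r).linear_preimage
      ((LinearMap.id : ℝ →ₗ[ℝ] ℝ).smulRight v)
    exact this.isPreconnected
  have han : AnalyticOnNhd ℝ (fun t : ℝ => f (t • v)) S := by
    intro t ht
    have h1 : AnalyticAt ℝ (fun t : ℝ => t • v) t := by fun_prop
    exact AnalyticAt.fun_comp (f := fun t : ℝ => t • v) (hball _ ht) h1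
  have := han.eqOn_zero_of_preconnected_of_eventuallyEq_zero hS
    (show (0 : ℝ) ∈ S by simp [S, hr]) (hc v)
  have h1 := this (show (1 : ℝ) ∈ S by simpa [S] using hv)
  simpa using h1

end germs

/-- The monomial `x ^ α` on `ℝⁿ`. -/
def mono {n : ℕ} (α : Fin n → ℕ) (x : Fin n → ℝ) : ℝ := ∏ i, x i ^ α i

/-- `f` is, near the origin, the monomial `x ^ α` times an analytic function that does not vanish
at the origin. -/
def NC {n : ℕ} (α : Fin n → ℕ) (f : (Fin n → ℝ) → ℝ) : Prop :=
  ∃ u : (Fin n → ℝ) → ℝ, AnalyticAt ℝ u 0 ∧ u 0 ≠ 0 ∧ ∀ᶠ x in 𝓝 0, f x = u x * mono α x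

section nc
variable {n : ℕ}

theorem mono_zero (x : Fin n → ℝ) : mono 0 x = 1 := by simp [mono]

theorem mono_add (α β : Fin n → ℕ) (x : Fin n → ℝ) : mono (α + β) x = mono α x * mono β x := by
  simp [mono, pow_add, Finset.prod_mul_distrib]

theorem mono_nsmul (k : ℕ) (α : Fin n → ℕ) (x : Fin n → ℝ) : mono (k • α) x = mono α x ^ k := by
  simp only [mono, ← Finset.prod_pow, ← pow_mul]
  simp [mul_comm]

theorem mono_single (i : Fin n) (x : Fin n → ℝ) : mono (Pi.single i 1) x = x i := by
  rw [mono, Finset.prod_eq_single i]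
  · simp
  · intro j _ hj; simp [Pi.single_eq_of_ne hj]
  · simp

theorem analyticAt_mono (α : Fin n → ℕ) (x : Fin n → ℝ) : AnalyticAt ℝ (mono α) x := by
  unfold mono
  apply Finset.analyticAt_fun_prod
  intro i _
  exact ((ContinuousLinearMap.proj (R := ℝ) (φ := fun _ : Fin n => ℝ) i).analyticAt x).pow _

theorem NC.congr {α : Fin n → ℕ} {f g : (Fin n → ℝ) → ℝ} (h : NC α f)
    (hfg : ∀ᶠ x in 𝓝 0, g x = f x) : NC α g := by
  obtain ⟨u, h1, h2, h3⟩ := h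
  exact ⟨u, h1, h2, by filter_upwards [h3, hfg] with x a b; rw [b, a]⟩

theorem NC.mono (α : Fin n → ℕ) : NC α (mono α) :=
  ⟨fun _ => 1, analyticAt_const, one_ne_zero, by simp⟩

theorem NC.unit {u : (Fin n → ℝ) → ℝ} (h : AnalyticAt ℝ u 0) (h0 : u 0 ≠ 0) : NC 0 u :=
  ⟨u, h, h0, by simp [mono_zero]⟩

theorem NC.mul {α β : Fin n → ℕ} {f g : (Fin n → ℝ) → ℝ} (hf : NC α f) (hg : NC β g) :
    NC (α + β) (fun x => f x * g x) := by
  obtain ⟨u, h1, h2, h3⟩ := hf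
  obtain ⟨v, k1, k2, k3⟩ := hg
  refine ⟨fun x => u x * v x, h1.mul k1, mul_ne_zero h2 k2, ?_⟩
  filter_upwards [h3, k3] with x a b
  rw [a, b, mono_add]; ring

theorem NC.pow {α : Fin n → ℕ} {f : (Fin n → ℝ) → ℝ} (hf : NC α f) (k : ℕ) :
    NC (k • α) (fun x => f x ^ k) := by
  obtain ⟨u, h1, h2, h3⟩ := hf
  refine ⟨fun x => u x ^ k, h1.pow k, pow_ne_zero k h2, ?_⟩
  filter_upwards [h3] with x a
  rw [a, mono_nsmul]; ring

theorem NC.prod {ι : Type*} (s : Finset ι) {α : ι → Fin n → ℕ} {f : ι → (Fin n → ℝ) → ℝ}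
    (hf : ∀ i ∈ s, NC (α i) (f i)) : NC (∑ i ∈ s, α i) (fun x => ∏ i ∈ s, f i x) := by
  classical
  induction s using Finset.induction_on with
  | empty => simpa using NC.unit (n := n) (u := fun _ => 1) analyticAt_const one_ne_zero
  | insert a s ha ih =>
    rw [Finset.sum_insert ha]
    simp only [Finset.prod_insert ha]
    exact (hf a (by simp)).mul (ih fun i hi => hf i (by simp [hi]))

/-- Pull-back of exponents along a map whose `j`-th component has exponent `a j`. -/
def pull {m : ℕ} (a : Fin n → Fin m → ℕ) (α : Fin n → ℕ) : Fin m → ℕ := ∑ j, α j • a j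

/-- Composing with a map whose components are monomials up to units preserves monomials up to
units. -/
theorem NC.comp {m : ℕ} {α : Fin n → ℕ} {f : (Fin n → ℝ) → ℝ} (hf : NC α f)
    {ψ : (Fin m → ℝ) → Fin n → ℝ} {a : Fin n → Fin m → ℕ} (hψ : AnalyticAt ℝ ψ 0) (h0 : ψ 0 = 0)
    (ha : ∀ j, NC (a j) (fun w => ψ w j)) : NC (pull a α) (fun w => f (ψ w)) := by
  obtain ⟨u, h1, h2, h3⟩ := hf
  have hm : NC (pull a α) (fun w => Loj.mono α (ψ w)) :=
    NC.prod _ fun j _ => (ha j).pow (α j)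
  have hu : NC 0 (fun w => u (ψ w)) := NC.unit (AnalyticAt.fun_comp (h0 ▸ h1) hψ) (by rwa [h0])
  have ht : Tendsto ψ (𝓝 0) (𝓝 0) := by simpa [h0] using hψ.continuousAt.tendsto
  have := (hu.mul hm).congr (ht.eventually h3)
  simpa using this

theorem not_eventually_coord (i : Fin n) : ¬ ∀ᶠ x : Fin n → ℝ in 𝓝 0, x i = 0 := by
  intro h
  have ht : Tendsto (fun t : ℝ => (Pi.single i t : Fin n → ℝ)) (𝓝 0) (𝓝 0) := by
    have : Continuous (fun t : ℝ => (Pi.single i t : Fin n → ℝ)) :=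
      continuous_single (A := fun _ : Fin n => ℝ) i
    simpa using this.tendsto 0
  have h1 := ht.eventually h
  simp only [Pi.single_eq_same] at h1
  obtain ⟨r, hr, hb⟩ := Metric.eventually_nhds_iff_ball.1 h1
  have := hb (r / 2) (by simp [abs_of_pos hr, hr])
  linarith

theorem analyticAt_coord (i : Fin n) (x : Fin n → ℝ) : AnalyticAt ℝ (fun x : Fin n → ℝ => x i) x :=
  (ContinuousLinearMap.proj (R := ℝ) (φ := fun _ : Fin n => ℝ) i).analyticAt x

/-- Up to units, the only divisors of a monomial are monomials. -/
theorem NC.of_mul {α : Fin n → ℕ} {f g : (Fin n → ℝ) → ℝ} (hf : AnalyticAt ℝ f 0)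
    (hg : AnalyticAt ℝ g 0) (h : NC α (fun x => f x * g x)) : ∃ β, NC β f := by
  classical
  induction hN : ∑ i, α i generalizing α f g with
  | zero =>
    have hα : α = 0 := by
      ext i
      exact (Finset.sum_eq_zero_iff.1 hN) i (Finset.mem_univ i)
    subst hα
    obtain ⟨u, h1, h2, h3⟩ := h
    have := h3.self_of_nhds
    simp only [mono_zero, mul_one] at this
    exact ⟨0, NC.unit hf (fun hc => h2 (by rw [← this, hc, zero_mul]))⟩
  | succ N ih =>
    obtain ⟨i, hi⟩ : ∃ i, α i ≠ 0 := by
      by_contra! hc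
      simp [hc] at hN
    let α' := α - Pi.single i 1
    have hle : Pi.single i 1 ≤ α := by
      intro j
      rcases eq_or_ne j i with rfl | hj
      · simpa using Nat.one_le_iff_ne_zero.2 hi
      · simp [Pi.single_eq_of_ne hj]
    have hα' : Pi.single i 1 + α' = α := by rw [add_comm]; exact tsub_add_cancel_of_le hle
    have hN' : ∑ j, α' j = N := by
      have : ∑ j, (Pi.single i 1 + α' : Fin n → ℕ) j = N + 1 := by rw [hα', hN]
      simp only [Pi.add_apply, Finset.sum_add_distrib, Finset.sum_pi_single', Finset.mem_univ,
        if_true] at this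
      omega
    obtain ⟨u, h1, h2, h3⟩ := h
    let l : (Fin n → ℝ) →L[ℝ] ℝ := ContinuousLinearMap.proj i
    let P : (Fin n → ℝ) →L[ℝ] (Fin n → ℝ) := ContinuousLinearMap.id ℝ _ -
      l.smulRight (Pi.single i (1 : ℝ))
    have hPl : ∀ v, v = P v + l v • (Pi.single i (1 : ℝ) : Fin n → ℝ) := by intro v; simp [P]
    have hPi : ∀ v, P v i = 0 := by intro v; simp [P, l]
    have hP0 : Tendsto P (𝓝 0) (𝓝 0) := by simpa using P.continuous.tendsto 0
    have hm : ∀ x, Loj.mono α x = x i * Loj.mono α' x := by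
      intro x; rw [← hα', mono_add, mono_single]
    have hz : ∀ᶠ x in 𝓝 0, f (P x) * g (P x) = 0 := by
      filter_upwards [hP0.eventually h3] with x hx
      rw [hx, hm, hPi]; ring
    have hfP : AnalyticAt ℝ (fun x => f (P x)) 0 :=
      AnalyticAt.fun_comp (by simpa using hf) (P.analyticAt 0)
    have hgP : AnalyticAt ℝ (fun x => g (P x)) 0 :=
      AnalyticAt.fun_comp (by simpa using hg) (P.analyticAt 0)
    have cancel : ∀ k : (Fin n → ℝ) → ℝ, AnalyticAt ℝ k 0 →
        (∀ᶠ x in 𝓝 0, x i * k x = u x * Loj.mono α x) → NC α' k := by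
      intro k hk hkx
      have h4 : AnalyticAt ℝ (fun x => k x - u x * Loj.mono α' x) 0 :=
        hk.sub (h1.mul (analyticAt_mono _ _))
      rcases eventuallyEq_zero_of_mul (analyticAt_coord i 0) h4 (by
        filter_upwards [hkx] with x hx
        rw [hm] at hx; linear_combination hx) with h5 | h5
      · exact absurd h5 (not_eventually_coord i)
      · exact ⟨u, h1, h2, by filter_upwards [h5] with x hx; linarith⟩
    rcases eventuallyEq_zero_of_mul hfP hgP hz with h4 | h4
    · obtain ⟨f', hf', he⟩ := exists_div P l _ hPl hf
      have he' : ∀ᶠ x in 𝓝 0, f x = x i * f' x := by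
        filter_upwards [he, h4] with x a b
        rw [a, b, zero_add]; rfl
      obtain ⟨β, hβ⟩ := ih hf' hg (cancel (fun x => f' x * g x) (hf'.mul hg) (by
        filter_upwards [h3, he'] with x a b
        rw [← a, b]; ring)) hN'
      refine ⟨Pi.single i 1 + β, (((NC.mono (Pi.single i 1)).mul hβ)).congr ?_⟩
      filter_upwards [he'] with x hx
      rw [hx, mono_single]
    · obtain ⟨g', hg', he⟩ := exists_div P l _ hPl hg
      have he' : ∀ᶠ x in 𝓝 0, g x = x i * g' x := by
        filter_upwards [he, h4] with x a b
        rw [a, b, zero_add]; rfl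
      exact ih hf hg' (cancel (fun x => f x * g' x) (hf.mul hg') (by
        filter_upwards [h3, he'] with x a b
        rw [← a, b]; ring)) hN'

end nc
end Loj

/-! ### Charts, power substitutions and blow-ups -/

namespace Loj

/-- For a family of points `X` tending to the origin along the ultrafilter `𝓤`: `π` is an analytic
map germ at the origin, and `Y` is a lift of `X` along `π` that still tends to the origin. -/
structure Chart {ι V W : Type*} [NormedAddCommGroup V] [NormedSpace ℝ V]
    [NormedAddCommGroup W] [NormedSpace ℝ W] (𝓤 : Ultrafilter ι) (X : ι → V) (π : W → V)
    (Y : ι → W) : Prop where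
  analytic : AnalyticAt ℝ π 0
  map_zero : π 0 = 0
  tendsto : Tendsto Y 𝓤 (𝓝 0)
  lift : ∀ᶠ i in 𝓤, π (Y i) = X i

/-- A chart between spaces `ℝⁿ` all of whose components are monomials up to units; the `j`-th
component has exponent `a j`. -/
structure MonoChart {ι : Type*} {n m : ℕ} (𝓤 : Ultrafilter ι) (X : ι → Fin n → ℝ)
    (ψ : (Fin m → ℝ) → Fin n → ℝ) (Y : ι → Fin m → ℝ) (a : Fin n → Fin m → ℕ) : Prop
    extends Chart 𝓤 X ψ Y where
  nc : ∀ j, NC (a j) (fun w => ψ w j)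

section
variable {ι : Type*} {𝓤 : Ultrafilter ι}

theorem Chart.comp {V W Z : Type*} [NormedAddCommGroup V] [NormedSpace ℝ V]
    [NormedAddCommGroup W] [NormedSpace ℝ W] [NormedAddCommGroup Z] [NormedSpace ℝ Z]
    {X : ι → V} {π : W → V} {Y : ι → W} {ρ : Z → W} {T : ι → Z}
    (h : Chart 𝓤 X π Y) (k : Chart 𝓤 Y ρ T) : Chart 𝓤 X (fun z => π (ρ z)) T where
  analytic := AnalyticAt.fun_comp (k.map_zero ▸ h.analytic) k.analytic
  map_zero := by rw [k.map_zero, h.map_zero]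
  tendsto := k.tendsto
  lift := by
    filter_upwards [h.lift, k.lift] with i h1 h2
    rw [h2, h1]

theorem Chart.tendsto_zero {V W : Type*} [NormedAddCommGroup V] [NormedSpace ℝ V]
    [NormedAddCommGroup W] [NormedSpace ℝ W] {X : ι → V} {π : W → V} {Y : ι → W}
    (h : Chart 𝓤 X π Y) : Tendsto π (𝓝 0) (𝓝 0) := by
  simpa [h.map_zero] using h.analytic.continuousAt.tendsto

theorem pull_apply {n m : ℕ} (a : Fin n → Fin m → ℕ) (α : Fin n → ℕ) (i : Fin m) :
    pull a α i = ∑ j, α j * a j i := by simp [pull]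

theorem pull_mono {n m : ℕ} (a : Fin n → Fin m → ℕ) {α β : Fin n → ℕ} (h : α ≤ β) :
    pull a α ≤ pull a β := by
  intro i
  rw [pull_apply, pull_apply]
  exact Finset.sum_le_sum fun j _ => Nat.mul_le_mul_right _ (h j)

theorem pull_nsmul {n m : ℕ} (a : Fin n → Fin m → ℕ) (k : ℕ) (α : Fin n → ℕ) :
    pull a (k • α) = k • pull a α := by
  ext i
  simp [pull_apply, Finset.mul_sum, mul_assoc]

theorem pull_pull {n m l : ℕ} (a : Fin n → Fin m → ℕ) (b : Fin m → Fin l → ℕ) (α : Fin n → ℕ) :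
    pull (fun j => pull b (a j)) α = pull b (pull a α) := by
  ext i
  simp only [pull_apply, Finset.mul_sum, Finset.sum_mul]
  rw [Finset.sum_comm]
  simp [mul_assoc]

theorem pull_single {n : ℕ} (m : Fin n → ℕ) (α : Fin n → ℕ) :
    pull (fun k => m k • Pi.single k 1) α = fun k => α k * m k := by
  ext i
  rw [pull_apply, Finset.sum_eq_single i]
  · simp
  · intro j _ hj; simp [Pi.single_eq_of_ne hj.symm]
  · simp

theorem MonoChart.comp {n m l : ℕ} {X : ι → Fin n → ℝ}
    {ψ : (Fin m → ℝ) → Fin n → ℝ} {Y : ι → Fin m → ℝ} {a : Fin n → Fin m → ℕ}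
    {φ : (Fin l → ℝ) → Fin m → ℝ} {Z : ι → Fin l → ℝ} {b : Fin m → Fin l → ℕ}
    (h : MonoChart 𝓤 X ψ Y a) (k : MonoChart 𝓤 Y φ Z b) :
    MonoChart 𝓤 X (fun z => ψ (φ z)) Z (fun j => pull b (a j)) where
  toChart := h.toChart.comp k.toChart
  nc j := (h.nc j).comp k.analytic k.map_zero k.nc

theorem MonoChart.refl {n : ℕ} {X : ι → Fin n → ℝ} (hX : Tendsto X 𝓤 (𝓝 0)) :
    MonoChart 𝓤 X id X (fun k => Pi.single k 1) where
  analytic := analyticAt_id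
  map_zero := rfl
  tendsto := hX
  lift := by simp
  nc j := (NC.mono _).congr (by simp [mono_single])

theorem pull_refl {n : ℕ} (α : Fin n → ℕ) : pull (fun k => Pi.single k 1) α = α := by
  simpa using pull_single (fun _ => 1) α

/-- A bounded real family converges along an ultrafilter. This provides the centres of all
blow-ups. -/
theorem exists_lim {r : ι → ℝ} {M : ℝ} (h : ∀ᶠ i in 𝓤, |r i| ≤ M) :
    ∃ c, Tendsto r 𝓤 (𝓝 c) := by
  have := (isCompact_Icc (a := -M) (b := M)).ultrafilter_le_nhds (𝓤.map r) (by
    rw [Filter.le_principal_iff]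
    change ∀ᶠ i in 𝓤, r i ∈ Icc (-M) M
    filter_upwards [h] with i hi using abs_le.1 hi)
  obtain ⟨c, _, hc⟩ := this
  exact ⟨c, hc⟩

/-- The substitution `x k = ± w k ^ m k`. The points lift because each coordinate has a constant sign
along the ultrafilter. -/
theorem exists_power {n : ℕ} {X : ι → Fin n → ℝ} (hX : Tendsto X 𝓤 (𝓝 0)) (m : Fin n → ℕ)
    (hm : ∀ k, m k ≠ 0) : ∃ (ψ : (Fin n → ℝ) → Fin n → ℝ) (Y : ι → Fin n → ℝ),
      MonoChart 𝓤 X ψ Y (fun k => m k • Pi.single k 1) := by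
  have hs : ∀ k, ∃ σ : ℝ, σ ≠ 0 ∧ ∀ᶠ i in 𝓤, X i k = σ * |X i k| := by
    intro k
    rcases 𝓤.em (fun i => 0 ≤ X i k) with h | h
    · exact ⟨1, one_ne_zero, by filter_upwards [h] with i hi; rw [abs_of_nonneg hi, one_mul]⟩
    · refine ⟨-1, by norm_num, ?_⟩
      filter_upwards [h] with i hi
      rw [abs_of_neg (not_le.1 hi)]; ring
  choose σ hσ hXσ using hs
  refine ⟨fun w k => σ k * w k ^ m k, fun i k => |X i k| ^ ((m k : ℝ)⁻¹), ⟨⟨?_, ?_, ?_, ?_⟩, ?_⟩⟩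
  · rw [analyticAt_pi_iff]
    intro k
    exact analyticAt_const.mul ((analyticAt_coord k 0).pow _)
  · ext k; simp [hm k]
  · rw [tendsto_pi_nhds] at hX ⊢
    intro k
    have hp : 0 < ((m k : ℝ)⁻¹) := inv_pos.2 (by exact_mod_cast Nat.pos_of_ne_zero (hm k))
    have h1 := (hX k).abs.rpow_const (p := (m k : ℝ)⁻¹) (Or.inr hp.le)
    simpa [Real.zero_rpow hp.ne'] using h1
  · filter_upwards [Filter.eventually_all.2 hXσ] with i hi
    ext k
    rw [Real.rpow_inv_natCast_pow (abs_nonneg _) (hm k), ← hi k]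
  · intro k
    refine ⟨fun _ => σ k, analyticAt_const, hσ k, ?_⟩
    simp only [mono_nsmul, mono_single, eventually_true]

/-- One blow-up of the codimension two plane `x i = x j = 0`, centred at the limit of the ratio
`x i / x j`. The new exponent of the `j`-th coordinate is the sum of the old ones over `{i, j}`, so
that two monomials with equal sums acquire equal exponents there, and equality of exponents at other
coordinates is not destroyed. -/
theorem exists_blowup {n : ℕ} {X : ι → Fin n → ℝ} (hX : Tendsto X 𝓤 (𝓝 0)) {i j : Fin n}
    (hij : i ≠ j) (hle : ∀ᶠ k in 𝓤, |X k i| ≤ |X k j|) (α β : Fin n → ℕ)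
    (hs : α i + α j = β i + β j) :
    ∃ (ψ : (Fin n → ℝ) → Fin n → ℝ) (Y : ι → Fin n → ℝ) (a : Fin n → Fin n → ℕ),
      MonoChart 𝓤 X ψ Y a ∧ pull a α j = pull a β j ∧
        ∀ k, α k = β k → pull a α k = pull a β k := by
  obtain ⟨c, hc⟩ := exists_lim (𝓤 := 𝓤) (r := fun k => X k i / X k j) (M := 1) (by
    filter_upwards [hle] with k hk
    rw [abs_div]; exact div_le_one_of_le₀ hk (abs_nonneg _))
  let ψ : (Fin n → ℝ) → Fin n → ℝ := fun w => Function.update w i ((w i + c) * w j)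
  let Y : ι → Fin n → ℝ := fun k => Function.update (X k) i (X k i / X k j - c)
  let ai : Fin n → ℕ := if c = 0 then Pi.single i 1 + Pi.single j 1 else Pi.single j 1
  let a : Fin n → Fin n → ℕ := Function.update (fun k => Pi.single k 1) i ai
  have hpull : ∀ γ : Fin n → ℕ, ∀ k, pull a γ k
      = γ i * ai k + if k = i then 0 else γ k := by
    intro γ k
    rw [pull_apply, ← Finset.add_sum_erase _ _ (Finset.mem_univ i)]
    congr 1
    · simp [a]
    · have : ∀ l ∈ Finset.univ.erase i, γ l * a l k = if l = k then γ k else 0 := by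
        intro l hl
        simp only [a, Function.update_of_ne (Finset.ne_of_mem_erase hl)]
        by_cases h : l = k
        · subst h; simp
        · simp [h, Pi.single_eq_of_ne (Ne.symm h)]
      rw [Finset.sum_congr rfl this]
      simp only [Finset.sum_ite_eq', Finset.mem_erase, Finset.mem_univ, and_true]
      by_cases h : k = i <;> simp [h]
  refine ⟨ψ, Y, a, ⟨⟨?_, ?_, ?_, ?_⟩, ?_⟩, ?_, ?_⟩
  · rw [analyticAt_pi_iff]
    intro k
    by_cases h : k = i
    · subst h
      simp only [ψ, Function.update_self]
      exact ((analyticAt_coord _ _).add analyticAt_const).mul (analyticAt_coord _ _)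
    · simp only [ψ, Function.update_of_ne h]
      exact analyticAt_coord _ _
  · ext k
    by_cases h : k = i
    · subst h; simp [ψ]
    · simp [ψ, Function.update_of_ne h]
  · rw [tendsto_pi_nhds] at hX ⊢
    intro k
    by_cases h : k = i
    · subst h
      simpa [Y] using hc.sub_const c
    · simpa [Y, Function.update_of_ne h] using hX k
  · filter_upwards [hle] with l hl
    ext k
    by_cases h : k = i
    · subst h
      simp only [ψ, Y, Function.update_self, Function.update_of_ne hij.symm, sub_add_cancel]
      by_cases hz : X l j = 0
      · have : X l k = 0 := by simpa [hz] using hl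
        simp [hz, this]
      · exact div_mul_cancel₀ _ hz
    · simp [ψ, Y, Function.update_of_ne h]
  · intro k
    by_cases h : k = i
    · subst h
      simp only [ψ, a, Function.update_self, ai]
      have h1 : NC (Pi.single j 1) (fun w : Fin n → ℝ => w j) :=
        (NC.mono (Pi.single j 1)).congr (by simp [mono_single])
      split_ifs with h0
      · have h2 : NC (Pi.single k 1) (fun w : Fin n → ℝ => w k + c) :=
          (NC.mono (Pi.single k 1)).congr (by simp [mono_single, h0])
        exact h2.mul h1
      · have h2 : NC 0 (fun w : Fin n → ℝ => w k + c) :=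
          NC.unit ((analyticAt_coord _ _).add analyticAt_const) (by simpa using h0)
        simpa using h2.mul h1
    · simp only [ψ, a, Function.update_of_ne h]
      exact (NC.mono (Pi.single k 1)).congr (by simp [mono_single])
  · have h1 : ai j = 1 := by
      simp only [ai]; split_ifs <;> simp [Pi.single_eq_of_ne hij.symm]
    simp only [hpull, h1, hij.symm, if_false]
    omega
  · intro k hk
    simp only [hpull]
    by_cases h : k = i
    · subst h; simp [hk]
    · by_cases h2 : k = j
      · subst h2
        have : α i = β i := by omega
        simp [this, hk]
      · have h3 : ai k = 0 := by
          simp only [ai]; split_ifs <;> simp [Pi.single_eq_of_ne h, Pi.single_eq_of_ne h2]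
        simp [h3, h, hk]

/-- Two monomials become comparable for divisibility after power substitutions and blow-ups.
If `α i > β i` and `α j < β j`, a power substitution makes the two excesses equal, and one blow-up
then decreases the number of coordinates in which the exponents differ. -/
theorem exists_toric {n : ℕ} {X : ι → Fin n → ℝ} (hX : Tendsto X 𝓤 (𝓝 0)) (α β : Fin n → ℕ) :
    ∃ (ψ : (Fin n → ℝ) → Fin n → ℝ) (Y : ι → Fin n → ℝ) (a : Fin n → Fin n → ℕ),
      MonoChart 𝓤 X ψ Y a ∧ (pull a α ≤ pull a β ∨ pull a β ≤ pull a α) := by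
  classical
  induction hN : (Finset.univ.filter fun k => α k ≠ β k).card using Nat.strong_induction_on
    generalizing X α β with
  | _ N ih =>
  by_cases h1 : α ≤ β
  · exact ⟨id, X, _, MonoChart.refl hX, Or.inl (by simpa only [pull_refl] using h1)⟩
  by_cases h2 : β ≤ α
  · exact ⟨id, X, _, MonoChart.refl hX, Or.inr (by simpa only [pull_refl] using h2)⟩
  simp only [Pi.le_def, not_forall, not_le] at h1 h2
  obtain ⟨i, hi⟩ := h1
  obtain ⟨j, hj⟩ := h2
  have hij : i ≠ j := by rintro rfl; omega
  -- after this substitution the two excesses `α i - β i` and `β j - α j` become equal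
  let m : Fin n → ℕ := fun k => if k = i then β j - α j else if k = j then α i - β i else 1
  have hm : ∀ k, m k ≠ 0 := by
    intro k; simp only [m]; split_ifs <;> omega
  obtain ⟨ψ, Y, hψ⟩ := exists_power hX m hm
  let α' : Fin n → ℕ := fun k => α k * m k
  let β' : Fin n → ℕ := fun k => β k * m k
  have hmi : m i = β j - α j := by simp [m]
  have hmj : m j = α i - β i := by simp [m, hij.symm]
  have hsum : α' i + α' j = β' i + β' j := by
    simp only [α', β', hmi, hmj]
    zify [hi.le, hj.le]; ring
  have hne : ∀ k, α' k = β' k ↔ α k = β k := fun k =>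
    ⟨fun h => Nat.eq_of_mul_eq_mul_right (Nat.pos_of_ne_zero (hm k)) h,
      fun h => by simp [α', β', h]⟩
  have fin : ∀ l, α l ≠ β l → (∃ (φ : (Fin n → ℝ) → Fin n → ℝ) (Z : ι → Fin n → ℝ)
      (b : Fin n → Fin n → ℕ), MonoChart 𝓤 Y φ Z b ∧ pull b α' l = pull b β' l ∧
        ∀ k, α' k = β' k → pull b α' k = pull b β' k) →
      ∃ (ψ : (Fin n → ℝ) → Fin n → ℝ) (Y : ι → Fin n → ℝ) (a : Fin n → Fin n → ℕ),
      MonoChart 𝓤 X ψ Y a ∧ (pull a α ≤ pull a β ∨ pull a β ≤ pull a α) := by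
    rintro l hl ⟨φ, Z, b, hφ, h3, h4⟩
    obtain ⟨θ, T, d, hθ, h5⟩ := ih _ (by
      rw [← hN]
      apply Finset.card_lt_card
      refine Finset.ssubset_iff_subset_ne.2 ⟨?_, ?_⟩
      · intro k hk
        simp only [Finset.mem_filter, Finset.mem_univ, true_and] at hk ⊢
        exact fun hc => hk (h4 k ((hne k).2 hc))
      · intro hc
        have : l ∈ Finset.univ.filter fun k => α k ≠ β k := by simpa using hl
        rw [← hc] at this
        exact (Finset.mem_filter.1 this).2 h3) hφ.tendsto (pull b α') (pull b β') rfl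
    refine ⟨_, _, _, (hψ.comp hφ).comp hθ, ?_⟩
    simpa only [pull_pull, pull_single] using h5
  -- which of the two blow-up charts contains the lift depends on the ratio of the coordinates
  rcases 𝓤.em (fun k => |Y k i| ≤ |Y k j|) with h | h
  · exact fin j hj.ne (exists_blowup hψ.tendsto hij h α' β' hsum)
  · refine fin i hi.ne' (exists_blowup hψ.tendsto hij.symm ?_ α' β' (by omega))
    filter_upwards [h] with k hk using (not_le.1 hk).le

/-- Among finitely many monomials, one divides all the others after a suitable chart. -/
theorem exists_toric_min {n : ℕ} {X : ι → Fin n → ℝ} (hX : Tendsto X 𝓤 (𝓝 0)) {κ : Type*}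
    (s : Finset κ) (hs : s.Nonempty) (α : κ → Fin n → ℕ) :
    ∃ (ψ : (Fin n → ℝ) → Fin n → ℝ) (Y : ι → Fin n → ℝ) (a : Fin n → Fin n → ℕ),
      MonoChart 𝓤 X ψ Y a ∧ ∃ k ∈ s, ∀ l ∈ s, pull a (α k) ≤ pull a (α l) := by
  classical
  induction hs using Finset.Nonempty.cons_induction with
  | singleton k =>
    exact ⟨id, X, _, MonoChart.refl hX, k, by simp, by simp⟩
  | cons k s hk hs ih =>
    obtain ⟨ψ, Y, a, hψ, l, hl, hmin⟩ := ih
    obtain ⟨φ, Z, b, hφ, h⟩ := exists_toric hψ.tendsto (pull a (α k)) (pull a (α l))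
    refine ⟨_, _, _, hψ.comp hφ, ?_⟩
    simp only [pull_pull]
    rcases h with h | h
    · refine ⟨k, by simp, fun p hp => ?_⟩
      rcases Finset.mem_cons.1 hp with rfl | hp
      · exact le_rfl
      · exact h.trans (pull_mono b (hmin p hp))
    · refine ⟨l, by simp [hl], fun p hp => ?_⟩
      rcases Finset.mem_cons.1 hp with rfl | hp
      · exact h
      · exact pull_mono b (hmin p hp)

end
end Loj

/-! ### Taylor expansion and Tschirnhaus transformation -/

namespace Loj

theorem iteratedDeriv_of_taylor {q u : ℝ → ℝ} {c : ℕ → ℝ} {d : ℕ} (hu : AnalyticAt ℝ u 0)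
    (hq : ∀ᶠ t in 𝓝 0, q t = ∑ i ∈ Finset.range d, c i * t ^ i + t ^ d * u t) :
    (∀ i < d, iteratedDeriv i q 0 = i.factorial * c i) ∧
      iteratedDeriv d q 0 = d.factorial * u 0 := by
  have key : ∀ i, i ≤ d → iteratedDeriv i q 0 =
      (if i < d then i.factorial * c i else 0) + if i = d then d.factorial * u 0 else 0 := by
    intro i hi
    rw [Filter.EventuallyEq.iteratedDeriv_eq i hq, iteratedDeriv_fun_add
      (AnalyticAt.contDiffAt (by fun_prop)) (AnalyticAt.contDiffAt (by fun_prop)),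
      iteratedDeriv_fun_sum (fun _ _ => AnalyticAt.contDiffAt (by fun_prop)),
      iteratedDeriv_fun_mul (AnalyticAt.contDiffAt (by fun_prop)) hu.contDiffAt]
    congr 1
    · simp only [iteratedDeriv_const_mul_field, iteratedDeriv_fun_pow_zero]
      simp [mul_comm]
    · simp only [iteratedDeriv_fun_pow_zero]
      split_ifs with h
      · subst h
        rw [Finset.sum_eq_single i]
        · simp
        · intro k hk hki; simp [hki]
        · simp
      · refine Finset.sum_eq_zero fun k hk => ?_
        have : k ≠ d := by have := Finset.mem_range.1 hk; omega
        simp [this]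
  refine ⟨fun i hi => by rw [key i hi.le]; simp [hi, hi.ne], by rw [key d le_rfl]; simp⟩

theorem eventually_slice {V : Type*} [NormedAddCommGroup V] {P : V × ℝ → Prop} (h : ∀ᶠ p in 𝓝 0, P p) :
    ∀ᶠ x in 𝓝 (0 : V), ∀ᶠ t in 𝓝 (0 : ℝ), P (x, t) := by
  rw [← Prod.mk_zero_zero, nhds_prod_eq] at h
  exact h.curry

variable {V : Type*} [NormedAddCommGroup V] [NormedSpace ℝ V]

theorem deriv_snd {f : V × ℝ → ℝ} {p : V × ℝ} (hf : AnalyticAt ℝ f p) :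
    deriv (fun s => f (p.1, s)) p.2 = fderiv ℝ f p (0, 1) := by
  have h1 : HasFDerivAt f (fderiv ℝ f p) (p.1, p.2) := hf.differentiableAt.hasFDerivAt
  have h2 : HasDerivAt (fun s : ℝ => (p.1, s)) ((0 : V), (1 : ℝ)) p.2 :=
    (hasDerivAt_const _ _).prodMk (hasDerivAt_id _)
  exact (h1.comp_hasDerivAt p.2 h2).deriv

theorem analyticAt_iteratedDeriv_snd {f : V × ℝ → ℝ} {q : V × ℝ} (hf : AnalyticAt ℝ f q) (k : ℕ) :
    AnalyticAt ℝ (fun p : V × ℝ => iteratedDeriv k (fun s => f (p.1, s)) p.2) q := by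
  induction k with
  | zero => simpa using hf
  | succ k ih =>
    have h1 : AnalyticAt ℝ (fun p : V × ℝ => fderiv ℝ
      (fun p : V × ℝ => iteratedDeriv k (fun s => f (p.1, s)) p.2) p (0, 1)) q :=
      (ContinuousLinearMap.analyticAt (ContinuousLinearMap.apply ℝ ℝ ((0 : V), (1 : ℝ))) _).fun_comp
        ih.fderiv
    refine h1.congr ?_
    filter_upwards [ih.eventually_analyticAt] with p hp
    rw [iteratedDeriv_succ, ← deriv_snd hp]

/-- Taylor expansion in the last variable with analytic coefficients and remainder, by repeated
division by that variable. -/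
theorem exists_taylor {f : V × ℝ → ℝ} (hf : AnalyticAt ℝ f 0) (d : ℕ) :
    ∃ (c : ℕ → V → ℝ) (U : V × ℝ → ℝ), (∀ i, AnalyticAt ℝ (c i) 0) ∧ AnalyticAt ℝ U 0 ∧
      ∀ᶠ p in 𝓝 0, f p = ∑ i ∈ Finset.range d, c i p.1 * p.2 ^ i + p.2 ^ d * U p := by
  induction d generalizing f with
  | zero => exact ⟨fun _ _ => 0, f, fun _ => analyticAt_const, hf, by simp⟩
  | succ d ih =>
    let P : V × ℝ →L[ℝ] V × ℝ :=
      (ContinuousLinearMap.inl ℝ V ℝ).comp (ContinuousLinearMap.fst ℝ V ℝ)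
    obtain ⟨g, hg, hfg⟩ := exists_div P (ContinuousLinearMap.snd ℝ V ℝ) ((0 : V), (1 : ℝ))
      (fun v => by ext <;> simp [P]) hf
    obtain ⟨c, U, hc, hU, h⟩ := ih hg
    refine ⟨fun i => match i with | 0 => fun x => f (x, 0) | i + 1 => c i, U, ?_, hU, ?_⟩
    · intro i
      cases i with
      | zero =>
        exact AnalyticAt.fun_comp (f := fun x : V => (x, (0 : ℝ))) (by exact hf)
          ((ContinuousLinearMap.inl ℝ V ℝ).analyticAt 0)
      | succ i => exact hc i
    · filter_upwards [hfg, h] with p h1 h2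
      rw [h1, h2, Finset.sum_range_succ', mul_add, Finset.mul_sum]
      simp only [P, ContinuousLinearMap.comp_apply, ContinuousLinearMap.inl_apply,
        ContinuousLinearMap.coe_fst', ContinuousLinearMap.coe_snd', pow_succ]
      have : ∀ i, p.2 * (c i p.1 * p.2 ^ i) = c i p.1 * (p.2 ^ i * p.2) := fun i => by ring
      simp only [this]
      ring

theorem exists_implicit [CompleteSpace V] {h : V × ℝ → ℝ} (hh : AnalyticAt ℝ h 0)
    (h0 : h 0 = 0) (h1 : fderiv ℝ h 0 (0, 1) ≠ 0) :
    ∃ φ : V → ℝ, AnalyticAt ℝ φ 0 ∧ φ 0 = 0 ∧ ∀ᶠ x in 𝓝 0, h (x, φ x) = 0 := by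
  have cd : ContDiffAt ℝ ⊤ h 0 := hh.contDiffAt
  have inv : (fderiv ℝ h 0 ∘L .inr ℝ V ℝ).IsInvertible := by
    set a := fderiv ℝ h 0 (0, 1) with ha
    refine ⟨ContinuousLinearEquiv.unitsEquivAut ℝ (Units.mk0 a h1), ?_⟩
    ext
    simp [ha]
  refine ⟨cd.implicitFunction (by simp) inv, ?_, ?_, ?_⟩
  · exact (cd.contDiffAt_implicitFunction (by simp) inv).analyticAt
  · exact cd.implicitFunction_apply_self (by simp) inv
  · have := cd.eventually_apply_implicitFunction (by simp) inv
    simpa [h0] using this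

/-- Tschirnhaus transformation. If `g (0, t)` has order exactly `D + 1` in `t`, a shift of `t` by an
analytic function of the other variables removes the coefficient of `t ^ D`. The shift is the
solution `t = φ x` of `∂ᴰg / ∂tᴰ = 0` given by the implicit function theorem. -/
theorem exists_tschirnhaus [CompleteSpace V] {g : V × ℝ → ℝ} (hg : AnalyticAt ℝ g 0) {D : ℕ}
    (h0 : ∀ k < D + 1, iteratedDeriv k (fun t => g (0, t)) 0 = 0)
    (h1 : iteratedDeriv (D + 1) (fun t => g (0, t)) 0 ≠ 0) :
    ∃ (φ : V → ℝ) (c : ℕ → V → ℝ) (U : V × ℝ → ℝ), AnalyticAt ℝ φ 0 ∧ φ 0 = 0 ∧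
      (∀ i, AnalyticAt ℝ (c i) 0) ∧ (∀ i < D, c i 0 = 0) ∧ AnalyticAt ℝ U 0 ∧ U 0 ≠ 0 ∧
      ∀ᶠ p : V × ℝ in 𝓝 0, g (p.1, p.2 + φ p.1) =
        ∑ i ∈ Finset.range D, c i p.1 * p.2 ^ i + p.2 ^ (D + 1) * U p := by
  set h : V × ℝ → ℝ := fun p => iteratedDeriv D (fun s => g (p.1, s)) p.2 with hdef
  have hh : AnalyticAt ℝ h 0 := analyticAt_iteratedDeriv_snd hg D
  obtain ⟨φ, hφ, hφ0, himp⟩ := exists_implicit hh (h0 D (by omega)) (by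
    rw [← deriv_snd hh]
    simpa only [hdef, Prod.fst_zero, Prod.snd_zero, ← iteratedDeriv_succ] using h1)
  have hρ : AnalyticAt ℝ (fun p : V × ℝ => (p.1, p.2 + φ p.1)) 0 :=
    analyticAt_fst.prod (analyticAt_snd.add (AnalyticAt.fun_comp (by simpa using hφ) analyticAt_fst))
  have hg1 : AnalyticAt ℝ (fun p : V × ℝ => g (p.1, p.2 + φ p.1)) 0 :=
    AnalyticAt.fun_comp (by simpa [hφ0, ← Prod.zero_eq_mk] using hg) hρ
  obtain ⟨c, U, hc, hU, he⟩ := exists_taylor hg1 (D + 1)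
  have hUs : ∀ᶠ x in 𝓝 (0 : V), AnalyticAt ℝ (fun t => U (x, t)) 0 := by
    have h2 : Tendsto (fun x : V => (x, (0 : ℝ))) (𝓝 0) (𝓝 0) := by
      exact (ContinuousLinearMap.inl ℝ V ℝ).continuous.tendsto 0
    filter_upwards [h2.eventually hU.eventually_analyticAt] with x hx
    exact AnalyticAt.fun_comp (f := fun t : ℝ => (x, t)) hx (analyticAt_const.prod analyticAt_id)
  have hs : ∀ᶠ x in 𝓝 (0 : V),
      (∀ i < D + 1, iteratedDeriv i (fun t => g (x, t)) (φ x) = i.factorial * c i x) ∧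
      iteratedDeriv (D + 1) (fun t => g (x, t)) (φ x) = (D + 1).factorial * U (x, 0) := by
    filter_upwards [hUs, eventually_slice he] with x h2 h3
    have := iteratedDeriv_of_taylor h2 h3
    have h4 : ∀ k, iteratedDeriv k (fun t => g (x, t + φ x)) 0
        = iteratedDeriv k (fun t => g (x, t)) (φ x) := fun k => by
      simpa using congrFun (iteratedDeriv_comp_add_const k (fun t => g (x, t)) (φ x)) 0
    simpa only [h4] using this
  have hs0 := hs.self_of_nhds
  rw [hφ0] at hs0
  refine ⟨φ, c, U, hφ, hφ0, hc, ?_, hU, ?_, ?_⟩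
  · intro i hi
    have := hs0.1 i (by omega)
    rw [h0 i (by omega)] at this
    simpa [Nat.factorial_ne_zero] using this.symm
  · intro hc
    rw [hs0.2] at h1
    apply h1
    rw [← Prod.mk_zero_zero] at hc
    rw [hc, mul_zero]
  · have hcD : ∀ᶠ x in 𝓝 (0 : V), c D x = 0 := by
      filter_upwards [hs, himp] with x h2 h3
      have := h2.1 D (by omega)
      simp only [hdef] at h3
      rw [h3] at this
      simpa [Nat.factorial_ne_zero] using this.symm
    have hfst : Tendsto (fun p : V × ℝ => p.1) (𝓝 0) (𝓝 0) := continuous_fst.tendsto 0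
    filter_upwards [he, hfst.eventually hcD] with p h2 h3
    rw [h2, Finset.sum_range_succ, h3, zero_mul, add_zero]

/-- A polynomial `u t ^ (D + 1) + v_{D-1} t ^ (D - 1) + ⋯` without term of degree `D` has order at
most `D` at every point `c`, unless it is `u t ^ (D + 1)`. Indeed its `D`-th derivative is a nonzero
multiple of `t`, so that only `c = 0` could have order `D + 1`. -/
theorem exists_order_le {v : ℕ → ℝ} {c u : ℝ} {D i₀ : ℕ} (hu : u ≠ 0) (hi : i₀ < D)
    (hv : v i₀ ≠ 0) {q : ℝ → ℝ}
    (hq : ∀ᶠ s in 𝓝 0, q s = ∑ i ∈ Finset.range D, v i * (s + c) ^ i + (s + c) ^ (D + 1) * u) :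
    ∃ e ≤ D, (∀ k < e, iteratedDeriv k q 0 = 0) ∧ iteratedDeriv e q 0 ≠ 0 := by
  classical
  by_cases hex : ∃ e ≤ D, iteratedDeriv e q 0 ≠ 0
  · obtain ⟨e, heD, he⟩ := hex
    have hex' : ∃ e, iteratedDeriv e q 0 ≠ 0 := ⟨e, he⟩
    exact ⟨Nat.find hex', (Nat.find_min' hex' he).trans heD,
      fun k hk => not_not.1 (Nat.find_min hex' hk), Nat.find_spec hex'⟩
  push Not at hex
  exfalso
  let Q : ℝ → ℝ := fun s => ∑ i ∈ Finset.range D, v i * s ^ i + s ^ (D + 1) * u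
  have hqQ : ∀ k, iteratedDeriv k q 0 = iteratedDeriv k Q c := by
    intro k
    rw [Filter.EventuallyEq.iteratedDeriv_eq k hq]
    have := congrFun (iteratedDeriv_comp_add_const k Q c) 0
    simpa [Q] using this
  have hD := hex D le_rfl
  rw [hqQ, iteratedDeriv_fun_add (AnalyticAt.contDiffAt (by fun_prop))
    (AnalyticAt.contDiffAt (by fun_prop)),
    iteratedDeriv_fun_sum (fun _ _ => AnalyticAt.contDiffAt (by fun_prop))] at hD
  have hz : ∑ i ∈ Finset.range D, iteratedDeriv D (fun s => v i * s ^ i) c = 0 := by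
    refine Finset.sum_eq_zero fun i hi => ?_
    rw [iteratedDeriv_const_mul_field, iteratedDeriv_pow,
      Nat.descFactorial_eq_zero_iff_lt.2 (Finset.mem_range.1 hi)]
    simp
  have hc : c = 0 := by
    have h2 : (fun s : ℝ => s ^ (D + 1) * u) = fun s => u * s ^ (D + 1) := by ext; ring
    rw [hz, zero_add, h2, iteratedDeriv_const_mul_field, iteratedDeriv_pow] at hD
    have h3 : ((D + 1).descFactorial D : ℝ) ≠ 0 := by
      rw [Nat.cast_ne_zero, Ne, Nat.descFactorial_eq_zero_iff_lt]; omega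
    have h4 : D + 1 - D = 1 := by omega
    rw [h4, pow_one] at hD
    rcases mul_eq_zero.1 hD with h | h
    · exact absurd h hu
    · exact (mul_eq_zero.1 h).resolve_left h3
  subst hc
  have := (iteratedDeriv_of_taylor (u := fun s => s * u) (c := v) (d := D) (q := q) (by fun_prop) (by
    filter_upwards [hq] with s hs
    rw [hs]; simp only [add_zero]; ring)).1 i₀ hi
  rw [hex i₀ hi.le] at this
  simp [Nat.factorial_ne_zero, hv] at this

end Loj

/-! ### Dropping the order -/

namespace Loj

/-- The points `X` lift along a chart defined on `ℝᴺ` that turns `f` into a monomial times a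
nonvanishing function. -/
def Res {ι V : Type*} [NormedAddCommGroup V] [NormedSpace ℝ V] (𝓤 : Ultrafilter ι) (N : ℕ)
    (X : ι → V) (f : V → ℝ) : Prop :=
  ∃ (π : (Fin N → ℝ) → V) (Y : ι → Fin N → ℝ), Chart 𝓤 X π Y ∧ ∃ α, NC α (fun w => f (π w))

/-- Local uniformization in dimension `n` along the ultrafilter `𝓤`: every nonzero analytic germ is
turned into a monomial times a unit by a chart to which the given points lift. -/
def LU {ι : Type*} (𝓤 : Ultrafilter ι) (n : ℕ) : Prop :=
  ∀ (X : ι → Fin n → ℝ) (f : (Fin n → ℝ) → ℝ), Tendsto X 𝓤 (𝓝 0) → AnalyticAt ℝ f 0 →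
    (¬ ∀ᶠ x in 𝓝 0, f x = 0) → Res 𝓤 n X f

variable {ι : Type*} {𝓤 : Ultrafilter ι}

theorem Res.of_chart {V W : Type*} [NormedAddCommGroup V] [NormedSpace ℝ V]
    [NormedAddCommGroup W] [NormedSpace ℝ W] {N : ℕ} {X : ι → V} {ρ : W → V} {T : ι → W}
    {f : V → ℝ} {g : W → ℝ} (hρ : Chart 𝓤 X ρ T) (h : Res 𝓤 N T g)
    (hfg : ∀ᶠ z in 𝓝 0, f (ρ z) = g z) : Res 𝓤 N X f := by
  obtain ⟨π, Y, hπ, α, hα⟩ := h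
  exact ⟨fun w => ρ (π w), Y, hρ.comp hπ, α, hα.congr (hπ.tendsto_zero.eventually hfg)⟩

theorem Chart.of_equiv {V W : Type*} [NormedAddCommGroup V] [NormedSpace ℝ V]
    [NormedAddCommGroup W] [NormedSpace ℝ W] (L : W ≃L[ℝ] V) {X : ι → V}
    (hX : Tendsto X 𝓤 (𝓝 0)) : Chart 𝓤 X L (fun i => L.symm (X i)) where
  analytic := L.toContinuousLinearMap.analyticAt 0
  map_zero := L.map_zero
  tendsto := by
    have := (L.symm.continuous.tendsto 0).comp hX
    rwa [L.symm.map_zero] at this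
  lift := by simp

/-- `ℝⁿ × ℝ` and `ℝⁿ⁺¹`, the last factor becoming the coordinate of index `0`. -/
noncomputable def split (n : ℕ) : (Fin (n + 1) → ℝ) ≃L[ℝ] (Fin n → ℝ) × ℝ :=
  (Fin.consEquivL ℝ (fun _ : Fin (n + 1) => ℝ)).symm.trans (ContinuousLinearEquiv.prodComm ℝ _ _)

theorem split_apply {n : ℕ} (w : Fin (n + 1) → ℝ) : split n w = (Fin.tail w, w 0) := rfl

theorem split_symm_apply {n : ℕ} (p : (Fin n → ℝ) × ℝ) :
    (split n).symm p = (Fin.cons p.2 p.1 : Fin (n + 1) → ℝ) := rfl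

theorem mono_cons {n : ℕ} (d : ℕ) (γ : Fin n → ℕ) (w : Fin (n + 1) → ℝ) :
    mono (Fin.cons d γ) w = w 0 ^ d * mono γ (Fin.tail w) := by
  simp [mono, Fin.prod_univ_succ, Fin.tail]

section step
variable {n : ℕ}

theorem tendsto_fst_snd {X : ι → (Fin n → ℝ) × ℝ} (hX : Tendsto X 𝓤 (𝓝 0)) :
    Tendsto (fun i => (X i).1) 𝓤 (𝓝 0) ∧ Tendsto (fun i => (X i).2) 𝓤 (𝓝 0) :=
  ⟨(continuous_fst.tendsto 0).comp hX, (continuous_snd.tendsto 0).comp hX⟩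

theorem tendsto_fst_zero {V : Type*} [NormedAddCommGroup V] :
    Tendsto (fun p : V × ℝ => p.1) (𝓝 0) (𝓝 0) := continuous_fst.tendsto 0

theorem res_unit {X : ι → (Fin n → ℝ) × ℝ} (hX : Tendsto X 𝓤 (𝓝 0)) {γ : Fin n → ℕ} {d : ℕ}
    {U f : (Fin n → ℝ) × ℝ → ℝ} (hU : AnalyticAt ℝ U 0) (hU0 : U 0 ≠ 0)
    (hf : ∀ᶠ p in 𝓝 0, f p = mono γ p.1 * (p.2 ^ d * U p)) : Res 𝓤 (n + 1) X f := by
  have hc := Chart.of_equiv (split n) hX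
  refine ⟨_, _, hc, Fin.cons d γ, fun w => U (split n w), ?_, by simpa using hU0, ?_⟩
  · exact AnalyticAt.fun_comp (by simpa using hU) hc.analytic
  · filter_upwards [hc.tendsto_zero.eventually hf] with w hw
    rw [hw, mono_cons, split_apply]; ring

theorem Chart.prod {X : ι → (Fin n → ℝ) × ℝ} (hX : Tendsto X 𝓤 (𝓝 0))
    {ψ : (Fin n → ℝ) → Fin n → ℝ} {Z : ι → Fin n → ℝ} (h : Chart 𝓤 (fun i => (X i).1) ψ Z) :
    Chart 𝓤 X (fun p : (Fin n → ℝ) × ℝ => (ψ p.1, p.2)) (fun i => (Z i, (X i).2)) where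
  analytic := (AnalyticAt.fun_comp (f := fun p : (Fin n → ℝ) × ℝ => p.1)
    (by exact h.analytic) analyticAt_fst).prod analyticAt_snd
  map_zero := by simp [h.map_zero]
  tendsto := h.tendsto.prodMk_nhds (tendsto_fst_snd hX).2
  lift := by
    filter_upwards [h.lift] with i hi
    rw [hi]

/-- Divisibility of the monomials gives divisibility of the germs. -/
theorem NC.dvd {m : ℕ} {a b : Fin m → ℕ} {f g : (Fin m → ℝ) → ℝ} (hf : NC a f) (hg : NC b g)
    (hab : a ≤ b) : ∃ r, NC (b - a) r ∧ AnalyticAt ℝ r 0 ∧ ∀ᶠ w in 𝓝 0, g w = f w * r w := by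
  obtain ⟨u, h1, h2, h3⟩ := hf
  obtain ⟨v, k1, k2, k3⟩ := hg
  refine ⟨fun w => v w / u w * Loj.mono (b - a) w, ⟨fun w => v w / u w, k1.div h1 h2,
    div_ne_zero k2 h2, by simp⟩, (k1.div h1 h2).mul (analyticAt_mono _ _), ?_⟩
  filter_upwards [h3, k3, h1.continuousAt.eventually_ne h2] with w ha hb hc
  have : Loj.mono b w = Loj.mono a w * Loj.mono (b - a) w := by
    rw [← mono_add, add_tsub_cancel_of_le hab]
  rw [ha, hb, this]
  field_simp

/-- The step in which the order drops. The hypothesis `ih` is uniformization for order at most `D`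
in the last variable `t`; the function is a Tschirnhaus polynomial whose coefficients are divisible
by the right powers of one monomial `mono β`, at least one quotient `v i₀` being a unit.

If `|t|` is bounded by a multiple of `|mono β|` along the ultrafilter, the substitution
`t = mono β * (s + c)` factors out `mono β ^ (D + 1)`, and the remaining function has order at
most `D`. Otherwise, in a chart in which `t` and `mono β` are comparable, `mono β = t * r` with
`r 0 = 0`, so that the function is `t ^ (D + 1)` times a unit. -/
theorem res_weierstrass {D : ℕ}
    (ih : ∀ e ≤ D, ∀ (X : ι → (Fin n → ℝ) × ℝ) (g : (Fin n → ℝ) × ℝ → ℝ) (γ : Fin n → ℕ),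
      Tendsto X 𝓤 (𝓝 0) → AnalyticAt ℝ g 0 →
      (∀ k < e, iteratedDeriv k (fun t => g (0, t)) 0 = 0) →
      iteratedDeriv e (fun t => g (0, t)) 0 ≠ 0 → Res 𝓤 (n + 1) X (fun p => mono γ p.1 * g p))
    {X : ι → (Fin n → ℝ) × ℝ} (hX : Tendsto X 𝓤 (𝓝 0)) {v : ℕ → (Fin n → ℝ) → ℝ}
    (hv : ∀ i, AnalyticAt ℝ (v i) 0) {i₀ : ℕ} (hi₀ : i₀ < D) (hvi : v i₀ 0 ≠ 0)
    {U : (Fin n → ℝ) × ℝ → ℝ} (hU : AnalyticAt ℝ U 0) (hU0 : U 0 ≠ 0)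
    {β : Fin n → ℕ} (hβ : mono β 0 = 0) (Γ : Fin n → ℕ) :
    Res 𝓤 (n + 1) X (fun p => mono Γ p.1 * (∑ i ∈ Finset.range D,
      v i p.1 * mono β p.1 ^ (D + 1 - i) * p.2 ^ i + p.2 ^ (D + 1) * U p)) := by
  obtain ⟨hX1, hX2⟩ := tendsto_fst_snd hX
  have hvf : ∀ i, AnalyticAt ℝ (fun p : (Fin n → ℝ) × ℝ => v i p.1) 0 := fun i =>
    AnalyticAt.fun_comp (f := fun p : (Fin n → ℝ) × ℝ => p.1) (by exact hv i) analyticAt_fst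
  have hmf : AnalyticAt ℝ (fun p : (Fin n → ℝ) × ℝ => mono β p.1) 0 :=
    AnalyticAt.fun_comp (f := fun p : (Fin n → ℝ) × ℝ => p.1)
      (analyticAt_mono _ _) analyticAt_fst
  by_cases hM : ∃ M : ℝ, ∀ᶠ i in 𝓤, |(X i).2| ≤ M * |mono β (X i).1|
  · obtain ⟨M, hM⟩ := hM
    have hr : ∀ᶠ i in 𝓤, |(X i).2 / mono β (X i).1| ≤ |M| := by
      filter_upwards [hM] with i hi
      rw [abs_div]
      refine div_le_of_le_mul₀ (abs_nonneg _) (abs_nonneg _) (hi.trans ?_)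
      gcongr
      exact le_abs_self M
    obtain ⟨c, hc⟩ := exists_lim hr
    have hσ : AnalyticAt ℝ (fun p : (Fin n → ℝ) × ℝ => mono β p.1 * (p.2 + c)) 0 :=
      hmf.mul (analyticAt_snd.add analyticAt_const)
    have hch : Chart 𝓤 X (fun p : (Fin n → ℝ) × ℝ => (p.1, mono β p.1 * (p.2 + c)))
        (fun i => ((X i).1, (X i).2 / mono β (X i).1 - c)) :=
      { analytic := analyticAt_fst.prod hσ
        map_zero := by simp [hβ]
        tendsto := by
          refine hX1.prodMk_nhds ?_
          simpa using hc.sub_const c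
        lift := by
          filter_upwards [hM] with i hi
          ext1
          · rfl
          · rcases eq_or_ne (mono β (X i).1) 0 with h0 | h0
            · rw [h0, abs_zero, mul_zero] at hi
              have := abs_nonpos_iff.1 hi
              simp [this, h0]
            · simp only [sub_add_cancel]
              field_simp }
    let g : (Fin n → ℝ) × ℝ → ℝ := fun p => ∑ i ∈ Finset.range D, v i p.1 * (p.2 + c) ^ i +
      (p.2 + c) ^ (D + 1) * U (p.1, mono β p.1 * (p.2 + c))
    have hg : AnalyticAt ℝ g 0 := by
      refine AnalyticAt.add ?_ (AnalyticAt.mul ?_ ?_)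
      · exact Finset.analyticAt_fun_sum _ fun i _ =>
          (hvf i).mul ((analyticAt_snd.add analyticAt_const).pow _)
      · exact (analyticAt_snd.add analyticAt_const).pow _
      · refine AnalyticAt.fun_comp (f := fun p : (Fin n → ℝ) × ℝ => (p.1, mono β p.1 * (p.2 + c)))
          ?_ hch.analytic
        rw [hch.map_zero]; exact hU
    obtain ⟨e, heD, he1, he2⟩ := exists_order_le (v := fun i => v i 0) (c := c) (u := U 0)
      (q := fun s => g (0, s)) hU0 hi₀ hvi
      (by filter_upwards with s; simp only [g, hβ, zero_mul]; rfl)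
    refine Res.of_chart hch (ih e heD _ g (Γ + (D + 1) • β) hch.tendsto hg he1 he2) ?_
    filter_upwards with p
    simp only [g, mono_add, mono_nsmul]
    rw [mul_assoc]
    congr 1
    rw [mul_add _ (Finset.sum _ _), Finset.mul_sum]
    congr 1
    · refine Finset.sum_congr rfl fun i hi => ?_
      have : mono β p.1 ^ (D + 1) = mono β p.1 ^ (D + 1 - i) * mono β p.1 ^ i := by
        rw [← pow_add]
        have := Finset.mem_range.1 hi
        congr 1; omega
      rw [mul_pow, this]
      ring
    · rw [mul_pow]; ring
  · have hbig : ∀ M : ℝ, ∀ᶠ i in 𝓤, M * |mono β (X i).1| < |(X i).2| := by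
      intro M
      push Not at hM
      exact hM M
    have hc := Chart.of_equiv (split n) hX
    obtain ⟨ψ, Y, a, hψ, hab⟩ := exists_toric hc.tendsto (Fin.cons 0 β) (Fin.cons 1 0)
    have hπ := hc.comp hψ.toChart
    have hB : NC (pull a (Fin.cons 0 β)) (fun w => mono β (split n (ψ w)).1) :=
      ((NC.mono (Fin.cons 0 β)).comp hψ.analytic hψ.map_zero hψ.nc).congr
        (by filter_upwards with w; rw [mono_cons, split_apply]; simp)
    have hT : NC (pull a (Fin.cons 1 0)) (fun w => (split n (ψ w)).2) :=
      ((NC.mono (Fin.cons 1 0)).comp hψ.analytic hψ.map_zero hψ.nc).congr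
        (by filter_upwards with w; rw [mono_cons, split_apply, mono_zero]; simp)
    have hG : NC (pull a (Fin.cons 0 Γ)) (fun w => mono Γ (split n (ψ w)).1) :=
      ((NC.mono (Fin.cons 0 Γ)).comp hψ.analytic hψ.map_zero hψ.nc).congr
        (by filter_upwards with w; rw [mono_cons, split_apply]; simp)
    rcases hab with hab | hab
    · -- here `t` is a multiple of `mono β`, hence bounded by it, which was excluded
      exfalso
      obtain ⟨r, -, hr, hre⟩ := hB.dvd hT hab
      have hb : ∀ᶠ w in 𝓝 0, |r w| < |r 0| + 1 :=
        hr.continuousAt.abs.eventually_lt_const (by linarith)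
      obtain ⟨i, h1, h2, h3, h4⟩ := ((hbig (|r 0| + 1)).and ((hψ.tendsto.eventually hre).and
        ((hψ.tendsto.eventually hb).and hπ.lift))).exists
      rw [h4] at h2
      rw [h2, abs_mul, mul_comm] at h1
      exact absurd h1 (not_lt.2 (mul_le_mul_of_nonneg_left h3.le (abs_nonneg _)))
    · obtain ⟨r, -, hr, hre⟩ := hT.dvd hB hab
      have hr0 : r 0 = 0 := by
        by_contra hne
        have hb : ∀ᶠ w in 𝓝 0, |r 0| / 2 < |r w| :=
          hr.continuousAt.abs.eventually_const_lt (by have := abs_pos.2 hne; linarith)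
        obtain ⟨i, h1, h2, h3, h4⟩ := ((hbig (2 / |r 0|)).and ((hψ.tendsto.eventually hre).and
          ((hψ.tendsto.eventually hb).and hπ.lift))).exists
        have hp := abs_pos.2 hne
        rw [h4] at h2
        rw [h2, abs_mul, div_mul_eq_mul_div, div_lt_iff₀ hp] at h1
        nlinarith [abs_nonneg (X i).2]
      have hψU : AnalyticAt ℝ (fun w => U (split n (ψ w))) 0 :=
        AnalyticAt.fun_comp (by rw [hπ.map_zero]; exact hU) hπ.analytic
      have hψv : ∀ i, AnalyticAt ℝ (fun w => v i (split n (ψ w)).1) 0 := fun i =>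
        AnalyticAt.fun_comp (g := fun p : (Fin n → ℝ) × ℝ => v i p.1)
          (by rw [hπ.map_zero]; exact hvf i) hπ.analytic
      let u : (Fin (n + 1) → ℝ) → ℝ := fun w => ∑ i ∈ Finset.range D,
        v i (split n (ψ w)).1 * r w ^ (D + 1 - i) + U (split n (ψ w))
      have hu : AnalyticAt ℝ u 0 :=
        (Finset.analyticAt_fun_sum _ fun i _ => (hψv i).mul (hr.pow _)).add hψU
      have hu0 : u 0 ≠ 0 := by
        have : ∑ i ∈ Finset.range D, v i (split n (ψ 0)).1 * r 0 ^ (D + 1 - i) = 0 := by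
          refine Finset.sum_eq_zero fun i hi => ?_
          have := Finset.mem_range.1 hi
          rw [hr0, zero_pow (by omega), mul_zero]
        simp only [u]
        rw [this, zero_add, hπ.map_zero]
        exact hU0
      refine ⟨_, Y, hπ, _, (hG.mul ((hT.pow (D + 1)).mul (NC.unit hu hu0))).congr ?_⟩
      filter_upwards [hre] with w hw
      rw [hw]
      congr 1
      simp only [u]
      rw [mul_add, Finset.mul_sum]
      congr 1
      refine Finset.sum_congr rfl fun i hi => ?_
      have : (split n (ψ w)).2 ^ (D + 1) =
          (split n (ψ w)).2 ^ (D + 1 - i) * (split n (ψ w)).2 ^ i := by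
        rw [← pow_add]
        have := Finset.mem_range.1 hi
        congr 1; omega
      rw [mul_pow, this]
      ring

end step
end Loj

/-! ### Local uniformization -/

namespace Loj
variable {ι : Type*} {𝓤 : Ultrafilter ι} {n : ℕ}

theorem not_eventually_prod {V κ : Type*} [NormedAddCommGroup V] [NormedSpace ℝ V]
    (s : Finset κ) {f : κ → V → ℝ} (hf : ∀ i ∈ s, AnalyticAt ℝ (f i) 0)
    (h : ∀ i ∈ s, ¬ ∀ᶠ x in 𝓝 0, f i x = 0) : ¬ ∀ᶠ x in 𝓝 0, ∏ i ∈ s, f i x = 0 := by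
  classical
  induction s using Finset.induction_on with
  | empty => intro hc; simpa using hc.self_of_nhds
  | insert a s ha ih =>
    intro hc
    simp only [Finset.prod_insert ha] at hc
    rcases eventuallyEq_zero_of_mul (hf a (by simp)) (Finset.analyticAt_fun_prod s fun i hi =>
      hf i (by simp [hi])) hc with h1 | h1
    · exact h a (by simp) h1
    · exact ih (fun i hi => hf i (by simp [hi])) (fun i hi => h i (by simp [hi])) h1

theorem NC.of_prod {κ : Type*} (s : Finset κ) {f : κ → (Fin n → ℝ) → ℝ} {α : Fin n → ℕ}
    (hf : ∀ i ∈ s, AnalyticAt ℝ (f i) 0) (h : NC α (fun x => ∏ i ∈ s, f i x)) {i : κ}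
    (hi : i ∈ s) : ∃ a, NC a (f i) := by
  classical
  refine NC.of_mul (hf i hi) (g := fun x => ∏ j ∈ s.erase i, f j x)
    (Finset.analyticAt_fun_prod _ fun j hj => hf j (Finset.mem_of_mem_erase hj)) (h.congr ?_)
  filter_upwards with x
  exact Finset.mul_prod_erase s (fun j => f j x) hi

/-- Preparation of the coefficients `c i` of a Tschirnhaus polynomial of degree `D + 1`: in a suitable
chart, `c i` is divisible by `β ^ (D + 1 - i)` for a single monomial `β`, with a unit as quotient for at
least one `i`. Uniformization of the product of the nonzero coefficients and of the coordinates makes all of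
them monomials. Raising the coordinates to the power `(D + 1)!` makes the exponent of `c i` divisible
by `D + 1 - i`, and then one of the resulting monomial roots is made to divide the others. -/
theorem exists_monomial_coeffs (hLU : LU 𝓤 n) {X : ι → Fin n → ℝ} (hX : Tendsto X 𝓤 (𝓝 0)) {D : ℕ}
    {c : ℕ → (Fin n → ℝ) → ℝ} (hc : ∀ i, AnalyticAt ℝ (c i) 0) (hc0 : ∀ i < D, c i 0 = 0)
    (hne : ∃ i < D, ¬ ∀ᶠ x in 𝓝 0, c i x = 0) :
    ∃ (ψ : (Fin n → ℝ) → Fin n → ℝ) (Z : ι → Fin n → ℝ) (a : Fin n → Fin n → ℕ) (β : Fin n → ℕ)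
      (v : ℕ → (Fin n → ℝ) → ℝ), MonoChart 𝓤 X ψ Z a ∧ mono β 0 = 0 ∧
      (∀ i, AnalyticAt ℝ (v i) 0) ∧ (∃ i < D, v i 0 ≠ 0) ∧
      ∀ i < D, ∀ᶠ z in 𝓝 0, c i (ψ z) = v i z * mono β z ^ (D + 1 - i) := by
  classical
  let I := (Finset.range D).filter fun i => ¬ ∀ᶠ x in 𝓝 0, c i x = 0
  have hI : ∀ {i}, i ∈ I ↔ i < D ∧ ¬ ∀ᶠ x in 𝓝 0, c i x = 0 := by intro i; simp [I]
  have hIne : I.Nonempty := by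
    obtain ⟨i, h1, h2⟩ := hne
    exact ⟨i, hI.2 ⟨h1, h2⟩⟩
  -- the coefficients and the coordinates, treated on the same footing
  let F : ℕ ⊕ Fin n → (Fin n → ℝ) → ℝ := Sum.elim c (fun j x => x j)
  let s : Finset (ℕ ⊕ Fin n) := I.disjSum Finset.univ
  have hF : ∀ k, AnalyticAt ℝ (F k) 0 := by
    rintro (i | j)
    · exact hc i
    · exact analyticAt_coord j 0
  obtain ⟨π, Y, hπ, α, hα⟩ := hLU X (fun x => ∏ k ∈ s, F k x) hX
    (Finset.analyticAt_fun_prod _ fun k _ => hF k) (by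
      refine not_eventually_prod s (fun k _ => hF k) ?_
      rintro (i | j) hk
      · exact (hI.1 (by simpa [s] using hk)).2
      · exact not_eventually_coord j)
  have hfac : ∀ k ∈ s, ∃ a, NC a (fun w => F k (π w)) := fun k hk =>
    NC.of_prod s (fun k _ => AnalyticAt.fun_comp (by rw [hπ.map_zero]; exact hF k) hπ.analytic)
      hα hk
  choose! a ha using hfac
  have hmπ : MonoChart 𝓤 X π Y (fun j => a (Sum.inr j)) :=
    { toChart := hπ, nc := fun j => ha (Sum.inr j) (by simp [s]) }
  obtain ⟨ψ₁, Y₁, h₁⟩ := exists_power hπ.tendsto (fun _ => (D + 1).factorial)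
    (fun _ => Nat.factorial_ne_zero _)
  let b : ℕ → Fin n → ℕ := fun i k => a (Sum.inl i) k * ((D + 1).factorial / (D + 1 - i))
  obtain ⟨ψ₂, Y₂, a₂, h₂, i₀, hi₀, hmin⟩ := exists_toric_min h₁.tendsto I hIne b
  have hnc : ∀ i ∈ I, NC ((D + 1 - i) • pull a₂ (b i)) (fun z => c i (π (ψ₁ (ψ₂ z)))) := by
    intro i hi
    have h3 := ((ha (Sum.inl i) (by simpa [s] using hi)).comp h₁.analytic h₁.map_zero h₁.nc).comp
      h₂.analytic h₂.map_zero h₂.nc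
    have h4 : pull (fun k => (D + 1).factorial • Pi.single k 1) (a (Sum.inl i))
        = (D + 1 - i) • b i := by
      rw [pull_single]
      ext k
      have h5 : (D + 1 - i) * ((D + 1).factorial / (D + 1 - i)) = (D + 1).factorial :=
        Nat.mul_div_cancel' (Nat.dvd_factorial (by have := (hI.1 hi).1; omega) (by omega))
      simp only [b, Pi.smul_apply, smul_eq_mul]
      rw [mul_left_comm, h5]
    rw [h4, pull_nsmul] at h3
    exact h3
  set β := pull a₂ (b i₀) with hβ
  have hv : ∀ i, ∃ v : (Fin n → ℝ) → ℝ, AnalyticAt ℝ v 0 ∧ (i = i₀ → v 0 ≠ 0) ∧ (i < D →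
      ∀ᶠ z in 𝓝 0, c i (π (ψ₁ (ψ₂ z))) = v z * mono β z ^ (D + 1 - i)) := by
    intro i
    by_cases hi : i ∈ I
    · obtain ⟨u, hu, hu0, he⟩ := hnc i hi
      refine ⟨fun z => u z * mono (pull a₂ (b i) - β) z ^ (D + 1 - i),
        hu.mul ((analyticAt_mono _ _).pow _), ?_, fun _ => ?_⟩
      · rintro rfl
        simpa [hβ, mono_zero] using hu0
      · filter_upwards [he] with z hz
        rw [hz, mono_nsmul, mul_assoc, ← mul_pow, ← mono_add, tsub_add_cancel_of_le (hmin i hi)]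
    · refine ⟨fun _ => 0, analyticAt_const, fun h => absurd (h ▸ hi₀) hi, fun hiD => ?_⟩
      have hz : ∀ᶠ x in 𝓝 0, c i x = 0 := by
        by_contra hc
        exact hi (hI.2 ⟨hiD, hc⟩)
      filter_upwards [((hmπ.comp h₁).comp h₂).tendsto_zero.eventually hz] with z hz
      rw [hz, zero_mul]
  choose v hva hv0 hve using hv
  have hiD := (hI.1 hi₀).1
  refine ⟨_, _, _, β, v, (hmπ.comp h₁).comp h₂, ?_, hva, ⟨i₀, hiD, hv0 i₀ rfl⟩, hve⟩
  have h5 := (hve i₀ hiD).self_of_nhds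
  rw [h₂.map_zero, h₁.map_zero, hπ.map_zero, hc0 i₀ hiD] at h5
  have h6 := (mul_eq_zero.1 h5.symm).resolve_left (hv0 i₀ rfl)
  exact pow_eq_zero_iff (by omega) |>.1 h6

/-- Uniformization in dimension `n + 1` for a germ of finite order in the last variable, up to a
monomial factor in the first `n` variables, by induction on the order. -/
theorem res_of_order (hLU : LU 𝓤 n) (d : ℕ) : ∀ (X : ι → (Fin n → ℝ) × ℝ)
    (g : (Fin n → ℝ) × ℝ → ℝ) (γ : Fin n → ℕ), Tendsto X 𝓤 (𝓝 0) → AnalyticAt ℝ g 0 →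
      (∀ k < d, iteratedDeriv k (fun t => g (0, t)) 0 = 0) →
      iteratedDeriv d (fun t => g (0, t)) 0 ≠ 0 →
      Res 𝓤 (n + 1) X (fun p => mono γ p.1 * g p) := by
  induction d using Nat.strong_induction_on with
  | _ d ih =>
  intro X g γ hX hg h0 h1
  obtain _ | D := d
  · refine res_unit hX (d := 0) (γ := γ) hg ?_ (by simp)
    rw [iteratedDeriv_zero] at h1
    exact h1
  obtain ⟨φ, c, U, hφ, hφ0, hc, hc0, hU, hU0, he⟩ := exists_tschirnhaus hg h0 h1
  have hφf : AnalyticAt ℝ (fun p : (Fin n → ℝ) × ℝ => φ p.1) 0 :=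
    AnalyticAt.fun_comp (f := fun p : (Fin n → ℝ) × ℝ => p.1) (by exact hφ) analyticAt_fst
  obtain ⟨hX1, hX2⟩ := tendsto_fst_snd hX
  have hρ : Chart 𝓤 X (fun p : (Fin n → ℝ) × ℝ => (p.1, p.2 + φ p.1))
      (fun i => ((X i).1, (X i).2 - φ (X i).1)) :=
    { analytic := analyticAt_fst.prod (analyticAt_snd.add hφf)
      map_zero := by simp [hφ0]
      tendsto := by
        have : Tendsto φ (𝓝 0) (𝓝 0) := by simpa [hφ0] using hφ.continuousAt.tendsto
        refine hX1.prodMk_nhds ?_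
        simpa using hX2.sub (this.comp hX1)
      lift := by simp }
  refine Res.of_chart (g := fun p => mono γ p.1 *
    (∑ i ∈ Finset.range D, c i p.1 * p.2 ^ i + p.2 ^ (D + 1) * U p)) hρ ?_ (by
      filter_upwards [he] with p hp
      rw [hp])
  have hT := hρ.tendsto
  by_cases hne : ∃ i < D, ¬ ∀ᶠ x in 𝓝 0, c i x = 0
  · obtain ⟨ψ, Z, a, β, v, hψ, hβ, hv, ⟨i₀, hi₀, hvi⟩, hcv⟩ :=
      exists_monomial_coeffs hLU (tendsto_fst_snd hT).1 hc hc0 hne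
    obtain ⟨w, hw, hw0, hwe⟩ := (NC.mono γ).comp hψ.analytic hψ.map_zero hψ.nc
    have hch := Chart.prod hT hψ.toChart
    have hUψ : AnalyticAt ℝ (fun p : (Fin n → ℝ) × ℝ => U (ψ p.1, p.2)) 0 :=
      AnalyticAt.fun_comp (by rw [hch.map_zero]; exact hU) hch.analytic
    have hwf : AnalyticAt ℝ (fun p : (Fin n → ℝ) × ℝ => w p.1) 0 :=
      AnalyticAt.fun_comp (f := fun p : (Fin n → ℝ) × ℝ => p.1) (by exact hw) analyticAt_fst
    have hce : ∀ᶠ z in 𝓝 (0 : Fin n → ℝ), ∀ i ∈ Finset.range D,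
        c i (ψ z) = v i z * mono β z ^ (D + 1 - i) :=
      (Filter.eventually_all_finset _).2 fun i hi => hcv i (Finset.mem_range.1 hi)
    refine Res.of_chart hch (res_weierstrass (D := D) (v := fun i z => w z * v i z)
      (U := fun p => w p.1 * U (ψ p.1, p.2)) (fun e he => ih e (by omega)) hch.tendsto
      (fun i => hw.mul (hv i)) hi₀ (mul_ne_zero hw0 hvi) (hwf.mul hUψ)
      (mul_ne_zero hw0 (by rw [Prod.fst_zero, hψ.map_zero]; exact hU0)) hβ (pull a γ)) ?_
    filter_upwards [tendsto_fst_zero.eventually hce, tendsto_fst_zero.eventually hwe] with p h2 h3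
    rw [h3, mul_comm (w p.1), mul_assoc]
    congr 1
    rw [mul_add, Finset.mul_sum]
    congr 1
    · refine Finset.sum_congr rfl fun i hi => ?_
      rw [h2 i hi]; ring
    · ring
  · push Not at hne
    refine res_unit hT (d := D + 1) (γ := γ) hU hU0 ?_
    have hce : ∀ᶠ z in 𝓝 (0 : Fin n → ℝ), ∀ i ∈ Finset.range D, c i z = 0 :=
      (Filter.eventually_all_finset _).2 fun i hi => hne i (Finset.mem_range.1 hi)
    filter_upwards [tendsto_fst_zero.eventually hce] with p h2
    rw [Finset.sum_eq_zero fun i hi => by rw [h2 i hi, zero_mul], zero_add]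

theorem exists_order {q : ℝ → ℝ} (hq : AnalyticAt ℝ q 0) (h : ¬ ∀ᶠ t in 𝓝 0, q t = 0) :
    ∃ d, (∀ k < d, iteratedDeriv k q 0 = 0) ∧ iteratedDeriv d q 0 ≠ 0 := by
  have h1 : analyticOrderAt q 0 ≠ ⊤ := fun hc => h (analyticOrderAt_eq_top.1 hc)
  obtain ⟨d, hd⟩ := ENat.ne_top_iff_exists.1 h1
  exact ⟨d, (analyticOrderAt_eq_nat_iff_iteratedDeriv_eq_zero hq).1 hd.symm⟩

/-- Local uniformization, by induction on the dimension. -/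
theorem lu (𝓤 : Ultrafilter ι) (n : ℕ) : LU 𝓤 n := by
  have hunit : ∀ {m : ℕ} (X : ι → Fin m → ℝ) (f : (Fin m → ℝ) → ℝ), Tendsto X 𝓤 (𝓝 0) →
      AnalyticAt ℝ f 0 → f 0 ≠ 0 → Res 𝓤 m X f := fun X f hX hf hf0 =>
    ⟨id, X, (MonoChart.refl hX).toChart, 0, NC.unit hf hf0⟩
  induction n with
  | zero =>
    intro X f hX hf hne
    refine hunit X f hX hf fun h0 => hne ?_
    filter_upwards with x
    rw [Subsingleton.elim x 0, h0]
  | succ n ih =>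
    intro X f hX hf hne
    obtain ⟨v, hv⟩ := exists_line hf hne
    rcases eq_or_ne v 0 with rfl | hv0
    · exact hunit X f hX hf fun h0 => hv (by simp [h0])
    have hx : (split n).symm (0, 1) ≠ 0 := by simp
    obtain ⟨A, hA⟩ := SeparatingDual.exists_continuousLinearEquiv_apply_eq (R := ℝ) hx hv0
    let L : ((Fin n → ℝ) × ℝ) ≃L[ℝ] (Fin (n + 1) → ℝ) := (split n).symm.trans A
    have hL : ∀ t : ℝ, L (0, t) = t • v := by
      intro t
      rw [← hA, ← A.map_smul, ← (split n).symm.map_smul]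
      simp [L]
    have hc := Chart.of_equiv (𝓤 := 𝓤) L hX
    have hfL : AnalyticAt ℝ (fun p => f (L p)) 0 :=
      AnalyticAt.fun_comp (by rw [hc.map_zero]; exact hf) hc.analytic
    have hq : AnalyticAt ℝ (fun t : ℝ => f (L (0, t))) 0 :=
      AnalyticAt.fun_comp (f := fun t : ℝ => ((0 : Fin n → ℝ), t)) (by exact hfL)
        (analyticAt_const.prod analyticAt_id)
    obtain ⟨d, hd1, hd2⟩ := exists_order hq (by simpa only [hL] using hv)
    refine Res.of_chart hc (res_of_order ih d _ (fun p => f (L p)) 0 hc.tendsto hfL hd1 hd2) ?_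
    simp [mono_zero]

end Loj

/-! ### The gradient inequality -/

namespace Loj
variable {n : ℕ}

/-- Euler relation `y j ∂ⱼ (y ^ α) = α j y ^ α`. -/
theorem coord_mul_fderiv_mono (α : Fin n → ℕ) (y : Fin n → ℝ) (j : Fin n) :
    y j * fderiv ℝ (mono α) y (Pi.single j 1) = α j * mono α y := by
  classical
  set R := ∏ i ∈ Finset.univ.erase j, y i ^ α i with hR
  have hm : ∀ s, mono α (Function.update y j s) = s ^ α j * R := by
    intro s
    rw [mono, ← Finset.mul_prod_erase _ _ (Finset.mem_univ j), Function.update_self]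
    congr 1
    exact Finset.prod_congr rfl fun i hi => by
      rw [Function.update_of_ne (Finset.ne_of_mem_erase hi)]
  have h1 : HasDerivAt (fun s => mono α (Function.update y j s))
      (fderiv ℝ (mono α) y (Pi.single j 1)) (y j) := by
    have h2 : HasFDerivAt (mono α) (fderiv ℝ (mono α) y) (Function.update y j (y j)) := by
      rw [Function.update_eq_self]
      exact (analyticAt_mono α y).differentiableAt.hasFDerivAt
    exact h2.comp_hasDerivAt (y j) (hasDerivAt_update y j (y j))
  simp only [hm] at h1
  have h3 := h1.unique ((hasDerivAt_pow (α j) (y j)).mul_const R)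
  have h4 : mono α y = y j ^ α j * R := by rw [← hm, Function.update_eq_self]
  rw [h3, h4]
  cases α j with
  | zero => simp
  | succ k => simp only [Nat.add_sub_cancel, pow_succ]; ring

/-- The inequality for a monomial times a unit, with `p = (m + 1) / m`, where `m` is the degree.
For every `j` with `α j ≠ 0` the Euler relation gives `c |y ^ α| ≤ |y j| ‖∇h‖`. For the smallest
such `|y j|` one has `|y j| ^ (m + 1) ≤ |y ^ α|`, and eliminating `|y j|` yields
`|y ^ α| ^ m ≤ (‖∇h‖ / c) ^ (m + 1)`. -/
theorem NC.gradient_inequality {α : Fin n → ℕ} (hα : α ≠ 0) {h : (Fin n → ℝ) → ℝ} (hh : NC α h) :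
    ∃ p C : ℝ, 1 < p ∧ 0 < C ∧ ∀ᶠ y in 𝓝 0, |h y| ≤ C * ‖fderiv ℝ h y‖ ^ p := by
  obtain ⟨u, hu, hu0, he⟩ := hh
  set m := ∑ i, α i with hm
  have hm0 : m ≠ 0 := by
    intro h0
    apply hα
    ext i
    exact Finset.sum_eq_zero_iff.1 h0 i (Finset.mem_univ i)
  have hmpos : (0 : ℝ) < m := by exact_mod_cast Nat.pos_of_ne_zero hm0
  set c := |u 0| / 2 with hc
  have hupos := abs_pos.2 hu0
  have hcpos : 0 < c := by positivity
  set p : ℝ := ((m + 1 : ℕ) : ℝ) * (m : ℝ)⁻¹ with hp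
  have hp1 : 1 < p := by
    rw [hp, ← div_eq_mul_inv, one_lt_div hmpos]; push_cast; linarith
  have hub : ∀ᶠ y in 𝓝 0, |u y| < 2 * |u 0| :=
    hu.continuousAt.abs.eventually_lt_const (by linarith)
  have hlow : ∀ᶠ y : Fin n → ℝ in 𝓝 0, ∀ j, α j ≠ 0 →
      c < |α j * u y + y j * fderiv ℝ u y (Pi.single j 1)| := by
    rw [Filter.eventually_all]
    intro j
    by_cases hj : α j = 0
    · simp [hj]
    have hcont : ContinuousAt (fun y : Fin n → ℝ =>
        |α j * u y + y j * fderiv ℝ u y (Pi.single j 1)|) 0 := by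
      refine ContinuousAt.abs (ContinuousAt.add (continuousAt_const.mul hu.continuousAt)
        (ContinuousAt.mul (analyticAt_coord j 0).continuousAt ?_))
      exact hu.fderiv.continuousAt.clm_apply continuousAt_const
    have := hcont.eventually_const_lt (u := c) (by
      have : (1 : ℝ) ≤ α j := by exact_mod_cast Nat.one_le_iff_ne_zero.2 hj
      simp only [Pi.zero_apply, zero_mul, add_zero, abs_mul, Nat.abs_cast]
      rw [hc]; nlinarith)
    filter_upwards [this] with y hy _ using hy
  have hone : ∀ᶠ y : Fin n → ℝ in 𝓝 0, ‖y‖ < 1 :=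
    continuous_norm.continuousAt.eventually_lt_const (by simp)
  refine ⟨p, 2 * |u 0| * (c⁻¹) ^ p, hp1, by positivity, ?_⟩
  filter_upwards [he.eventually_nhds, hub, hlow, hone, hu.eventually_analyticAt]
    with y h1 h2 h3 h4 h5
  set μ := |Loj.mono α y| with hμ
  set G := ‖fderiv ℝ h y‖ with hG
  have hhy : |h y| ≤ 2 * |u 0| * μ := by
    rw [h1.self_of_nhds, abs_mul]
    gcongr
  have hne : (Finset.univ.filter fun j => α j ≠ 0).Nonempty := by
    by_contra hemp
    apply hα
    ext i
    by_contra hi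
    exact hemp ⟨i, by simpa using hi⟩
  -- a coordinate of least modulus among those that occur in the monomial
  obtain ⟨j, hj, hmin⟩ := Finset.exists_min_image _ (fun j => |y j|) hne
  have hj0 : α j ≠ 0 := by simpa using hj
  have hle1 : |y j| ≤ 1 := (norm_le_pi_norm y j).trans h4.le
  have hpow : |y j| ^ (m + 1) ≤ μ := by
    calc |y j| ^ (m + 1) ≤ |y j| ^ m := pow_le_pow_of_le_one (abs_nonneg _) hle1 (Nat.le_succ m)
      _ = ∏ i, |y j| ^ α i := by rw [hm, Finset.prod_pow_eq_pow_sum]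
      _ ≤ ∏ i, |y i| ^ α i := by
          refine Finset.prod_le_prod (fun _ _ => by positivity) fun i _ => ?_
          by_cases hi : α i = 0
          · simp [hi]
          · have := hmin i (by simpa using hi)
            gcongr
      _ = μ := by rw [hμ, Loj.mono, Finset.abs_prod]; simp only [abs_pow]
  have hcμ : c * μ ≤ |y j| * G := by
    have hd : fderiv ℝ h y = u y • fderiv ℝ (Loj.mono α) y + Loj.mono α y • fderiv ℝ u y := by
      rw [Filter.EventuallyEq.fderiv_eq h1]
      exact fderiv_fun_mul h5.differentiableAt (analyticAt_mono α y).differentiableAt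
    have hd2 : y j * fderiv ℝ h y (Pi.single j 1) =
        (α j * u y + y j * fderiv ℝ u y (Pi.single j 1)) * Loj.mono α y := by
      rw [hd]
      simp only [_root_.add_apply, _root_.smul_apply, smul_eq_mul]
      linear_combination u y * coord_mul_fderiv_mono α y j
    calc c * μ ≤ |α j * u y + y j * fderiv ℝ u y (Pi.single j 1)| * μ := by
          gcongr; exact (h3 j hj0).le
      _ = |y j| * |fderiv ℝ h y (Pi.single j 1)| := by rw [hμ, ← abs_mul, ← hd2, abs_mul]
      _ ≤ |y j| * G := by
          gcongr
          have := (fderiv ℝ h y).le_opNorm (Pi.single j 1)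
          rwa [Pi.norm_single, norm_one, mul_one] at this
  have hGc : μ ^ m ≤ (G * c⁻¹) ^ (m + 1) := by
    have hG0 : 0 ≤ G := norm_nonneg _
    rcases (abs_nonneg (Loj.mono α y)).eq_or_lt with h0 | h0
    · rw [hμ, ← h0, zero_pow hm0]; positivity
    · have h6 : (c * μ) ^ (m + 1) ≤ μ * G ^ (m + 1) := by
        calc (c * μ) ^ (m + 1) ≤ (|y j| * G) ^ (m + 1) := by gcongr
          _ = |y j| ^ (m + 1) * G ^ (m + 1) := mul_pow _ _ _
          _ ≤ _ := by gcongr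
      rw [mul_pow, inv_pow, ← div_eq_mul_inv, le_div_iff₀ (by positivity)]
      refine le_of_mul_le_mul_left ?_ h0
      calc μ * (μ ^ m * c ^ (m + 1)) = (c * μ) ^ (m + 1) := by rw [mul_pow, pow_succ μ]; ring
        _ ≤ _ := h6
  have hμp : μ ≤ (G * c⁻¹) ^ p := by
    have hGc0 : 0 ≤ G * c⁻¹ := by positivity
    calc μ = (μ ^ m) ^ ((m : ℝ)⁻¹) := (Real.pow_rpow_inv_natCast (abs_nonneg _) hm0).symm
      _ ≤ ((G * c⁻¹) ^ (m + 1)) ^ ((m : ℝ)⁻¹) := by gcongr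
      _ = _ := by rw [← Real.rpow_natCast, ← Real.rpow_mul hGc0]
  calc |h y| ≤ 2 * |u 0| * μ := hhy
    _ ≤ 2 * |u 0| * (G * c⁻¹) ^ p := by gcongr
    _ = _ := by rw [Real.mul_rpow (norm_nonneg _) (by positivity)]; ring

theorem norm_gradient {E : Type*} [NormedAddCommGroup E] [InnerProductSpace ℝ E] [CompleteSpace E]
    (f : E → ℝ) (x : E) : ‖gradient f x‖ = ‖fderiv ℝ f x‖ := by
  simp [gradient]

/-- The inequality along a family of points tending to `z` and an ultrafilter: in a chart it is
the inequality for a monomial times a unit, and by the chain rule the gradient in the chart is at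
most a constant times the gradient of `f`. -/
theorem gradient_inequality_ultrafilter {E : Type*} [NormedAddCommGroup E] [NormedSpace ℝ E]
    [CompleteSpace E] (L : (Fin n → ℝ) ≃L[ℝ] E) {ι : Type*} (𝓤 : Ultrafilter ι) {f : E → ℝ} {z : E}
    (hf : AnalyticAt ℝ f z) (hne : ¬ ∀ᶠ x in 𝓝 z, f x = f z) {x : ι → E}
    (hx : Tendsto x 𝓤 (𝓝 z)) :
    ∃ p C : ℝ, 1 < p ∧ 0 < C ∧ ∀ᶠ i in 𝓤, |f (x i) - f z| ≤ C * ‖fderiv ℝ f (x i)‖ ^ p := by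
  have hτ : AnalyticAt ℝ (fun w => z + L w) 0 :=
    analyticAt_const.add (L.toContinuousLinearMap.analyticAt 0)
  have hg : AnalyticAt ℝ (fun w => f (z + L w) - f z) 0 :=
    (AnalyticAt.fun_comp (by simpa using hf) hτ).sub analyticAt_const
  have hX : Tendsto (fun i => L.symm (x i - z)) 𝓤 (𝓝 0) := by
    have h1 : Tendsto (fun i => x i - z) 𝓤 (𝓝 0) := by simpa using hx.sub_const z
    have := (L.symm.continuous.tendsto 0).comp h1
    rwa [L.symm.map_zero] at this
  obtain ⟨π, Y, hπ, α, hα⟩ := lu 𝓤 n _ _ hX hg (by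
    intro hc
    apply hne
    have h1 : Tendsto (fun x => L.symm (x - z)) (𝓝 z) (𝓝 0) := by
      have : Continuous fun x => L.symm (x - z) := by fun_prop
      simpa using this.tendsto z
    filter_upwards [h1.eventually hc] with x hx
    simpa [sub_eq_zero] using hx)
  have hα0 : α ≠ 0 := by
    rintro rfl
    obtain ⟨u, -, hu0, he⟩ := hα
    have this : f (z + L (π 0)) - f z = u 0 * mono 0 0 := he.self_of_nhds
    rw [hπ.map_zero, mono_zero] at this
    simp at this
    exact hu0 this.symm
  obtain ⟨p, C, hp, hC, hineq⟩ := hα.gradient_inequality hα0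
  set T : (Fin n → ℝ) → E := fun y => z + L (π y) with hT
  have hTa : AnalyticAt ℝ T 0 := AnalyticAt.fun_comp (g := fun w => z + L w) (f := π)
    (by rw [hπ.map_zero]; exact hτ) hπ.analytic
  have hT0 : T 0 = z := by simp [hT, hπ.map_zero]
  set M := ‖fderiv ℝ T 0‖ + 1 with hM
  have hMpos : 0 < M := by positivity
  have hMb : ∀ᶠ y in 𝓝 0, ‖fderiv ℝ T y‖ < M :=
    hTa.fderiv.continuousAt.norm.eventually_lt_const (by linarith)
  have hfT : ∀ᶠ y in 𝓝 0, AnalyticAt ℝ f (T y) :=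
    hTa.continuousAt.eventually (by rw [hT0]; exact hf.eventually_analyticAt)
  have key : ∀ᶠ y in 𝓝 0, |f (T y) - f z| ≤ C * M ^ p * ‖fderiv ℝ f (T y)‖ ^ p := by
    filter_upwards [hineq, hMb, hfT, hTa.eventually_analyticAt] with y h1 h2 h3 h4
    have hd : fderiv ℝ (fun w => f (T w) - f z) y = (fderiv ℝ f (T y)).comp (fderiv ℝ T y) := by
      rw [fderiv_sub_const]
      exact fderiv_comp y h3.differentiableAt h4.differentiableAt
    have hn : ‖fderiv ℝ (fun w => f (T w) - f z) y‖ ≤ M * ‖fderiv ℝ f (T y)‖ := by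
      rw [hd, mul_comm]
      refine (ContinuousLinearMap.opNorm_comp_le _ _).trans ?_
      gcongr
    calc |f (T y) - f z| ≤ C * ‖fderiv ℝ (fun w => f (T w) - f z) y‖ ^ p := h1
      _ ≤ C * (M * ‖fderiv ℝ f (T y)‖) ^ p := by gcongr
      _ = _ := by rw [Real.mul_rpow hMpos.le (norm_nonneg _)]; ring
  refine ⟨p, C * M ^ p, hp, by positivity, ?_⟩
  filter_upwards [hπ.tendsto.eventually key, hπ.lift] with i h1 h2
  have : T (Y i) = x i := by simp [hT, h2]
  rwa [this] at h1

/-- The inequality with the Fréchet derivative. Since the exponent and the constant may depend on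
the ultrafilter in `gradient_inequality_ultrafilter`, a counterexample sequence is chosen that
eventually violates the inequality for every exponent and every constant. -/
theorem gradient_inequality {E : Type*} [NormedAddCommGroup E] [NormedSpace ℝ E]
    [CompleteSpace E] (L : (Fin n → ℝ) ≃L[ℝ] E) {f : E → ℝ} {z : E} (hf : AnalyticAt ℝ f z)
    (hcrit : fderiv ℝ f z = 0) :
    ∃ p C : ℝ, 1 < p ∧ 0 < C ∧ ∀ᶠ x in 𝓝 z, |f x - f z| ≤ C * ‖fderiv ℝ f x‖ ^ p := by
  by_cases hne : ∀ᶠ x in 𝓝 z, f x = f z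
  · refine ⟨2, 1, by norm_num, one_pos, ?_⟩
    filter_upwards [hne] with x hx
    rw [hx, sub_self, abs_zero]
    positivity
  by_contra! hcon
  have h1 : ∀ᶠ x in 𝓝 z, ‖fderiv ℝ f x‖ < 1 :=
    hf.fderiv.continuousAt.norm.eventually_lt_const (by simp [hcrit])
  -- a sequence violating the inequality with constants `k + 1` and exponents decreasing to `1`
  have hseq : ∀ k : ℕ, ∃ x, ((k : ℝ) + 1) * ‖fderiv ℝ f x‖ ^ (1 + 1 / ((k : ℝ) + 1)) < |f x - f z| ∧
      ‖fderiv ℝ f x‖ < 1 ∧ dist x z < 1 / ((k : ℝ) + 1) := by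
    intro k
    have hk : (0 : ℝ) < 1 / ((k : ℝ) + 1) := by positivity
    have h2 := hcon (1 + 1 / ((k : ℝ) + 1)) (k + 1) (by linarith) (by positivity)
    obtain ⟨x, hx⟩ := (h2.and_eventually (h1.and (Metric.ball_mem_nhds z hk))).exists
    exact ⟨x, hx⟩
  choose x hx1 hx2 hx3 using hseq
  have hxt : Tendsto x atTop (𝓝 z) := by
    rw [tendsto_iff_dist_tendsto_zero]
    exact squeeze_zero (fun _ => dist_nonneg) (fun k => (hx3 k).le)
      tendsto_one_div_add_atTop_nhds_zero_nat
  obtain ⟨p, C, hp, hC, hev⟩ := gradient_inequality_ultrafilter L (hyperfilter ℕ) hf hne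
    (hxt.mono_left Nat.hyperfilter_le_atTop)
  have h2 : ∀ᶠ k : ℕ in atTop, C ≤ (k : ℝ) + 1 := by
    filter_upwards [tendsto_natCast_atTop_atTop.eventually_ge_atTop C] with k hk
    linarith
  have h3 : ∀ᶠ k : ℕ in atTop, 1 / ((k : ℝ) + 1) < p - 1 :=
    tendsto_one_div_add_atTop_nhds_zero_nat.eventually_lt_const (by linarith)
  obtain ⟨k, h4, h5, h6⟩ := (hev.and (Nat.hyperfilter_le_atTop (h2.and h3))).exists
  have h7 : ‖fderiv ℝ f (x k)‖ ^ p ≤ ‖fderiv ℝ f (x k)‖ ^ (1 + 1 / ((k : ℝ) + 1)) :=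
    Real.rpow_le_rpow_of_exponent_ge' (norm_nonneg _) (hx2 k).le (by positivity) (by linarith)
  have h8 : C * ‖fderiv ℝ f (x k)‖ ^ p ≤
      ((k : ℝ) + 1) * ‖fderiv ℝ f (x k)‖ ^ (1 + 1 / ((k : ℝ) + 1)) := by gcongr
  linarith [hx1 k]

end Loj

end

/-- Lojasiewicz gradient inequality: if `f` is real analytic on an open set `U`
and `z ∈ U` is a critical point, then there are a neighborhood `W ⊆ U` of `z` and constants
`p > 1`, `C > 0` with `|f x − f z| ≤ C |∇f x|^p` for all `x ∈ W`. -/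
theorem lojasiewicz_gradient_inequality
    {n : ℕ} {U : Set (EuclideanSpace ℝ (Fin n))} (hU : IsOpen U)
    (f : EuclideanSpace ℝ (Fin n) → ℝ) (hf : AnalyticOnNhd ℝ f U)
    (z : EuclideanSpace ℝ (Fin n)) (hz : z ∈ U) (hcrit : gradient f z = 0) :
    ∃ W : Set (EuclideanSpace ℝ (Fin n)), IsOpen W ∧ z ∈ W ∧ W ⊆ U ∧
      ∃ (p C : ℝ), 1 < p ∧ 0 < C ∧
        ∀ x ∈ W, |f x - f z| ≤ C * ‖gradient f x‖ ^ p := by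
  have hcrit' : fderiv ℝ f z = 0 := by
    rw [← norm_eq_zero, ← Loj.norm_gradient, hcrit, norm_zero]
  obtain ⟨p, C, hp, hC, hev⟩ := Loj.gradient_inequality (EuclideanSpace.equiv (Fin n) ℝ).symm
    (hf z hz) hcrit'
  obtain ⟨W, hW, hWo, hzW⟩ := eventually_nhds_iff.1 (hev.and (hU.mem_nhds hz))
  refine ⟨W, hWo, hzW, fun x hx => (hW x hx).2, p, C, hp, hC, fun x hx => ?_⟩
  rw [Loj.norm_gradient]
  exact (hW x hx).1
end
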